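/- arXiv:2510.17455 — 2 statements merged into one kernel-verified Lean document; each statement's English description precedes it below -/
import Mathlib

section
/- Let d ≥ 1. Let f : ℝ^d × ℝ^d → (0,∞) be a probability density (in the variables (x,ξ)), continuously differentiable in ξ, with ∫∫ |ξ|² f dx dξ < ∞ and ∫∫ (1/f)|∇_ξ f + (ξ − u_f) f|² dx dξ < ∞. Let ρ : ℝ^d → [0,∞) be a probability density and let u : ℝ^d → ℝ^d be Lipschitz with Lipschitz constant L, and assume ∫ ρ_f |u_f − u|² dx < ∞. Then there exists a constant C > 0 depending only on d and L such that d_BL( f dx dξ , M_{ρ(x),u(x)}(ξ) dx dξ )² ≤ C ( ∫∫ (1/f)|∇_ξ f + (ξ − u_f) f|² dx dξ + ∫ ρ_f |u_f − u|² dx + d_BL( ρ_f dx , ρ dx )² ). -/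
open MeasureTheory Real
open scoped RealInnerProductSpace

/-- The local Maxwellian `M_{ρ,u}(ξ) = ρ (2π)^{-d/2} exp(-|ξ-u|²/2)`. -/
noncomputable def maxwellian (d : ℕ) (ρ : ℝ) (u ξ : EuclideanSpace ℝ (Fin d)) : ℝ :=
  ρ * (2 * π) ^ (-(d : ℝ) / 2) * Real.exp (-‖ξ - u‖ ^ 2 / 2)

/-- The bounded Lipschitz distance between two finite Borel measures:
`d_BL(μ,ν) = sup{ |∫ φ dμ − ∫ φ dν| : ‖φ‖_∞ + Lip(φ) ≤ 1 }`. -/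
noncomputable def dBL {X : Type*} [MeasurableSpace X] [PseudoMetricSpace X]
    (μ ν : Measure X) : ℝ :=
  sSup {r : ℝ | ∃ φ : X → ℝ,
    (∃ C L : NNReal, (∀ x, |φ x| ≤ C) ∧ LipschitzWith L φ ∧ (C : ℝ) + L ≤ 1) ∧
    r = |(∫ x, φ x ∂μ) - ∫ x, φ x ∂ν|}

/-- Macroscopic density `ρ_f(x) = ∫ f(x,ξ) dξ` of a kinetic distribution. -/
noncomputable def macroDensity (d : ℕ)
    (f : EuclideanSpace ℝ (Fin d) × EuclideanSpace ℝ (Fin d) → ℝ)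
    (x : EuclideanSpace ℝ (Fin d)) : ℝ :=
  ∫ ξ, f (x, ξ)

/-- Macroscopic velocity `u_f(x) = ρ_f(x)⁻¹ ∫ ξ f(x,ξ) dξ`, equal to `0` where `ρ_f(x) = 0`. -/
noncomputable def macroVelocity (d : ℕ)
    (f : EuclideanSpace ℝ (Fin d) × EuclideanSpace ℝ (Fin d) → ℝ)
    (x : EuclideanSpace ℝ (Fin d)) : EuclideanSpace ℝ (Fin d) :=
  (macroDensity d f x)⁻¹ • ∫ ξ, f (x, ξ) • ξ

/-!
Let `γ` be the standard Gaussian. Along the arc `cos θ x + sin θ y`, `0 ≤ θ ≤ π / 2`, position and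
velocity are independent with law `γ` whenever `x` and `y` are. Integrating the derivative of `ψ`
along this arc bounds the oscillation of `ψ` under `γ` by `K ∫ |∇ψ| dγ`. In each velocity
fibre, `ψ = f / M_{1,u}` turns this into an `L¹` bound of the distance from `f` to `M_{ρ_f,u}` by
the flux `∇_ξ f + (ξ - u) f`. Replacing `u` by `u_f` in the flux costs `(u_f - u) f`, and
Cauchy–Schwarz bounds the two terms by the dissipation and the relative velocity. To pass from
`M_{ρ_f,u}` to `M_{ρ,u}`, integrate out the velocity: since `u` is Lipschitz, the Gaussian average
`x ↦ ∫ φ(x, z + u(x)) dγ(z)` is again a bounded Lipschitz function of `x`.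
-/

open ProbabilityTheory
open scoped ENNReal NNReal Gradient

section BoundedLipschitz

variable {X : Type*} [MeasurableSpace X] [PseudoMetricSpace X]

lemma dBL_nonneg (μ ν : Measure X) : 0 ≤ dBL μ ν := by
  refine Real.sSup_nonneg ?_
  rintro _ ⟨φ, -, rfl⟩
  exact abs_nonneg _

lemma dBL_le {μ ν : Measure X} {c : ℝ} (hc : 0 ≤ c)
    (h : ∀ (φ : X → ℝ) (C K : ℝ≥0), (∀ x, |φ x| ≤ C) → LipschitzWith K φ → (C : ℝ) + K ≤ 1 →
      |(∫ x, φ x ∂μ) - ∫ x, φ x ∂ν| ≤ c) :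
    dBL μ ν ≤ c := by
  refine Real.sSup_le ?_ hc
  rintro _ ⟨φ, ⟨C, K, hC, hK, hCK⟩, rfl⟩
  exact h φ C K hC hK hCK

lemma ofReal_dBL_le {μ ν : Measure X} {c : ℝ≥0∞}
    (h : ∀ (φ : X → ℝ) (C K : ℝ≥0), (∀ x, |φ x| ≤ C) → LipschitzWith K φ → (C : ℝ) + K ≤ 1 →
      ‖(∫ x, φ x ∂μ) - ∫ x, φ x ∂ν‖ₑ ≤ c) :
    ENNReal.ofReal (dBL μ ν) ≤ c := by
  rcases eq_or_ne c ∞ with rfl | hc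
  · exact le_top
  · refine ENNReal.ofReal_le_of_le_toReal (dBL_le ENNReal.toReal_nonneg fun φ C K hC hK hCK => ?_)
    simpa using ENNReal.toReal_mono hc (h φ C K hC hK hCK)

variable (μ ν : Measure X) [IsFiniteMeasure μ] [IsFiniteMeasure ν]

lemma abs_integral_sub_le_dBL {φ : X → ℝ} {C K : ℝ≥0} (hC : ∀ x, |φ x| ≤ C)
    (hK : LipschitzWith K φ) (hCK : (C : ℝ) + K ≤ 1) :
    |(∫ x, φ x ∂μ) - ∫ x, φ x ∂ν| ≤ dBL μ ν := by
  refine le_csSup ⟨μ.real Set.univ + ν.real Set.univ, ?_⟩ ⟨φ, ⟨C, K, hC, hK, hCK⟩, rfl⟩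
  rintro _ ⟨ψ, ⟨C', K', hC', -, hCK'⟩, rfl⟩
  have hψ x : ‖ψ x‖ ≤ 1 := (hC' x).trans (by linarith [K'.coe_nonneg])
  have bound (κ : Measure X) [IsFiniteMeasure κ] : |∫ x, ψ x ∂κ| ≤ κ.real Set.univ := by
    simpa using norm_integral_le_of_norm_le_const (μ := κ) (ae_of_all _ hψ)
  exact (abs_sub _ _).trans (add_le_add (bound μ) (bound ν))

lemma abs_integral_sub_le_mul_dBL {φ : X → ℝ} {C K : ℝ≥0} (hC : ∀ x, |φ x| ≤ C)
    (hK : LipschitzWith K φ) :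
    |(∫ x, φ x ∂μ) - ∫ x, φ x ∂ν| ≤ (C + K) * dBL μ ν := by
  rcases eq_zero_or_pos (C + K) with h0 | hpos
  · have hφ x : φ x = 0 := by simpa [(add_eq_zero.mp h0).1] using hC x
    simpa [hφ] using mul_nonneg (by positivity) (dBL_nonneg μ ν)
  have hpos' : 0 < (C + K : ℝ) := by exact_mod_cast hpos
  have hscaled := abs_integral_sub_le_dBL μ ν (φ := fun x => (C + K : ℝ)⁻¹ * φ x)
    (C := (C + K)⁻¹ * C) (K := (C + K)⁻¹ * K)
    (fun x => by
      rw [abs_mul, abs_of_pos (inv_pos.mpr hpos')]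
      push_cast
      gcongr
      exact hC x)
    (LipschitzWith.of_dist_le_mul fun x y => by
      rw [Real.dist_eq, ← mul_sub, abs_mul, abs_of_pos (inv_pos.mpr hpos')]
      push_cast
      rw [mul_assoc]
      gcongr
      exact hK.dist_le_mul x y)
    (by push_cast; rw [← mul_add, inv_mul_cancel₀ hpos'.ne'])
  rwa [integral_const_mul, integral_const_mul, ← mul_sub, abs_mul,
    abs_of_pos (inv_pos.mpr hpos'), inv_mul_le_iff₀ hpos'] at hscaled

lemma dBL_triangle (κ : Measure X) [IsFiniteMeasure κ] :
    dBL μ κ ≤ dBL μ ν + dBL ν κ :=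
  dBL_le (add_nonneg (dBL_nonneg _ _) (dBL_nonneg _ _)) fun _ _ _ hC hK hCK =>
    (abs_sub_le _ _ _).trans
      (add_le_add (abs_integral_sub_le_dBL μ ν hC hK hCK) (abs_integral_sub_le_dBL ν κ hC hK hCK))

end BoundedLipschitz

section Integration

variable {α : Type*} [MeasurableSpace α] {μ : Measure α}

lemma integral_withDensity_ofReal {f : α → ℝ} (hf : AEMeasurable f μ)
    (hf0 : ∀ x, 0 ≤ f x) (φ : α → ℝ) :
    ∫ x, φ x ∂(μ.withDensity fun x => ENNReal.ofReal (f x)) = ∫ x, f x * φ x ∂μ := by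
  rw [integral_withDensity_eq_integral_toReal_smul₀ hf.ennreal_ofReal
    (ae_of_all _ fun _ => ENNReal.ofReal_lt_top)]
  simp only [ENNReal.toReal_ofReal (hf0 _), smul_eq_mul]

lemma memLp_two_sqrt {w : α → ℝ} (hw : Integrable w μ) (hw0 : ∀ x, 0 ≤ w x) :
    MemLp (fun x => √(w x)) 2 μ := by
  rw [memLp_two_iff_integrable_sq (continuous_sqrt.comp_aestronglyMeasurable hw.1)]
  simpa only [sq_sqrt (hw0 _)] using hw

lemma integrable_sqrt_mul {w q : α → ℝ} (hw : Integrable w μ) (hq : Integrable q μ)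
    (hw0 : ∀ x, 0 ≤ w x) (hq0 : ∀ x, 0 ≤ q x) : Integrable (fun x => √(w x * q x)) μ := by
  simp only [sqrt_mul (hw0 _)]
  exact (memLp_two_sqrt hw hw0).integrable_mul (memLp_two_sqrt hq hq0)

lemma integral_sqrt_mul_le {w q : α → ℝ} (hw : Integrable w μ) (hq : Integrable q μ)
    (hw0 : ∀ x, 0 ≤ w x) (hq0 : ∀ x, 0 ≤ q x) :
    ∫ x, √(w x * q x) ∂μ ≤ √(∫ x, w x ∂μ) * √(∫ x, q x ∂μ) := by
  have holder := integral_mul_le_Lp_mul_Lq_of_nonneg (μ := μ) Real.HolderConjugate.two_two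
    (ae_of_all _ fun x => sqrt_nonneg (w x)) (ae_of_all _ fun x => sqrt_nonneg (q x))
    (by simpa using memLp_two_sqrt hw hw0) (by simpa using memLp_two_sqrt hq hq0)
  simpa only [sqrt_mul (hw0 _), rpow_two, sq_sqrt (hw0 _), sq_sqrt (hq0 _),
    sqrt_eq_rpow (∫ _, _ ∂μ)] using holder

lemma enorm_eq_ofReal_sqrt_of_sq_norm_eq {F : Type*} [SeminormedAddGroup F] {y : F} {s : ℝ}
    (hy : ‖y‖ ^ 2 = s) : ‖y‖ₑ = ENNReal.ofReal √s := by
  rw [← hy, sqrt_sq (norm_nonneg _), ofReal_norm]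

lemma aemeasurable_enorm_of_sq_norm_eq {F : Type*} [SeminormedAddGroup F] {G : α → F}
    {s : α → ℝ} (hs : AEMeasurable s μ) (hG : ∀ x, ‖G x‖ ^ 2 = s x) :
    AEMeasurable (fun x => ‖G x‖ₑ) μ := by
  simpa only [enorm_eq_ofReal_sqrt_of_sq_norm_eq (hG _)] using hs.sqrt.ennreal_ofReal

lemma lintegral_enorm_le_of_sq_norm_eq_mul {F : Type*} [SeminormedAddGroup F] {G : α → F}
    {w q : α → ℝ} (hw : Integrable w μ) (hq : Integrable q μ) (hw0 : ∀ x, 0 ≤ w x)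
    (hq0 : ∀ x, 0 ≤ q x) (hG : ∀ x, ‖G x‖ ^ 2 = w x * q x) :
    ∫⁻ x, ‖G x‖ₑ ∂μ ≤ ENNReal.ofReal (√(∫ x, w x ∂μ) * √(∫ x, q x ∂μ)) := by
  simp only [enorm_eq_ofReal_sqrt_of_sq_norm_eq (hG _)]
  rw [← ofReal_integral_eq_lintegral_ofReal (integrable_sqrt_mul hw hq hw0 hq0)
    (ae_of_all _ fun _ => sqrt_nonneg _)]
  exact ENNReal.ofReal_le_ofReal (integral_sqrt_mul_le hw hq hw0 hq0)

lemma enorm_integral_mul_sub_le [IsProbabilityMeasure μ] {g ψ : α → ℝ}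
    (hg : AEStronglyMeasurable g μ) (hg1 : ∀ x, |g x| ≤ 1) (hψ : Integrable ψ μ) :
    ‖(∫ x, g x * ψ x ∂μ) - (∫ x, ψ x ∂μ) * ∫ x, g x ∂μ‖ₑ
      ≤ ∫⁻ p, ‖ψ p.2 - ψ p.1‖ₑ ∂(μ.prod μ) := by
  have hgi : Integrable g μ := .of_bound hg 1 (ae_of_all _ hg1)
  have hgψ : Integrable (fun x => g x * ψ x) μ := hψ.bdd_mul hg (ae_of_all _ hg1)
  have cov : (∫ x, g x * ψ x ∂μ) - (∫ x, ψ x ∂μ) * ∫ x, g x ∂μ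
      = ∫ p, g p.1 * (ψ p.1 - ψ p.2) ∂(μ.prod μ) := by
    simp only [mul_sub]
    rw [integral_sub (hgψ.comp_fst μ) (hgi.mul_prod hψ), integral_prod_mul,
      integral_fun_fst (μ := μ) (ν := μ) fun x => g x * ψ x]
    simp [mul_comm]
  rw [cov]
  refine (enorm_integral_le_lintegral_enorm _).trans (lintegral_mono fun p => ?_)
  rw [enorm_mul, enorm_sub_rev]
  refine mul_le_of_le_one_left zero_le ?_
  rw [← ofReal_norm, ENNReal.ofReal_le_one]
  exact hg1 p.1

end Integration

section Shear

variable {X G : Type*} [MeasurableSpace X] [MeasurableSpace G] [AddGroup G] [MeasurableAdd₂ G]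

lemma measurable_shear {u : X → G} (hu : Measurable u) :
    Measurable fun p : X × G => (p.1, p.2 + u p.1) :=
  measurable_fst.prodMk (measurable_snd.add (hu.comp measurable_fst))

lemma measurePreserving_shear (ν : Measure X) [SFinite ν] (μ : Measure G) [SFinite μ]
    [μ.IsAddRightInvariant] {u : X → G} (hu : Measurable u) :
    MeasurePreserving (fun p : X × G => (p.1, p.2 + u p.1)) (ν.prod μ) (ν.prod μ) :=
  (MeasurePreserving.id ν).skew_product (g := fun x z => z + u x)
    (measurable_snd.add (hu.comp measurable_fst)) (ae_of_all _ fun _ => map_add_right_eq_self μ _)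

end Shear

section GaussianPoincare

variable {E F : Type*} [NormedAddCommGroup E] [NormedAddCommGroup F]

/-- The constant with which the `L¹` norm of the derivative controls the mean oscillation of a
function under the centred Gaussian measure `μ`. -/
noncomputable def gaussianPoincareConst [MeasurableSpace E] (μ : Measure E) : ℝ :=
  π / 2 * ∫ x, ‖x‖ ∂μ

lemma gaussianPoincareConst_nonneg [MeasurableSpace E] (μ : Measure E) :
    0 ≤ gaussianPoincareConst μ := by
  unfold gaussianPoincareConst; positivity

variable [NormedSpace ℝ E] [NormedSpace ℝ F]

lemma hasDerivAt_rotation_fst (p : E × E) (θ : ℝ) :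
    HasDerivAt (fun θ => (ContinuousLinearMap.rotation θ p).1)
      (ContinuousLinearMap.rotation θ p).2 θ :=
  ((hasDerivAt_cos θ).smul_const p.1).add ((hasDerivAt_sin θ).smul_const p.2)

lemma continuous_rotation :
    Continuous fun q : ℝ × (E × E) => ContinuousLinearMap.rotation q.1 q.2 := by
  simp only [ContinuousLinearMap.rotation_apply]
  fun_prop

lemma continuous_fderiv_apply_prod {ψ : E → F} (hψ : ContDiff ℝ 1 ψ) :
    Continuous fun p : E × E => fderiv ℝ ψ p.1 p.2 :=
  ((hψ.continuous_fderiv one_ne_zero).comp continuous_fst).clm_apply continuous_snd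

lemma enorm_sub_le_lintegral_fderiv_rotation [CompleteSpace F] {ψ : E → F} (hψ : ContDiff ℝ 1 ψ)
    (p : E × E) :
    ‖ψ p.2 - ψ p.1‖ₑ ≤ ∫⁻ θ in Set.Ioc 0 (π / 2),
      ‖fderiv ℝ ψ (ContinuousLinearMap.rotation θ p).1 (ContinuousLinearMap.rotation θ p).2‖ₑ := by
  have hderiv (θ : ℝ) := (hψ.differentiable one_ne_zero _).hasFDerivAt.comp_hasDerivAt θ
    (hasDerivAt_rotation_fst p θ)
  have hcont := (continuous_fderiv_apply_prod hψ).comp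
    (continuous_rotation.comp (Continuous.prodMk_left p))
  have ftc := intervalIntegral.integral_eq_sub_of_hasDerivAt (a := 0) (b := π / 2)
    (fun θ _ => hderiv θ) (hcont.intervalIntegrable _ _)
  have hends : ψ p.2 - ψ p.1 = ∫ θ in 0..π / 2,
      fderiv ℝ ψ (ContinuousLinearMap.rotation θ p).1 (ContinuousLinearMap.rotation θ p).2 := by
    rw [ftc]
    simp [ContinuousLinearMap.rotation_apply]
  rw [hends, intervalIntegral.integral_of_le (by positivity)]
  exact enorm_integral_le_lintegral_enorm _

variable [SecondCountableTopology E] [CompleteSpace E] [MeasurableSpace E] [BorelSpace E]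
  [CompleteSpace F] {μ : Measure E} [IsGaussian μ]

/-- Pisier's inequality with exponent one: join `x` to `y` along the arc `cos θ x + sin θ y`, whose
position and velocity are, like `(x, y)`, a pair of independent copies of `μ`. -/
lemma lintegral_enorm_sub_le_lintegral_fderiv (hμ : ∫ x, x ∂μ = 0) {ψ : E → F}
    (hψ : ContDiff ℝ 1 ψ) :
    ∫⁻ p, ‖ψ p.2 - ψ p.1‖ₑ ∂(μ.prod μ)
      ≤ ENNReal.ofReal (π / 2) * ∫⁻ p, ‖fderiv ℝ ψ p.1 p.2‖ₑ ∂(μ.prod μ) := by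
  have hcont := (continuous_fderiv_apply_prod hψ).enorm
  have hinv (θ : ℝ) : ∫⁻ p, ‖fderiv ℝ ψ (ContinuousLinearMap.rotation θ p).1
        (ContinuousLinearMap.rotation θ p).2‖ₑ ∂(μ.prod μ)
      = ∫⁻ p, ‖fderiv ℝ ψ p.1 p.2‖ₑ ∂(μ.prod μ) := by
    conv_rhs => rw [← IsGaussian.map_rotation_eq_self (μ := μ) hμ θ]
    rw [lintegral_map hcont.measurable (by fun_prop)]
  calc
    _ ≤ ∫⁻ p, (∫⁻ θ in Set.Ioc 0 (π / 2), ‖fderiv ℝ ψ (ContinuousLinearMap.rotation θ p).1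
        (ContinuousLinearMap.rotation θ p).2‖ₑ) ∂(μ.prod μ) :=
      lintegral_mono fun p => enorm_sub_le_lintegral_fderiv_rotation hψ p
    _ = ∫⁻ θ in Set.Ioc 0 (π / 2), ∫⁻ p, ‖fderiv ℝ ψ (ContinuousLinearMap.rotation θ p).1
        (ContinuousLinearMap.rotation θ p).2‖ₑ ∂(μ.prod μ) :=
      lintegral_lintegral_swap
        (hcont.comp (continuous_rotation.comp continuous_swap)).measurable.aemeasurable
    _ = _ := by simp [hinv, mul_comm]

lemma lintegral_enorm_sub_le_lintegral_enorm_fderiv (hμ : ∫ x, x ∂μ = 0) {ψ : E → F}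
    (hψ : ContDiff ℝ 1 ψ) :
    ∫⁻ p, ‖ψ p.2 - ψ p.1‖ₑ ∂(μ.prod μ)
      ≤ ENNReal.ofReal (gaussianPoincareConst μ) * ∫⁻ x, ‖fderiv ℝ ψ x‖ₑ ∂μ := by
  have hfderiv : Measurable fun x => ‖fderiv ℝ ψ x‖ₑ :=
    (hψ.continuous_fderiv one_ne_zero).enorm.measurable
  have hprod : ∫⁻ p, ‖fderiv ℝ ψ p.1 p.2‖ₑ ∂(μ.prod μ)
      ≤ (∫⁻ x, ‖fderiv ℝ ψ x‖ₑ ∂μ) * ∫⁻ y, ‖y‖ₑ ∂μ := by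
    rw [← lintegral_prod_mul hfderiv.aemeasurable measurable_enorm.aemeasurable]
    exact lintegral_mono fun p => (fderiv ℝ ψ p.1).le_opENorm p.2
  have hmoment : ENNReal.ofReal (∫ x, ‖x‖ ∂μ) = ∫⁻ x, ‖x‖ₑ ∂μ :=
    ofReal_integral_norm_eq_lintegral_enorm IsGaussian.integrable_fun_id
  calc
    _ ≤ ENNReal.ofReal (π / 2) * ∫⁻ p, ‖fderiv ℝ ψ p.1 p.2‖ₑ ∂(μ.prod μ) :=
      lintegral_enorm_sub_le_lintegral_fderiv hμ hψ
    _ ≤ ENNReal.ofReal (π / 2) * ((∫⁻ x, ‖fderiv ℝ ψ x‖ₑ ∂μ) * ∫⁻ y, ‖y‖ₑ ∂μ) := by gcongr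
    _ = _ := by
      rw [gaussianPoincareConst, ENNReal.ofReal_mul (by positivity), hmoment, mul_assoc,
        mul_comm (∫⁻ x, ‖x‖ₑ ∂μ)]

end GaussianPoincare

section StdGaussian

variable {E : Type*} [NormedAddCommGroup E] [InnerProductSpace ℝ E]

/-- The density of the standard Gaussian measure with respect to Lebesgue measure, i.e. the
Maxwellian of unit mass, zero velocity and unit temperature. -/
noncomputable def gaussianDensity (z : E) : ℝ :=
  (2 * π) ^ (-(Module.finrank ℝ E : ℝ) / 2) * exp (-‖z‖ ^ 2 / 2)

lemma gaussianDensity_pos (z : E) : 0 < gaussianDensity z := by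
  unfold gaussianDensity; positivity

lemma contDiff_gaussianDensity {n : WithTop ℕ∞} : ContDiff ℝ n (gaussianDensity (E := E)) :=
  contDiff_const.mul (((contDiff_norm_sq ℝ).neg.div_const 2).exp)

lemma hasGradientAt_gaussianDensity [CompleteSpace E] (z : E) :
    HasGradientAt gaussianDensity (-gaussianDensity z • z) z := by
  have h := (((hasStrictFDerivAt_norm_sq z).hasFDerivAt.neg.mul_const 2⁻¹).exp).const_mul
    ((2 * π) ^ (-(Module.finrank ℝ E : ℝ) / 2))
  rw [hasGradientAt_iff_hasFDerivAt]
  convert! h using 1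
  ext v
  simp only [gaussianDensity, div_eq_mul_inv, neg_mul, neg_smul, map_neg, map_smul, neg_apply,
    smul_apply, InnerProductSpace.toDual_apply_apply, smul_eq_mul, Pi.neg_apply, smul_neg,
    coe_innerSL_apply, nsmul_eq_mul, Nat.cast_ofNat]
  ring

lemma gradient_inv_gaussianDensity_mul [CompleteSpace E] {h : E → ℝ} (hh : Differentiable ℝ h)
    (z : E) :
    ∇ (fun z => (gaussianDensity z)⁻¹ * h z) z = (gaussianDensity z)⁻¹ • (∇ h z + h z • z) := by
  have hγ := (gaussianDensity_pos z).ne'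
  have hprod := ((hasDerivAt_inv hγ).comp_hasFDerivAt z
    (hasGradientAt_gaussianDensity z).hasFDerivAt).mul (hh z).hasGradientAt.hasFDerivAt
  refine HasGradientAt.gradient ?_
  rw [hasGradientAt_iff_hasFDerivAt]
  convert! hprod using 1
  ext v
  simp only [smul_add, map_add, map_smul, toDual_gradient, add_apply, smul_apply, smul_eq_mul,
    InnerProductSpace.toDual_apply_apply, Function.comp_apply, neg_smul, map_neg, smul_neg, neg_neg]
  field_simp

variable [MeasurableSpace E] [BorelSpace E]

lemma measurable_gaussianDensity : Measurable (gaussianDensity (E := E)) :=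
  (contDiff_gaussianDensity (n := 0)).continuous.measurable

variable [FiniteDimensional ℝ E]

lemma integral_gaussianDensity : ∫ z : E, gaussianDensity z = 1 := by
  have h := GaussianFourier.integral_rexp_neg_mul_sq_norm (V := E) (b := 1 / 2) (by norm_num)
  simp only [gaussianDensity, integral_const_mul]
  rw [show (fun z : E => exp (-‖z‖ ^ 2 / 2)) = fun z => exp (-(1 / 2) * ‖z‖ ^ 2) by ext; ring_nf,
    h, show π / (1 / 2) = 2 * π by ring, ← rpow_add (by positivity), neg_div, neg_add_cancel,
    rpow_zero]

lemma integrable_gaussianDensity : Integrable (gaussianDensity (E := E)) :=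
  .of_integral_ne_zero (by simp [integral_gaussianDensity])

lemma withDensity_gaussianDensity :
    volume.withDensity (fun z : E => ENNReal.ofReal (gaussianDensity z)) = stdGaussian E := by
  have := isFiniteMeasure_withDensity_ofReal (integrable_gaussianDensity (E := E)).2
  refine Measure.ext_of_charFun (funext fun t => ?_)
  have hfourier := GaussianFourier.integral_cexp_neg_mul_sq_norm_add (V := E) (b := 1 / 2)
    (by norm_num) Complex.I t
  have hconst : (((2 * π) ^ (-(Module.finrank ℝ E : ℝ) / 2) : ℝ) : ℂ)
      * (π / (1 / 2)) ^ (Module.finrank ℝ E / 2 : ℂ) = 1 := by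
    rw [show (π / (1 / 2) : ℂ) = (2 * π : ℝ) by push_cast; ring,
      show (Module.finrank ℝ E / 2 : ℂ) = (Module.finrank ℝ E / 2 : ℝ) by push_cast; rfl,
      ← Complex.ofReal_cpow (by positivity), ← Complex.ofReal_mul, ← rpow_add (by positivity),
      neg_div, neg_add_cancel, rpow_zero, Complex.ofReal_one]
  have hintegrand (z : E) : (ENNReal.ofReal (gaussianDensity z)).toReal
        • Complex.exp (inner ℝ z t * Complex.I)
      = ((2 * π) ^ (-(Module.finrank ℝ E : ℝ) / 2) : ℝ)
        * Complex.exp (-(1 / 2) * ‖z‖ ^ 2 + Complex.I * inner ℝ t z) := by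
    rw [ENNReal.toReal_ofReal (gaussianDensity_pos z).le, gaussianDensity, Complex.real_smul,
      Complex.ofReal_mul, Complex.ofReal_exp, mul_assoc, ← Complex.exp_add, real_inner_comm]
    push_cast
    ring_nf
  rw [charFun_stdGaussian, charFun_apply,
    integral_withDensity_eq_integral_toReal_smul
      measurable_gaussianDensity.ennreal_ofReal (ae_of_all _ fun _ => ENNReal.ofReal_lt_top)]
  simp only [hintegrand]
  rw [integral_const_mul, hfourier, ← mul_assoc, hconst, one_mul, Complex.I_sq]
  ring_nf

lemma integral_stdGaussian (φ : E → ℝ) :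
    ∫ z, φ z ∂stdGaussian E = ∫ z, gaussianDensity z * φ z := by
  rw [← withDensity_gaussianDensity, integral_withDensity_ofReal
    integrable_gaussianDensity.1.aemeasurable fun z => (gaussianDensity_pos z).le]

lemma integrable_stdGaussian_iff {φ : E → ℝ} :
    Integrable φ (stdGaussian E) ↔ Integrable fun z => gaussianDensity z * φ z := by
  rw [← withDensity_gaussianDensity, integrable_withDensity_iff_integrable_smul'
    measurable_gaussianDensity.ennreal_ofReal (ae_of_all _ fun _ => ENNReal.ofReal_lt_top)]
  simp only [ENNReal.toReal_ofReal (gaussianDensity_pos _).le, smul_eq_mul]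

lemma lintegral_stdGaussian (φ : E → ℝ≥0∞) :
    ∫⁻ z, φ z ∂stdGaussian E = ∫⁻ z, ENNReal.ofReal (gaussianDensity z) * φ z := by
  rw [← withDensity_gaussianDensity, lintegral_withDensity_eq_lintegral_mul_non_measurable _
    measurable_gaussianDensity.ennreal_ofReal (ae_of_all _ fun _ => ENNReal.ofReal_lt_top)]
  rfl

lemma enorm_integral_mul_sub_le_gradient {h g : E → ℝ} (hh : ContDiff ℝ 1 h)
    (hhi : Integrable h) (hg : Measurable g) (hg1 : ∀ z, |g z| ≤ 1) :
    ‖(∫ z, h z * g z) - (∫ z, h z) * ∫ z, g z ∂stdGaussian E‖ₑ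
      ≤ ENNReal.ofReal (gaussianPoincareConst (stdGaussian E)) * ∫⁻ z, ‖∇ h z + h z • z‖ₑ := by
  have hγ (z : E) : gaussianDensity z ≠ 0 := (gaussianDensity_pos z).ne'
  set ψ : E → ℝ := fun z => (gaussianDensity z)⁻¹ * h z
  have hψ : ContDiff ℝ 1 ψ := (contDiff_gaussianDensity.inv hγ).mul hh
  have hγψ (z : E) : gaussianDensity z * ψ z = h z := mul_inv_cancel_left₀ (hγ z) _
  have hψi : Integrable ψ (stdGaussian E) := by simpa only [integrable_stdGaussian_iff, hγψ]
  have hψ_int : ∫ z, ψ z ∂stdGaussian E = ∫ z, h z := by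
    simp only [integral_stdGaussian, hγψ]
  have hgψ_int : ∫ z, g z * ψ z ∂stdGaussian E = ∫ z, h z * g z := by
    rw [integral_stdGaussian]
    congr with z
    rw [mul_left_comm, hγψ, mul_comm]
  have hfderiv (z : E) : ENNReal.ofReal (gaussianDensity z) * ‖fderiv ℝ ψ z‖ₑ
      = ‖∇ h z + h z • z‖ₑ := by
    rw [← toDual_gradient, LinearIsometryEquiv.enorm_map,
      gradient_inv_gaussianDensity_mul (hh.differentiable one_ne_zero), enorm_smul, ← mul_assoc,
      ← Real.enorm_eq_ofReal (gaussianDensity_pos z).le, ← enorm_mul, mul_inv_cancel₀ (hγ z),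
      enorm_one, one_mul]
  calc
    _ = ‖(∫ z, g z * ψ z ∂stdGaussian E)
        - (∫ z, ψ z ∂stdGaussian E) * ∫ z, g z ∂stdGaussian E‖ₑ := by rw [hgψ_int, hψ_int]
    _ ≤ ∫⁻ p, ‖ψ p.2 - ψ p.1‖ₑ ∂((stdGaussian E).prod (stdGaussian E)) :=
      enorm_integral_mul_sub_le hg.aestronglyMeasurable hg1 hψi
    _ ≤ ENNReal.ofReal (gaussianPoincareConst (stdGaussian E))
        * ∫⁻ z, ‖fderiv ℝ ψ z‖ₑ ∂stdGaussian E :=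
      lintegral_enorm_sub_le_lintegral_enorm_fderiv integral_id_stdGaussian hψ
    _ = _ := by simp only [lintegral_stdGaussian, hfderiv]

lemma enorm_integral_mul_sub_le_gradient_of_center (v : E) {h g : E → ℝ} (hh : ContDiff ℝ 1 h)
    (hhi : Integrable h) (hg : Measurable g) (hg1 : ∀ z, |g z| ≤ 1) :
    ‖(∫ z, h z * g z) - (∫ z, h z) * ∫ z, g (z + v) ∂stdGaussian E‖ₑ
      ≤ ENNReal.ofReal (gaussianPoincareConst (stdGaussian E))
        * ∫⁻ z, ‖∇ h z + h z • (z - v)‖ₑ := by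
  have hgrad (z : E) : ∇ (fun z => h (z + v)) z = ∇ h (z + v) := by
    simp only [gradient, fderiv_comp_add_right]
  have key := enorm_integral_mul_sub_le_gradient (h := fun z => h (z + v))
    (g := fun z => g (z + v)) (hh.comp (contDiff_id.add contDiff_const)) (hhi.comp_add_right v)
    (hg.comp (measurable_add_const v)) fun z => hg1 (z + v)
  have hflux := lintegral_add_right_eq_self (μ := volume)
    (fun z => ‖∇ h z + h z • (z - v)‖ₑ) v
  rw [integral_add_right_eq_self (fun z => h z * g z) v, integral_add_right_eq_self h v] at key
  simpa only [hgrad, ← hflux, add_sub_cancel_right] using key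

end StdGaussian

section LocalMaxwellian

variable {X E : Type*} [NormedAddCommGroup E] [InnerProductSpace ℝ E] [FiniteDimensional ℝ E]
  [MeasurableSpace E] [BorelSpace E]

/-- The average of `φ` at the position `x` over the unit Gaussian velocities centred at `u x`. -/
noncomputable def gaussianAverage (u : X → E) (φ : X × E → ℝ) (x : X) : ℝ :=
  ∫ z, φ (x, z + u x) ∂stdGaussian E

lemma abs_gaussianAverage_le {u : X → E} {φ : X × E → ℝ} {C : ℝ} (hC : ∀ p, |φ p| ≤ C) (x : X) :
    |gaussianAverage u φ x| ≤ C := by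
  simpa [gaussianAverage] using norm_integral_le_of_norm_le_const (μ := stdGaussian E)
    (f := fun z => φ (x, z + u x)) (ae_of_all _ fun z => hC _)

lemma lipschitzWith_gaussianAverage [PseudoMetricSpace X] {u : X → E} {φ : X × E → ℝ} {K L : ℝ≥0}
    (hu : LipschitzWith L u) (hφ : LipschitzWith K φ) {C : ℝ} (hC : ∀ p, |φ p| ≤ C) :
    LipschitzWith (K * max 1 L) (gaussianAverage u φ) := by
  have hslice (z : E) : LipschitzWith (K * max 1 L) fun x => φ (x, z + u x) :=
    hφ.comp (LipschitzWith.id.prodMk (by simpa using (LipschitzWith.const z).add hu))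
  have hint (x : X) : Integrable (fun z => φ (x, z + u x)) (stdGaussian E) :=
    .of_bound (hφ.continuous.comp (by fun_prop)).aestronglyMeasurable C (ae_of_all _ fun z => hC _)
  refine LipschitzWith.of_dist_le_mul fun x y => ?_
  rw [dist_eq_norm, gaussianAverage, gaussianAverage, ← integral_sub (hint x) (hint y)]
  simpa using norm_integral_le_of_norm_le_const (μ := stdGaussian E)
    (f := fun z => φ (x, z + u x) - φ (y, z + u y))
    (ae_of_all _ fun z => (hslice z).dist_le_mul x y)

variable [MeasurableSpace X]

/-- The measure on phase space with position marginal `κ` and with velocities distributed, given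
the position `x`, as the unit Gaussian centred at `u x`. For `κ` of density `ρ`, this is the local
Maxwellian `M_{ρ,u}`, see `localMaxwellian_withDensity`. -/
noncomputable def localMaxwellian (κ : Measure X) (u : X → E) : Measure (X × E) :=
  (κ.prod (stdGaussian E)).map fun p => (p.1, p.2 + u p.1)

instance (κ : Measure X) [IsFiniteMeasure κ] (u : X → E) :
    IsFiniteMeasure (localMaxwellian κ u) := by
  unfold localMaxwellian; infer_instance

lemma measurable_gaussianAverage {u : X → E} (hu : Measurable u) {φ : X × E → ℝ}
    (hφ : Measurable φ) : Measurable (gaussianAverage u φ) :=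
  (hφ.comp (measurable_shear hu)).stronglyMeasurable.integral_prod_right'.measurable

lemma integral_localMaxwellian (κ : Measure X) [IsFiniteMeasure κ] {u : X → E}
    (hu : Measurable u) {φ : X × E → ℝ} (hφ : Measurable φ) {C : ℝ} (hC : ∀ p, |φ p| ≤ C) :
    ∫ p, φ p ∂localMaxwellian κ u = ∫ x, gaussianAverage u φ x ∂κ := by
  have hshear := measurable_shear hu
  rw [localMaxwellian, integral_map hshear.aemeasurable hφ.aestronglyMeasurable, integral_prod]
  · rfl
  · exact .of_bound (hφ.comp hshear).aestronglyMeasurable C (ae_of_all _ fun p => hC _)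

lemma localMaxwellian_withDensity (ν : Measure X) [SFinite ν] {ρ : X → ℝ} (hρ : Measurable ρ)
    (hρ0 : ∀ x, 0 ≤ ρ x) {u : X → E} (hu : Measurable u) :
    localMaxwellian (ν.withDensity fun x => ENNReal.ofReal (ρ x)) u
      = (ν.prod volume).withDensity fun p =>
          ENNReal.ofReal (ρ p.1 * gaussianDensity (p.2 - u p.1)) := by
  have hγ := measurable_gaussianDensity (E := E)
  have hM : Measurable fun p : X × E => ENNReal.ofReal (ρ p.1 * gaussianDensity (p.2 - u p.1)) := by
    fun_prop
  refine Measure.ext_of_lintegral _ fun φ hφ => ?_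
  have hφshear : Measurable fun p : X × E => φ (p.1, p.2 + u p.1) := hφ.comp (measurable_shear hu)
  rw [localMaxwellian, lintegral_map hφ (measurable_shear hu), ← withDensity_gaussianDensity,
    prod_withDensity hρ.ennreal_ofReal hγ.ennreal_ofReal,
    lintegral_withDensity_eq_lintegral_mul _ (by fun_prop) hφshear,
    lintegral_withDensity_eq_lintegral_mul _ hM hφ,
    ← (measurePreserving_shear ν volume hu).lintegral_comp (hM.mul hφ)]
  simp [ENNReal.ofReal_mul (hρ0 _)]

lemma dBL_localMaxwellian_localMaxwellian_le [PseudoMetricSpace X] [OpensMeasurableSpace X]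
    {u : X → E} {L : ℝ≥0} (hu : LipschitzWith L u) (κ κ' : Measure X)
    [IsFiniteMeasure κ] [IsFiniteMeasure κ'] :
    dBL (localMaxwellian κ u) (localMaxwellian κ' u) ≤ max 1 L * dBL κ κ' := by
  refine dBL_le (mul_nonneg (by positivity) (dBL_nonneg _ _)) fun φ C K hC hK hCK => ?_
  rw [integral_localMaxwellian κ hu.continuous.measurable hK.continuous.measurable hC,
    integral_localMaxwellian κ' hu.continuous.measurable hK.continuous.measurable hC]
  refine (abs_integral_sub_le_mul_dBL κ κ' (abs_gaussianAverage_le hC)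
    (lipschitzWith_gaussianAverage hu hK hC)).trans
    (mul_le_mul_of_nonneg_right ?_ (dBL_nonneg _ _))
  have hmax : (1 : ℝ) ≤ max 1 L := le_max_left _ _
  push_cast
  calc
    (C : ℝ) + K * max 1 L ≤ C * max 1 L + K * max 1 L := by
      gcongr
      exact le_mul_of_one_le_right C.2 hmax
    _ ≤ max 1 L := by
      rw [← add_mul]
      exact mul_le_of_le_one_left (by positivity) hCK

end LocalMaxwellian

section KineticDensity

variable {X E : Type*} [NormedAddCommGroup E] [InnerProductSpace ℝ E]

/-- The Fokker–Planck flux `∇_ξ f + (ξ - v) f` of the kinetic density `f` relative to the velocity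
field `v`; it vanishes exactly when `f` is a local Maxwellian of velocity `v`. -/
noncomputable def fokkerPlanckFlux [CompleteSpace E] (f : X × E → ℝ) (v : X → E)
    (p : X × E) : E :=
  ∇ (fun ξ => f (p.1, ξ)) p.2 + f p • (p.2 - v p.1)

lemma fokkerPlanckFlux_eq_add [CompleteSpace E] (f : X × E → ℝ) (u v : X → E) (p : X × E) :
    fokkerPlanckFlux f u p = fokkerPlanckFlux f v p + f p • (v p.1 - u p.1) := by
  simp only [fokkerPlanckFlux, smul_sub]
  abel

variable [FiniteDimensional ℝ E] [MeasurableSpace E] [BorelSpace E] [MeasurableSpace X]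
  {ν : Measure X} [SFinite ν] {f : X × E → ℝ} {u v : X → E}

lemma lintegral_enorm_fokkerPlanckFlux_le_add (hf : Integrable f (ν.prod volume))
    (hf0 : ∀ p, 0 ≤ f p)
    (hflux : AEMeasurable (fun p => ‖fokkerPlanckFlux f v p‖ₑ) (ν.prod volume)) :
    ∫⁻ x, (∫⁻ ξ, ‖fokkerPlanckFlux f u (x, ξ)‖ₑ) ∂ν
      ≤ (∫⁻ p, ‖fokkerPlanckFlux f v p‖ₑ ∂(ν.prod volume))
        + ∫⁻ x, ‖(∫ ξ, f (x, ξ)) • (v x - u x)‖ₑ ∂ν := by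
  rw [lintegral_prod _ hflux, ← lintegral_add_left' hflux.lintegral_prod_right']
  refine lintegral_mono_ae ?_
  filter_upwards [hf.prod_right_ae] with x hfx
  have hmass : ∫⁻ ξ, ‖f (x, ξ) • (v x - u x)‖ₑ = ‖(∫ ξ, f (x, ξ)) • (v x - u x)‖ₑ := by
    simp only [enorm_smul]
    rw [lintegral_mul_const' _ _ enorm_ne_top,
      Real.enorm_eq_ofReal (integral_nonneg fun ξ => hf0 _),
      ofReal_integral_eq_lintegral_ofReal hfx (ae_of_all _ fun ξ => hf0 _)]
    simp only [Real.enorm_eq_ofReal (hf0 _)]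
  rw [← hmass, ← lintegral_add_right' _ (hfx.smul_const _).1.enorm]
  refine lintegral_mono fun ξ => ?_
  rw [fokkerPlanckFlux_eq_add f u v]
  exact enorm_add_le _ _

lemma lintegral_enorm_fokkerPlanckFlux_le (hf : Integrable f (ν.prod volume))
    (hf0 : ∀ p, 0 < f p)
    (hI : Integrable (fun p => (f p)⁻¹ * ‖fokkerPlanckFlux f v p‖ ^ 2) (ν.prod volume))
    (hJ : Integrable (fun x => (∫ ξ, f (x, ξ)) * ‖v x - u x‖ ^ 2) ν) :
    ∫⁻ x, (∫⁻ ξ, ‖fokkerPlanckFlux f u (x, ξ)‖ₑ) ∂ν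
      ≤ ENNReal.ofReal (√(∫ p, f p ∂(ν.prod volume))
          * (√(∫ p, (f p)⁻¹ * ‖fokkerPlanckFlux f v p‖ ^ 2 ∂(ν.prod volume))
            + √(∫ x, (∫ ξ, f (x, ξ)) * ‖v x - u x‖ ^ 2 ∂ν))) := by
  have hmass0 x : 0 ≤ ∫ ξ, f (x, ξ) := integral_nonneg fun ξ => (hf0 _).le
  have hfisher p : ‖fokkerPlanckFlux f v p‖ ^ 2
      = f p * ((f p)⁻¹ * ‖fokkerPlanckFlux f v p‖ ^ 2) :=
    (mul_inv_cancel_left₀ (hf0 p).ne' _).symm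
  have hvel x : ‖(∫ ξ, f (x, ξ)) • (v x - u x)‖ ^ 2
      = (∫ ξ, f (x, ξ)) * ((∫ ξ, f (x, ξ)) * ‖v x - u x‖ ^ 2) := by
    rw [norm_smul, norm_of_nonneg (hmass0 x)]
    ring
  rw [mul_add, ENNReal.ofReal_add (by positivity) (by positivity)]
  refine (lintegral_enorm_fokkerPlanckFlux_le_add hf (fun p => (hf0 p).le)
    (aemeasurable_enorm_of_sq_norm_eq (hf.1.aemeasurable.mul hI.1.aemeasurable) hfisher)).trans
    (add_le_add ?_ ?_)
  · exact lintegral_enorm_le_of_sq_norm_eq_mul hf hI (fun p => (hf0 p).le)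
      (fun p => mul_nonneg (inv_nonneg.mpr (hf0 p).le) (sq_nonneg _)) hfisher
  · rw [integral_prod _ hf]
    exact lintegral_enorm_le_of_sq_norm_eq_mul hf.integral_prod_left hJ hmass0
      (fun x => mul_nonneg (hmass0 x) (sq_nonneg _)) hvel

variable [PseudoMetricSpace X] [OpensMeasurableSpace X]

lemma ofReal_dBL_withDensity_localMaxwellian_le (hf : Integrable f (ν.prod volume))
    (hf0 : ∀ p, 0 ≤ f p) (hfC : ∀ x, ContDiff ℝ 1 fun ξ => f (x, ξ)) (hu : Measurable u) :
    ENNReal.ofReal (dBL ((ν.prod volume).withDensity fun p => ENNReal.ofReal (f p))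
        (localMaxwellian (ν.withDensity fun x => ENNReal.ofReal (∫ ξ, f (x, ξ))) u))
      ≤ ENNReal.ofReal (gaussianPoincareConst (stdGaussian E))
        * ∫⁻ x, (∫⁻ ξ, ‖fokkerPlanckFlux f u (x, ξ)‖ₑ) ∂ν := by
  refine ofReal_dBL_le fun φ C K hC hK hCK => ?_
  have hr : Integrable (fun x => ∫ ξ, f (x, ξ)) ν := hf.integral_prod_left
  have hφ : Measurable φ := hK.continuous.measurable
  have hφ1 p : |φ p| ≤ 1 := (hC p).trans (by linarith [K.coe_nonneg])
  have hfφ : Integrable (fun p => f p * φ p) (ν.prod volume) :=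
    hf.mul_bdd hφ.aestronglyMeasurable (ae_of_all _ hφ1)
  have hrA : Integrable (fun x => (∫ ξ, f (x, ξ)) * gaussianAverage u φ x) ν :=
    hr.mul_bdd (measurable_gaussianAverage hu hφ).aestronglyMeasurable
      (ae_of_all _ (abs_gaussianAverage_le hφ1))
  have := isFiniteMeasure_withDensity_ofReal hr.2
  rw [integral_withDensity_ofReal hf.1.aemeasurable hf0, integral_localMaxwellian _ hu hφ hφ1,
    integral_withDensity_ofReal hr.1.aemeasurable fun x => integral_nonneg fun ξ => hf0 _,
    integral_prod _ hfφ, ← integral_sub hfφ.integral_prod_left hrA,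
    ← lintegral_const_mul' _ _ ENNReal.ofReal_ne_top]
  refine (enorm_integral_le_lintegral_enorm _).trans (lintegral_mono_ae ?_)
  filter_upwards [hf.prod_right_ae] with x hfx
  exact enorm_integral_mul_sub_le_gradient_of_center (u x) (hfC x) hfx
    (hφ.comp measurable_prodMk_left) fun ξ => hφ1 _

lemma dBL_withDensity_localMaxwellian_le (hf : Integrable f (ν.prod volume)) (hf0 : ∀ p, 0 < f p)
    (hfC : ∀ x, ContDiff ℝ 1 fun ξ => f (x, ξ))
    (hI : Integrable (fun p => (f p)⁻¹ * ‖fokkerPlanckFlux f v p‖ ^ 2) (ν.prod volume))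
    (hu : Measurable u) (hJ : Integrable (fun x => (∫ ξ, f (x, ξ)) * ‖v x - u x‖ ^ 2) ν) :
    dBL ((ν.prod volume).withDensity fun p => ENNReal.ofReal (f p))
        (localMaxwellian (ν.withDensity fun x => ENNReal.ofReal (∫ ξ, f (x, ξ))) u)
      ≤ gaussianPoincareConst (stdGaussian E) * (√(∫ p, f p ∂(ν.prod volume))
          * (√(∫ p, (f p)⁻¹ * ‖fokkerPlanckFlux f v p‖ ^ 2 ∂(ν.prod volume))
            + √(∫ x, (∫ ξ, f (x, ξ)) * ‖v x - u x‖ ^ 2 ∂ν))) := by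
  have hK := gaussianPoincareConst_nonneg (stdGaussian E)
  rw [← ENNReal.ofReal_le_ofReal_iff (by positivity), ENNReal.ofReal_mul hK]
  exact (ofReal_dBL_withDensity_localMaxwellian_le hf (fun p => (hf0 p).le) hfC hu).trans
    (mul_le_mul_right (lintegral_enorm_fokkerPlanckFlux_le hf hf0 hI hJ) _)

theorem dBL_kinetic_maxwellian_bound_general {L : ℝ≥0} (κ : Measure X) [IsFiniteMeasure κ]
    (hf : Integrable f (ν.prod volume)) (hf0 : ∀ p, 0 < f p)
    (hfC : ∀ x, ContDiff ℝ 1 fun ξ => f (x, ξ))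
    (hI : Integrable (fun p => (f p)⁻¹ * ‖fokkerPlanckFlux f v p‖ ^ 2) (ν.prod volume))
    (hu : LipschitzWith L u) (hJ : Integrable (fun x => (∫ ξ, f (x, ξ)) * ‖v x - u x‖ ^ 2) ν) :
    dBL ((ν.prod volume).withDensity fun p => ENNReal.ofReal (f p)) (localMaxwellian κ u) ^ 2
      ≤ (2 * gaussianPoincareConst (stdGaussian E) ^ 2 * (∫ p, f p ∂(ν.prod volume)) + max 1 L ^ 2)
        * ((∫ p, (f p)⁻¹ * ‖fokkerPlanckFlux f v p‖ ^ 2 ∂(ν.prod volume))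
          + (∫ x, (∫ ξ, f (x, ξ)) * ‖v x - u x‖ ^ 2 ∂ν)
          + dBL (ν.withDensity fun x => ENNReal.ofReal (∫ ξ, f (x, ξ))) κ ^ 2) := by
  have := isFiniteMeasure_withDensity_ofReal hf.2
  have := isFiniteMeasure_withDensity_ofReal hf.integral_prod_left.2
  have hm : 0 ≤ ∫ p, f p ∂(ν.prod volume) := integral_nonneg fun p => (hf0 p).le
  have hI0 : 0 ≤ ∫ p, (f p)⁻¹ * ‖fokkerPlanckFlux f v p‖ ^ 2 ∂(ν.prod volume) :=
    integral_nonneg fun p => mul_nonneg (inv_nonneg.mpr (hf0 p).le) (sq_nonneg _)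
  have hJ0 : 0 ≤ ∫ x, (∫ ξ, f (x, ξ)) * ‖v x - u x‖ ^ 2 ∂ν :=
    integral_nonneg fun x => mul_nonneg (integral_nonneg fun ξ => (hf0 _).le) (sq_nonneg _)
  have hdist := (dBL_triangle _ _ _).trans (add_le_add
    (dBL_withDensity_localMaxwellian_le hf hf0 hfC hI hu.continuous.measurable hJ)
    (dBL_localMaxwellian_localMaxwellian_le hu _ κ))
  have cauchySchwarz (k s a b M δ : ℝ) : (k * (s * (a + b)) + M * δ) ^ 2
      ≤ (2 * k ^ 2 * s ^ 2 + M ^ 2) * (a ^ 2 + b ^ 2 + δ ^ 2) := by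
    linarith [sq_nonneg (k * s * (a - b)), sq_nonneg (k * s * δ - M * a),
      sq_nonneg (k * s * δ - M * b)]
  refine (pow_le_pow_left₀ (dBL_nonneg _ _) hdist 2).trans ((cauchySchwarz _ _ _ _ _ _).trans_eq ?_)
  rw [sq_sqrt hm, sq_sqrt hI0, sq_sqrt hJ0]

end KineticDensity

lemma maxwellian_eq_mul_gaussianDensity (d : ℕ) (ρ : ℝ) (u ξ : EuclideanSpace ℝ (Fin d)) :
    maxwellian d ρ u ξ = ρ * gaussianDensity (ξ - u) := by
  rw [maxwellian, gaussianDensity, finrank_euclideanSpace_fin, mul_assoc]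

/-- Quantitative bound of the bounded Lipschitz distance between a kinetic density and a
local Maxwellian in terms of the Fisher information dissipation, the relative velocity
term and the BL distance of the macroscopic densities. -/
theorem dBL_kinetic_maxwellian_bound
    (d : ℕ) (hd : 1 ≤ d) (L : NNReal) :
    ∃ C > 0,
      ∀ (f : EuclideanSpace ℝ (Fin d) × EuclideanSpace ℝ (Fin d) → ℝ)
        (ρ : EuclideanSpace ℝ (Fin d) → ℝ)
        (u : EuclideanSpace ℝ (Fin d) → EuclideanSpace ℝ (Fin d)),
        (∀ p, 0 < f p) →
        (∀ x, ContDiff ℝ 1 fun ξ => f (x, ξ)) →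
        Integrable f →
        (∫ p, f p) = 1 →
        Integrable (fun p : EuclideanSpace ℝ (Fin d) × EuclideanSpace ℝ (Fin d) =>
          ‖p.2‖ ^ 2 * f p) →
        Integrable (fun p : EuclideanSpace ℝ (Fin d) × EuclideanSpace ℝ (Fin d) =>
          (f p)⁻¹ * ‖gradient (fun ξ => f (p.1, ξ)) p.2
            + f p • (p.2 - macroVelocity d f p.1)‖ ^ 2) →
        Measurable ρ → (∀ x, 0 ≤ ρ x) → Integrable ρ → (∫ x, ρ x) = 1 →
        LipschitzWith L u →
        Integrable (fun x => macroDensity d f x * ‖macroVelocity d f x - u x‖ ^ 2) →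
        dBL (volume.withDensity fun p => ENNReal.ofReal (f p))
            (volume.withDensity fun p : EuclideanSpace ℝ (Fin d) × EuclideanSpace ℝ (Fin d) =>
              ENNReal.ofReal (maxwellian d (ρ p.1) (u p.1) p.2)) ^ 2
          ≤ C * ((∫ p : EuclideanSpace ℝ (Fin d) × EuclideanSpace ℝ (Fin d),
                (f p)⁻¹ * ‖gradient (fun ξ => f (p.1, ξ)) p.2
                  + f p • (p.2 - macroVelocity d f p.1)‖ ^ 2)
              + (∫ x, macroDensity d f x * ‖macroVelocity d f x - u x‖ ^ 2)
              + dBL (volume.withDensity fun x => ENNReal.ofReal (macroDensity d f x))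
                  (volume.withDensity fun x => ENNReal.ofReal (ρ x)) ^ 2) := by
  set K := gaussianPoincareConst (stdGaussian (EuclideanSpace ℝ (Fin d)))
  refine ⟨2 * K ^ 2 + max 1 (L : ℝ) ^ 2, by positivity,
    fun f ρ u hf0 hfC hf hf1 _ hI hρm hρ0 hρ _ hu hJ => ?_⟩
  have := isFiniteMeasure_withDensity_ofReal hρ.2
  have hM := localMaxwellian_withDensity volume hρm hρ0 hu.continuous.measurable
  have bound := dBL_kinetic_maxwellian_bound_general
    (volume.withDensity fun x => ENNReal.ofReal (ρ x)) hf hf0 hfC hI hu hJ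
  simp only [← Measure.volume_eq_prod, hf1, mul_one] at bound hM
  simp only [maxwellian_eq_mul_gaussianDensity, ← hM]
  exact bound
end

section
/- Let d ≥ 1, T > 0 and A, B, τ > 0. Let ψ ∈ C^∞([0,T] × ℝ^d × ℝ^d; ℝ) be such that every partial derivative of ψ of order at least 1 is bounded on [0,T] × ℝ^{2d} by a polynomial in (|x|,|ξ|), and set f := e^{−ψ}; assume sup_{t∈[0,T]} ∫∫ (1+|x|+|ξ|)^N f(t,x,ξ) dx dξ < ∞ for every N ∈ ℕ, and let ρ_f, u_f be the macroscopic density and velocity of f(t,·,·). Let F ∈ C^1([0,T] × ℝ^d × ℝ^d; ℝ^d) with |F| and |∇_ξ·F| bounded by a polynomial in (|x|,|ξ|) uniformly in t, and suppose f solves pointwise the kinetic equation A ∂_t f + B ξ·∇_x f + ∇_ξ·(F f) = (1/τ) ∇_ξ·(∇_ξ f + ξ f) on (0,T) × ℝ^{2d}. Let ρ ∈ C^1((0,T) × ℝ^d; (0,∞)) and u, R ∈ C^1((0,T) × ℝ^d; ℝ^d) with |log ρ|, |∇ log ρ|, |u|, |∇u|, |∂_t u| and |R| bounded by polynomials in |x|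 uniformly in t, satisfying pointwise the macroscopic system A ∂_t ρ + B ∇·(ρ u) = 0 and A ∂_t(ρ u) + B ∇·(ρ u⊗u) + B ∇ρ = ρ R. Then t ↦ ∫∫ f log(f/M_{ρ,u}) dx dξ is differentiable on (0,T), and for every t ∈ (0,T): (d/dt) ∫∫ f log(f/M_{ρ,u}) dx dξ + (1/(Aτ)) ∫∫ (1/f)|∇_ξ f + (ξ − u_f) f|² dx dξ = −(B/A) ∫∫ f ((u−ξ)⊗(u−ξ) − I_d) : ∇u dx dξ − (1/(Aτ)) ∫ ρ_f u_f·(u_f − u) dx − (1/A) ∫∫ (∇_ξ·F) f dx dξ − (1/A) ∫∫ f (u−ξ)·(F − R) dx dξ. -/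
open MeasureTheory Real
open scoped RealInnerProductSpace

/-- Divergence of a vector field on Euclidean space. -/
noncomputable def ediv {d : ℕ}
    (G : EuclideanSpace ℝ (Fin d) → EuclideanSpace ℝ (Fin d))
    (ξ : EuclideanSpace ℝ (Fin d)) : ℝ :=
  ∑ i, fderiv ℝ G ξ (EuclideanSpace.single i 1) i

/-!
With `f = e^{-ψ}` and the drift `a = ξ - ∇_ξ ψ`, the Fokker–Planck flux is `∇_ξ f + ξ f = f a`, so
with `κ = 1/τ` the kinetic equation is the continuity equation of the flow `(A, B ξ, F - κ a)`. By
the divergence theorem, `A d/dt ∫ f g = ∫ f Dg(A, B ξ, F - κ a)`, which we apply to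
`g = log (f / M_{ρ,u})`.

The derivative of `-ψ` contributes `-∫ f ∇_ξ·F` and `κ ∫ f ⟪ξ - a, a⟫`. For `log M_{ρ,u}` the
macroscopic system, rewritten for `log ρ` and `u`, turns the transport derivative into the strain
and force terms, plus `⟪ξ - u, κ a⟫`; together the `κ`-terms are `-κ ∫ f ⟪a, a - u⟫`. Finally
`∇_ξ f` integrates to zero, so `u_f` is also the `f`-mean of `a`, and splitting the second moment
of `a` about its mean gives `∫ f ⟪a, a - u⟫ = ∫ f ‖a - u_f‖² + ∫ ρ_f ⟪u_f, u_f - u⟫`, where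
`f ‖a - u_f‖² = f⁻¹ ‖∇_ξ f + (ξ - u_f) f‖²`.
-/

local notation "𝔼" d:max => EuclideanSpace ℝ (Fin d)

theorem trace_eq_trace_inl_add_trace_inr {R M N : Type*} [CommRing R] [AddCommGroup M] [Module R M]
    [AddCommGroup N] [Module R N] [Module.Free R M] [Module.Finite R M] [Module.Free R N]
    [Module.Finite R N] (L : M × N →ₗ[R] M × N) :
    LinearMap.trace R (M × N) L =
      LinearMap.trace R M (LinearMap.fst R M N ∘ₗ L ∘ₗ LinearMap.inl R M N) +
        LinearMap.trace R N (LinearMap.snd R M N ∘ₗ L ∘ₗ LinearMap.inr R M N) := by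
  have split : L = LinearMap.inl R M N ∘ₗ LinearMap.fst R M N ∘ₗ L +
      LinearMap.inr R M N ∘ₗ LinearMap.snd R M N ∘ₗ L := by
    ext <;> simp
  conv_lhs => rw [split]
  rw [map_add, LinearMap.trace_comp_comm' _ (LinearMap.inl R M N),
    LinearMap.trace_comp_comm' _ (LinearMap.inr R M N), LinearMap.comp_assoc, LinearMap.comp_assoc]

section Slices

theorem continuous_slice {X Y Z : Type*} [TopologicalSpace X] [TopologicalSpace Y]
    [TopologicalSpace Z] {I : Set X} {h : X × Y → Z} (hh : ContinuousOn h (I ×ˢ Set.univ)) {t : X}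
    (ht : t ∈ I) : Continuous fun y => h (t, y) :=
  continuousOn_univ.1 <| hh.comp (by fun_prop) fun _ _ => ⟨ht, trivial⟩

variable {X Y Z : Type*} [NormedAddCommGroup X] [NormedSpace ℝ X] [NormedAddCommGroup Y]
  [NormedSpace ℝ Y] [NormedAddCommGroup Z] [NormedSpace ℝ Z]

theorem contDiff_slice {n : WithTop ℕ∞} {I : Set X} {h : X × Y → Z}
    (hh : ContDiffOn ℝ n h (I ×ˢ Set.univ)) {t : X} (ht : t ∈ I) : ContDiff ℝ n fun y => h (t, y) :=
  contDiffOn_univ.1 <| hh.comp (by fun_prop) fun _ _ => ⟨ht, trivial⟩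

theorem fderiv_slice_left {h : X × Y → Z} {p : X × Y} (hh : DifferentiableAt ℝ h p) :
    fderiv ℝ (fun x => h (x, p.2)) p.1 = fderiv ℝ h p ∘L ContinuousLinearMap.inl ℝ X Y :=
  (HasFDerivAt.comp (f := (·, p.2)) p.1 hh.hasFDerivAt (hasFDerivAt_prodMk_left p.1 p.2)).fderiv

theorem fderiv_slice_right {h : X × Y → Z} {p : X × Y} (hh : DifferentiableAt ℝ h p) :
    fderiv ℝ (fun y => h (p.1, y)) p.2 = fderiv ℝ h p ∘L ContinuousLinearMap.inr ℝ X Y :=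
  (HasFDerivAt.comp (f := (p.1, ·)) p.2 hh.hasFDerivAt (hasFDerivAt_prodMk_right p.1 p.2)).fderiv

theorem differentiableAt_slice_right {h : X × Y → Z} {p : X × Y} (hh : DifferentiableAt ℝ h p) :
    DifferentiableAt ℝ (fun y => h (p.1, y)) p.2 :=
  DifferentiableAt.comp (f := (p.1, ·)) p.2 hh (by fun_prop)

theorem norm_apply_one_zero_le (L : ℝ × Y →L[ℝ] Z) : ‖L (1, 0)‖ ≤ ‖L‖ := by
  simpa [Prod.norm_mk] using L.le_opNorm (1, 0)

theorem hasDerivAt_slice {h : ℝ × Y → Z} {p : ℝ × Y} (hh : DifferentiableAt ℝ h p) :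
    HasDerivAt (fun s => h (s, p.2)) (fderiv ℝ h p (1, 0)) p.1 :=
  HasFDerivAt.comp_hasDerivAt (f := (·, p.2)) p.1 hh.hasFDerivAt
    ((hasDerivAt_id p.1).prodMk (hasDerivAt_const p.1 p.2))

end Slices

section DivergenceTheorem

variable {V : Type*} [NormedAddCommGroup V] [NormedSpace ℝ V] [FiniteDimensional ℝ V]
  [MeasurableSpace V] [BorelSpace V] {μ : Measure V} [μ.IsAddHaarMeasure] {X : V → V}

theorem integral_mul_trace_fderiv_eq_neg_of_hasCompactSupport {χ : V → ℝ} (hχ : ContDiff ℝ 1 χ)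
    (hχs : HasCompactSupport χ) (hX : ContDiff ℝ 1 X) :
    ∫ p, χ p * LinearMap.trace ℝ V (fderiv ℝ X p) ∂μ = -∫ p, fderiv ℝ χ p (X p) ∂μ := by
  let b := Module.finBasis ℝ V
  let c i : V →L[ℝ] ℝ := (b.coord i).toContinuousLinearMap
  have hcX i : ContDiff ℝ 1 fun p => c i (X p) := (c i).contDiff.comp hX
  have hDcX i p : fderiv ℝ (fun q => c i (X q)) p (b i) = c i (fderiv ℝ X p (b i)) := by
    change fderiv ℝ (c i ∘ X) p (b i) = _
    rw [((c i).hasFDerivAt.comp p (hX.differentiable one_ne_zero p).hasFDerivAt).fderiv]; rfl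
  have trace_eq p : LinearMap.trace ℝ V (fderiv ℝ X p) =
      ∑ i, fderiv ℝ (fun q => c i (X q)) p (b i) := by
    simp only [hDcX, LinearMap.trace_eq_matrix_trace ℝ b, Matrix.trace, Matrix.diag,
      LinearMap.toMatrix_apply]
    rfl
  have apply_eq p : fderiv ℝ χ p (X p) = ∑ i, fderiv ℝ χ p (b i) * c i (X p) := by
    conv_lhs => rw [← b.sum_repr (X p), map_sum]
    exact Finset.sum_congr rfl fun i _ => by rw [map_smul, smul_eq_mul, mul_comm]; rfl
  have hχDX i : Integrable (fun p => χ p * fderiv ℝ (fun q => c i (X q)) p (b i)) μ :=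
    (hχ.continuous.mul (((hcX i).continuous_fderiv one_ne_zero).clm_apply
      continuous_const)).integrable_of_hasCompactSupport hχs.mul_right
  have hDχX i : Integrable (fun p => fderiv ℝ χ p (b i) * c i (X p)) μ :=
    (((hχ.continuous_fderiv one_ne_zero).clm_apply continuous_const).mul
      (hcX i).continuous).integrable_of_hasCompactSupport
        (hχs.fderiv_apply (𝕜 := ℝ) (b i)).mul_right
  simp_rw [trace_eq, apply_eq, Finset.mul_sum]
  rw [integral_finsetSum _ fun i _ => hχDX i, integral_finsetSum _ fun i _ => hDχX i,
    ← Finset.sum_neg_distrib]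
  exact Finset.sum_congr rfl fun i _ => integral_mul_fderiv_eq_neg_fderiv_mul_of_integrable
    (hDχX i) (hχDX i)
    ((hχ.continuous.mul (hcX i).continuous).integrable_of_hasCompactSupport hχs.mul_right)
    (fun p _ => hχ.differentiable one_ne_zero p) fun p _ => (hcX i).differentiable one_ne_zero p

theorem integral_trace_fderiv_eq_zero (hX : ContDiff ℝ 1 X) (hXi : Integrable X μ)
    (hdiv : Integrable (fun p => LinearMap.trace ℝ V (fderiv ℝ X p)) μ) :
    ∫ p, LinearMap.trace ℝ V (fderiv ℝ X p) ∂μ = 0 := by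
  let χ : ContDiffBump (0 : V) := ⟨1, 2, one_pos, one_lt_two⟩
  have hχ : ContDiff ℝ 1 χ := χ.contDiff
  obtain ⟨C, hC⟩ := (hχ.continuous_fderiv one_ne_zero).bounded_above_of_compact_support
    (χ.hasCompactSupport.fderiv (𝕜 := ℝ))
  let ε (n : ℕ) : ℝ := 1 / ((n : ℝ) + 1)
  have hε0 n : 0 < ε n := Nat.one_div_pos_of_nat
  have hε : Filter.Tendsto ε Filter.atTop (nhds 0) := tendsto_one_div_add_atTop_nhds_zero_nat
  have hcut n : ContDiff ℝ 1 fun p => χ (ε n • p) := hχ.comp (contDiff_const_smul _)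
  have hDcut n p : fderiv ℝ (fun p => χ (ε n • p)) p (X p) =
      ε n * fderiv ℝ χ (ε n • p) (X p) := by
    rw [fderiv_comp_smul]; rfl
  have by_parts n : ∫ p, χ (ε n • p) * LinearMap.trace ℝ V (fderiv ℝ X p) ∂μ =
      -∫ p, ε n * fderiv ℝ χ (ε n • p) (X p) ∂μ := by
    rw [integral_mul_trace_fderiv_eq_neg_of_hasCompactSupport (hcut n)
      (χ.hasCompactSupport.comp_homeomorph (Homeomorph.smulOfNeZero (ε n) (hε0 n).ne')) hX]
    simp_rw [hDcut]
  refine tendsto_nhds_unique (f := fun n => ∫ p, χ (ε n • p) *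
    LinearMap.trace ℝ V (fderiv ℝ X p) ∂μ) (l := Filter.atTop) ?_ ?_
  · refine tendsto_integral_of_dominated_convergence _
      (fun n => (hcut n).continuous.aestronglyMeasurable.mul hdiv.1) hdiv.norm
      (fun n => .of_forall fun p => ?_) (.of_forall fun p => ?_)
    · rw [norm_mul, Real.norm_of_nonneg χ.nonneg]
      exact mul_le_of_le_one_left (norm_nonneg _) χ.le_one
    · have hp : Filter.Tendsto (fun n => ε n • p) Filter.atTop (nhds 0) := by
        simpa using hε.smul_const p
      exact tendsto_const_nhds.congr' <|
        (hp.eventually χ.eventuallyEq_one).mono fun n hn => by simp [hn]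
  · refine squeeze_zero_norm (a := fun n => ε n * ∫ p, C * ‖X p‖ ∂μ) (fun n => ?_)
      (by simpa using hε.mul_const _)
    rw [by_parts, norm_neg, integral_const_mul, norm_mul, Real.norm_of_nonneg (hε0 n).le]
    gcongr ε n * ?_
    exact norm_integral_le_of_norm_le (hXi.norm.const_mul C) <| .of_forall fun p =>
        (fderiv ℝ χ (ε n • p)).le_of_opNorm_le (hC _) _

end DivergenceTheorem

section Divergence

variable {d : ℕ}

theorem ediv_eq_trace (G : 𝔼 d → 𝔼 d) (ξ : 𝔼 d) :
    ediv G ξ = LinearMap.trace ℝ (𝔼 d) (fderiv ℝ G ξ) := by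
  simp [ediv, LinearMap.trace_eq_sum_inner _ (EuclideanSpace.basisFun (Fin d) ℝ),
    EuclideanSpace.inner_single_left]

theorem ediv_sub {G H : 𝔼 d → 𝔼 d} {ξ : 𝔼 d} (hG : DifferentiableAt ℝ G ξ)
    (hH : DifferentiableAt ℝ H ξ) : ediv (fun ζ => G ζ - H ζ) ξ = ediv G ξ - ediv H ξ := by
  simp only [ediv_eq_trace, fderiv_fun_sub hG hH, ContinuousLinearMap.toLinearMap_sub, map_sub]

theorem ediv_smul {h : 𝔼 d → ℝ} {G : 𝔼 d → 𝔼 d} {ξ : 𝔼 d} (hh : DifferentiableAt ℝ h ξ)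
    (hG : DifferentiableAt ℝ G ξ) :
    ediv (fun ζ => h ζ • G ζ) ξ = h ξ * ediv G ξ + fderiv ℝ h ξ (G ξ) := by
  simp only [ediv_eq_trace, fderiv_fun_smul hh hG]
  simp [ContinuousLinearMap.smulRight]

theorem ediv_coord_smul {v G : 𝔼 d → 𝔼 d} {x : 𝔼 d} (hv : DifferentiableAt ℝ v x)
    (hG : DifferentiableAt ℝ G x) (i : Fin d) :
    ediv (fun y => v y i • G y) x = v x i * ediv G x + fderiv ℝ v x (G x) i := by
  have hvi : HasFDerivAt (fun y => v y i) _ x :=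
    (EuclideanSpace.proj (𝕜 := ℝ) i).hasFDerivAt.comp x hv.hasFDerivAt
  rw [ediv_smul hvi.differentiableAt hG, hvi.fderiv]
  rfl

theorem abs_ediv_le (G : 𝔼 d → 𝔼 d) (ξ : 𝔼 d) : |ediv G ξ| ≤ d * ‖fderiv ℝ G ξ‖ := by
  calc |ediv G ξ| ≤ ∑ i, |fderiv ℝ G ξ (EuclideanSpace.single i 1) i| :=
        Finset.abs_sum_le_sum_abs _ _
    _ ≤ ∑ _i : Fin d, ‖fderiv ℝ G ξ‖ := Finset.sum_le_sum fun i _ =>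
        (PiLp.norm_apply_le _ i).trans <| by
          simpa using (fderiv ℝ G ξ).le_opNorm (EuclideanSpace.single i 1)
    _ = d * ‖fderiv ℝ G ξ‖ := by simp

theorem continuous_ediv_slice {X : Type*} [NormedAddCommGroup X] [NormedSpace ℝ X]
    {G : X × 𝔼 d → 𝔼 d} (hG : ContDiff ℝ 1 G) :
    Continuous fun q : X × 𝔼 d => ediv (fun ζ => G (q.1, ζ)) q.2 := by
  simp_rw [ediv, fderiv_slice_right (hG.differentiable one_ne_zero _)]
  fun_prop

theorem sum_tensor_sub_one_mul_fderiv (G : 𝔼 d → 𝔼 d) (x w : 𝔼 d) :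
    ∑ i, ∑ j, (w i * w j - if i = j then (1 : ℝ) else 0) *
        fderiv ℝ G x (EuclideanSpace.single j 1) i =
      ⟪w, fderiv ℝ G x w⟫ - ediv G x := by
  have expand : ∀ i, fderiv ℝ G x w i = ∑ j, w j * fderiv ℝ G x (EuclideanSpace.single j 1) i := by
    intro i
    conv_lhs => rw [← (EuclideanSpace.basisFun (Fin d) ℝ).sum_repr w]
    simp
  simp only [sub_mul, Finset.sum_sub_distrib, ite_mul, one_mul, zero_mul, Finset.sum_ite_eq,
    Finset.mem_univ, if_true, ediv, PiLp.inner_apply, expand]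
  simp [Finset.mul_sum, mul_assoc, mul_comm (∑ _, _)]

theorem integral_ediv_add_ediv_eq_zero {X Y : 𝔼 d × 𝔼 d → 𝔼 d}
    (hX : ContDiff ℝ 1 X) (hY : ContDiff ℝ 1 Y) (hXi : Integrable X) (hYi : Integrable Y)
    (hdiv : Integrable fun p : 𝔼 d × 𝔼 d =>
      ediv (fun x => X (x, p.2)) p.1 + ediv (fun ξ => Y (p.1, ξ)) p.2) :
    ∫ p : 𝔼 d × 𝔼 d, (ediv (fun x => X (x, p.2)) p.1 + ediv (fun ξ => Y (p.1, ξ)) p.2) = 0 := by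
  have : (volume : Measure (𝔼 d × 𝔼 d)).IsAddHaarMeasure :=
    inferInstanceAs (Measure.prod volume volume).IsAddHaarMeasure
  have trace_eq p : LinearMap.trace ℝ (𝔼 d × 𝔼 d) (fderiv ℝ (fun q => (X q, Y q)) p) =
      ediv (fun x => X (x, p.2)) p.1 + ediv (fun ξ => Y (p.1, ξ)) p.2 := by
    have hXp := hX.differentiable one_ne_zero p
    have hYp := hY.differentiable one_ne_zero p
    rw [trace_eq_trace_inl_add_trace_inr, (hXp.hasFDerivAt.prodMk hYp.hasFDerivAt).fderiv,
      ediv_eq_trace, ediv_eq_trace, fderiv_slice_left hXp, fderiv_slice_right hYp]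
    rfl
  simp_rw [← trace_eq] at hdiv ⊢
  exact integral_trace_fderiv_eq_zero (hX.prodMk hY) (hXi.prodMk hYi) hdiv

end Divergence

section PolynomialGrowth

variable {X Y G H K : Type*} [NormedAddCommGroup X] [NormedAddCommGroup Y] [NormedAddCommGroup G]
  [NormedAddCommGroup H] [NormedAddCommGroup K] {I : Set ℝ}

/-- `h (t, q)` is bounded by a polynomial in `‖q‖`, uniformly in `t ∈ I`. -/
def PolyGrowthOn (I : Set ℝ) (h : ℝ × X → G) : Prop :=
  ∃ c : ℝ, ∃ k : ℕ, ∀ t ∈ I, ∀ q, ‖h (t, q)‖ ≤ c * (1 + ‖q‖) ^ k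

namespace PolyGrowthOn

variable {h : ℝ × X → G} {h₁ : ℝ × X → H} {h₂ : ℝ × X → K}

theorem exists_nonneg (hh : PolyGrowthOn I h) :
    ∃ c : ℝ, 0 ≤ c ∧ ∃ k : ℕ, ∀ t ∈ I, ∀ q, ‖h (t, q)‖ ≤ c * (1 + ‖q‖) ^ k := by
  obtain ⟨c, k, hc⟩ := hh
  exact ⟨|c|, abs_nonneg c, k, fun t ht q => (hc t ht q).trans (by gcongr; exact le_abs_self c)⟩

theorem mono {J : Set ℝ} (hh : PolyGrowthOn I h) (hJ : J ⊆ I) : PolyGrowthOn J h := by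
  obtain ⟨c, k, hc⟩ := hh
  exact ⟨c, k, fun t ht => hc t (hJ ht)⟩

theorem of_norm_le (h₁g : PolyGrowthOn I h₁) (hle : ∀ t ∈ I, ∀ q, ‖h (t, q)‖ ≤ ‖h₁ (t, q)‖) :
    PolyGrowthOn I h := by
  obtain ⟨c, k, hc⟩ := h₁g
  exact ⟨c, k, fun t ht q => (hle t ht q).trans (hc t ht q)⟩

theorem of_norm_le_mul (h₁g : PolyGrowthOn I h₁) (h₂g : PolyGrowthOn I h₂)
    (hle : ∀ t ∈ I, ∀ q, ‖h (t, q)‖ ≤ ‖h₁ (t, q)‖ * ‖h₂ (t, q)‖) : PolyGrowthOn I h := by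
  obtain ⟨c₁, hc₁, k₁, hb₁⟩ := h₁g.exists_nonneg
  obtain ⟨c₂, -, k₂, hb₂⟩ := h₂g.exists_nonneg
  refine ⟨c₁ * c₂, k₁ + k₂, fun t ht q => ?_⟩
  calc ‖h (t, q)‖ ≤ ‖h₁ (t, q)‖ * ‖h₂ (t, q)‖ := hle t ht q
    _ ≤ (c₁ * (1 + ‖q‖) ^ k₁) * (c₂ * (1 + ‖q‖) ^ k₂) := by
        gcongr
        exacts [hb₁ t ht q, hb₂ t ht q]
    _ = c₁ * c₂ * (1 + ‖q‖) ^ (k₁ + k₂) := by ring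

theorem of_norm_le_add (h₁g : PolyGrowthOn I h₁) (h₂g : PolyGrowthOn I h₂)
    (hle : ∀ t ∈ I, ∀ q, ‖h (t, q)‖ ≤ ‖h₁ (t, q)‖ + ‖h₂ (t, q)‖) : PolyGrowthOn I h := by
  obtain ⟨c₁, hc₁, k₁, hb₁⟩ := h₁g.exists_nonneg
  obtain ⟨c₂, hc₂, k₂, hb₂⟩ := h₂g.exists_nonneg
  refine ⟨c₁ + c₂, k₁ + k₂, fun t ht q => ?_⟩
  have one_le : 1 ≤ 1 + ‖q‖ := le_add_of_nonneg_right (norm_nonneg q)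
  calc ‖h (t, q)‖ ≤ ‖h₁ (t, q)‖ + ‖h₂ (t, q)‖ := hle t ht q
    _ ≤ c₁ * (1 + ‖q‖) ^ k₁ + c₂ * (1 + ‖q‖) ^ k₂ := add_le_add (hb₁ t ht q) (hb₂ t ht q)
    _ ≤ c₁ * (1 + ‖q‖) ^ (k₁ + k₂) + c₂ * (1 + ‖q‖) ^ (k₁ + k₂) := by
        gcongr <;> first | exact one_le | omega
    _ = (c₁ + c₂) * (1 + ‖q‖) ^ (k₁ + k₂) := by ring

theorem const (v : G) : PolyGrowthOn I fun _ : ℝ × X => v :=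
  ⟨‖v‖, 0, fun _ _ _ => by simp⟩

theorem snd : PolyGrowthOn I fun p : ℝ × X => p.2 :=
  ⟨1, 1, fun _ _ q => by simp⟩

theorem snd_snd : PolyGrowthOn I fun p : ℝ × X × Y => p.2.2 :=
  snd.of_norm_le fun _ _ _ => norm_snd_le _

theorem comp_fst (hh : PolyGrowthOn I h) : PolyGrowthOn I fun p : ℝ × X × Y => h (p.1, p.2.1) := by
  obtain ⟨c, hc, k, hb⟩ := hh.exists_nonneg
  exact ⟨c, k, fun t ht q => (hb t ht q.1).trans (by gcongr; exact norm_fst_le q)⟩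

theorem add {h' : ℝ × X → G} (hh : PolyGrowthOn I h) (hh' : PolyGrowthOn I h') :
    PolyGrowthOn I fun p => h p + h' p :=
  hh.of_norm_le_add hh' fun _ _ _ => norm_add_le _ _

theorem norm (hh : PolyGrowthOn I h) : PolyGrowthOn I fun p => ‖h p‖ :=
  hh.of_norm_le fun _ _ _ => (norm_norm _).le

theorem neg (hh : PolyGrowthOn I h) : PolyGrowthOn I fun p => -h p :=
  hh.of_norm_le fun _ _ _ => (norm_neg _).le

theorem sub {h' : ℝ × X → G} (hh : PolyGrowthOn I h) (hh' : PolyGrowthOn I h') :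
    PolyGrowthOn I fun p => h p - h' p :=
  hh.of_norm_le_add hh' fun _ _ _ => norm_sub_le _ _

theorem mul {a b : ℝ × X → ℝ} (ha : PolyGrowthOn I a) (hb : PolyGrowthOn I b) :
    PolyGrowthOn I fun p => a p * b p :=
  ha.of_norm_le_mul hb fun _ _ _ => norm_mul_le _ _

theorem smul [NormedSpace ℝ G] {a : ℝ × X → ℝ} (ha : PolyGrowthOn I a) (hh : PolyGrowthOn I h) :
    PolyGrowthOn I fun p => a p • h p :=
  ha.of_norm_le_mul hh fun _ _ _ => norm_smul_le _ _

theorem inner {E : Type*} [NormedAddCommGroup E] [InnerProductSpace ℝ E] {a b : ℝ × X → E}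
    (ha : PolyGrowthOn I a) (hb : PolyGrowthOn I b) : PolyGrowthOn I fun p => ⟪a p, b p⟫ :=
  ha.of_norm_le_mul hb fun _ _ _ => norm_inner_le_norm _ _

theorem prodMk (h₁g : PolyGrowthOn I h₁) (h₂g : PolyGrowthOn I h₂) :
    PolyGrowthOn I fun p => (h₁ p, h₂ p) :=
  h₁g.of_norm_le_add h₂g fun _ _ _ => max_le_add_of_nonneg (norm_nonneg _) (norm_nonneg _)

theorem clm_apply [NormedSpace ℝ G] [NormedSpace ℝ H] {L : ℝ × X → G →L[ℝ] H}
    (hL : PolyGrowthOn I L) (hh : PolyGrowthOn I h) : PolyGrowthOn I fun p => L p (h p) :=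
  hL.of_norm_le_mul hh fun _ _ _ => ContinuousLinearMap.le_opNorm _ _

theorem of_partial [NormedSpace ℝ X] [NormedSpace ℝ G] {L : ℝ × X → ℝ × X →L[ℝ] G}
    (htime : PolyGrowthOn I fun p => L p (1, 0))
    (hspace : PolyGrowthOn I fun p => L p ∘L ContinuousLinearMap.inr ℝ ℝ X) :
    PolyGrowthOn I L := by
  refine (htime.norm.add hspace.norm).of_norm_le fun t _ q => ?_
  refine (ContinuousLinearMap.opNorm_le_bound _ (by positivity) fun ⟨s, x⟩ => ?_).trans
    (le_abs_self _)
  have split : L (t, q) (s, x) =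
      s • L (t, q) (1, 0) + (L (t, q) ∘L ContinuousLinearMap.inr ℝ ℝ X) x := by
    rw [← map_smul, ContinuousLinearMap.comp_apply, ← map_add]
    simp
  calc ‖L (t, q) (s, x)‖
      ≤ ‖s‖ * ‖L (t, q) (1, 0)‖ + ‖L (t, q) ∘L ContinuousLinearMap.inr ℝ ℝ X‖ * ‖x‖ := by
        rw [split]
        exact (norm_add_le _ _).trans
          (add_le_add (norm_smul_le _ _) (ContinuousLinearMap.le_opNorm _ _))
    _ ≤ ‖(s, x)‖ * ‖L (t, q) (1, 0)‖ +
          ‖L (t, q) ∘L ContinuousLinearMap.inr ℝ ℝ X‖ * ‖(s, x)‖ := by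
        gcongr
        exacts [norm_fst_le (s, x), norm_snd_le (s, x)]
    _ = _ := by ring

theorem of_fderiv [NormedSpace ℝ X] [NormedSpace ℝ G] (hI : Convex ℝ I) (hIo : IsOpen I)
    (hIb : Bornology.IsBounded I) (hdiff : DifferentiableOn ℝ h (I ×ˢ Set.univ))
    (hh : PolyGrowthOn I (fderiv ℝ h)) : PolyGrowthOn I h := by
  rcases I.eq_empty_or_nonempty with rfl | ⟨t₀, ht₀⟩
  · exact ⟨0, 0, by simp⟩
  obtain ⟨c, hc, k, hb⟩ := hh.exists_nonneg
  obtain ⟨r, hr, hball⟩ := hIb.subset_closedBall_lt 1 t₀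
  have increment : PolyGrowthOn I fun p => h p - h (t₀, 0) := by
    refine ⟨c * r, k + 1, fun t ht q => ?_⟩
    have bound : ∀ p ∈ I ×ˢ Metric.closedBall (0 : X) ‖q‖,
        ‖fderiv ℝ h p‖ ≤ c * (1 + ‖q‖) ^ k := fun p hp =>
      (hb p.1 hp.1 p.2).trans (by gcongr; simpa using hp.2)
    have dist_le : ‖((t, q) : ℝ × X) - (t₀, 0)‖ ≤ r * (1 + ‖q‖) := by
      rw [Prod.mk_sub_mk, sub_zero, Prod.norm_mk, ← dist_eq_norm]
      exact max_le ((Metric.mem_closedBall.1 (hball ht)).trans (by nlinarith [norm_nonneg q]))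
        (by nlinarith [norm_nonneg q])
    calc ‖h (t, q) - h (t₀, 0)‖ ≤ c * (1 + ‖q‖) ^ k * ‖((t, q) : ℝ × X) - (t₀, 0)‖ :=
          (hI.prod (convex_closedBall 0 ‖q‖)).norm_image_sub_le_of_norm_fderiv_le
            (fun p hp => hdiff.differentiableAt
              ((hIo.prod isOpen_univ).mem_nhds ⟨hp.1, trivial⟩)) bound
            ⟨ht₀, by simp⟩ ⟨ht, by simp⟩
      _ ≤ c * (1 + ‖q‖) ^ k * (r * (1 + ‖q‖)) := by gcongr
      _ = c * r * (1 + ‖q‖) ^ (k + 1) := by ring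
  simpa using increment.add (const (h (t₀, 0)))

end PolyGrowthOn

end PolynomialGrowth

section Moments

variable {X G : Type*} [NormedAddCommGroup X] [MeasurableSpace X] [NormedAddCommGroup G]
  {μ : Measure X} {I : Set ℝ} {f : ℝ × X → ℝ}

/-- The polynomial moments of the densities `f (t, ·)` are finite, uniformly in `t ∈ I`. -/
def UniformMomentsOn (I : Set ℝ) (f : ℝ × X → ℝ) (μ : Measure X) : Prop :=
  ∀ N : ℕ, ∃ c : ℝ, ∀ t ∈ I,
    Integrable (fun q => (1 + ‖q‖) ^ N * f (t, q)) μ ∧ ∫ q, (1 + ‖q‖) ^ N * f (t, q) ∂μ ≤ c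

namespace UniformMomentsOn

theorem mono {J : Set ℝ} (hf : UniformMomentsOn I f μ) (hJ : J ⊆ I) : UniformMomentsOn J f μ :=
  fun N => (hf N).imp fun _ hc t ht => hc t (hJ ht)

theorem integrable {t : ℝ} (hf : UniformMomentsOn I f μ) (ht : t ∈ I) :
    Integrable (fun q => f (t, q)) μ := by
  obtain ⟨c, hc⟩ := hf 0
  simpa using (hc t ht).1

theorem integrable_smul [NormedSpace ℝ G] {t : ℝ} {h : ℝ × X → G} (hf : UniformMomentsOn I f μ)
    (hh : PolyGrowthOn I h) (ht : t ∈ I) (hm : AEStronglyMeasurable (fun q => h (t, q)) μ) :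
    Integrable (fun q => f (t, q) • h (t, q)) μ := by
  obtain ⟨c, k, hb⟩ := hh
  obtain ⟨_, hk⟩ := hf k
  refine ((hk t ht).1.norm.const_mul c).mono'
    ((hf.integrable ht).1.smul hm) (.of_forall fun q => ?_)
  calc ‖f (t, q) • h (t, q)‖ = ‖f (t, q)‖ * ‖h (t, q)‖ := norm_smul _ _
    _ ≤ ‖f (t, q)‖ * (c * (1 + ‖q‖) ^ k) := by gcongr; exact hb t ht q
    _ = c * ‖(1 + ‖q‖) ^ k * f (t, q)‖ := by
        rw [norm_mul, Real.norm_of_nonneg (by positivity : 0 ≤ (1 + ‖q‖) ^ k)]; ring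

theorem integrable_mul_setIntegral [OpensMeasurableSpace X] [SecondCountableTopology X] [SFinite μ]
    (hf : UniformMomentsOn I f μ) (h0 : ∀ p, 0 ≤ f p) (hfc : ContinuousOn f (I ×ˢ Set.univ))
    (hI : MeasurableSet I) (hIfin : volume I ≠ ⊤) (N : ℕ) :
    Integrable (fun q => (1 + ‖q‖) ^ N * ∫ r in I, f (r, q)) μ := by
  have : IsFiniteMeasure (volume.restrict I) := ⟨by simpa using hIfin.lt_top⟩
  obtain ⟨c, hc⟩ := hf N
  have hm : AEStronglyMeasurable (fun p : ℝ × X => (1 + ‖p.2‖) ^ N * f p)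
      ((volume.restrict I).prod μ) := by
    rw [← Measure.restrict_univ (μ := μ), Measure.prod_restrict]
    exact ((by fun_prop : Continuous fun p : ℝ × X => (1 + ‖p.2‖) ^ N).continuousOn.mul
      hfc).aestronglyMeasurable (hI.prod .univ)
  have hint : Integrable (fun p : ℝ × X => (1 + ‖p.2‖) ^ N * f p)
      ((volume.restrict I).prod μ) := by
    refine (integrable_prod_iff hm).2 ⟨(ae_restrict_mem hI).mono fun r hr => (hc r hr).1,
      (integrable_const c).mono' hm.norm.integral_prod_right'
        ((ae_restrict_mem hI).mono fun r hr => ?_)⟩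
    have norm_eq q : ‖(1 + ‖q‖) ^ N * f (r, q)‖ = (1 + ‖q‖) ^ N * f (r, q) :=
      Real.norm_of_nonneg (mul_nonneg (by positivity) (h0 _))
    simp_rw [norm_eq]
    rw [Real.norm_of_nonneg (integral_nonneg fun q => mul_nonneg (by positivity) (h0 _))]
    exact (hc r hr).2
  simpa only [integral_const_mul] using hint.integral_prod_right

end UniformMomentsOn

theorem le_add_mul_setIntegral_of_deriv_le {y y' : ℝ → ℝ} {a b K t : ℝ}
    (hy : ∀ s ∈ Set.Icc a b, HasDerivAt y (y' s) s) (hy0 : ∀ s, 0 ≤ y s) (hK : 0 ≤ K)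
    (hle : ∀ s ∈ Set.Icc a b, y' s ≤ K * y s) (ht : t ∈ Set.Icc a b) :
    y t ≤ y a + K * ∫ s in Set.Icc a b, y s := by
  have hsub : Set.Icc a t ⊆ Set.Icc a b := Set.Icc_subset_Icc_right ht.2
  have hyc : ContinuousOn y (Set.Icc a b) := fun s hs => (hy s hs).continuousAt.continuousWithinAt
  have hyi : IntegrableOn y (Set.Icc a b) := hyc.integrableOn_compact isCompact_Icc
  have increment : y t - y a ≤ ∫ s in a..t, K * y s :=
    intervalIntegral.sub_le_integral_of_hasDeriv_right_of_le ht.1 (hyc.mono hsub)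
      (fun s hs => (hy s (hsub (Set.Ioo_subset_Icc_self hs))).hasDerivWithinAt)
      ((hyi.mono_set hsub).const_mul K) fun s hs => hle s (hsub (Set.Ioo_subset_Icc_self hs))
  have enlarge : ∫ s in a..t, K * y s ≤ K * ∫ s in Set.Icc a b, y s := by
    rw [intervalIntegral.integral_of_le ht.1, integral_const_mul]
    exact mul_le_mul_of_nonneg_left (setIntegral_mono_set hyi (.of_forall hy0)
      (Set.Ioc_subset_Icc_self.trans hsub).eventuallyLE) hK
  linarith

variable [NormedSpace ℝ X] [OpensMeasurableSpace X] [SecondCountableTopology X] [SFinite μ]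

-- As `|∂ₜ f| ≤ f ‖W‖`, integrating in time bounds `f (t, ·)` by `f (a, ·)` plus a polynomial times
-- a time integral of `f`, which inherits the moments.
theorem UniformMomentsOn.exists_dominating {W : ℝ × X → G} {a b : ℝ}
    (hf : UniformMomentsOn (Set.Icc a b) f μ) (h0 : ∀ p, 0 ≤ f p)
    (hfd : ∀ t ∈ Set.Icc a b, ∀ q, DifferentiableAt ℝ f (t, q))
    (hW : PolyGrowthOn (Set.Icc a b) W)
    (hfW : ∀ t ∈ Set.Icc a b, ∀ q, ‖fderiv ℝ f (t, q)‖ ≤ f (t, q) * ‖W (t, q)‖) (hab : a ≤ b) :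
    ∃ Φ : X → ℝ, (∀ N : ℕ, Integrable (fun q => (1 + ‖q‖) ^ N * Φ q) μ) ∧
      ∀ t ∈ Set.Icc a b, ∀ q, f (t, q) ≤ Φ q := by
  obtain ⟨C, hC, k, hb⟩ := hW.exists_nonneg
  have hfc : ContinuousOn f (Set.Icc a b ×ˢ Set.univ) := fun p hp =>
    (hfd p.1 hp.1 p.2).continuousAt.continuousWithinAt
  refine ⟨fun q => f (a, q) + C * (1 + ‖q‖) ^ k * ∫ r in Set.Icc a b, f (r, q), fun N => ?_,
    fun t ht q => le_add_mul_setIntegral_of_deriv_le (y := fun s => f (s, q))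
      (fun s hs => hasDerivAt_slice (hfd s hs q)) (fun _ => h0 _) (by positivity)
      (fun s hs => ?_) ht⟩
  · obtain ⟨_, hN⟩ := hf N
    refine ((hN a (Set.left_mem_Icc.2 hab)).1.add ((hf.integrable_mul_setIntegral h0 hfc
      measurableSet_Icc (by simp) (N + k)).const_mul C)).congr (.of_forall fun q => ?_)
    simp only [Pi.add_apply]
    ring
  · calc fderiv ℝ f (s, q) (1, 0) ≤ ‖fderiv ℝ f (s, q)‖ :=
          (Real.le_norm_self _).trans (norm_apply_one_zero_le _)
      _ ≤ f (s, q) * ‖W (s, q)‖ := hfW s hs q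
      _ ≤ f (s, q) * (C * (1 + ‖q‖) ^ k) := mul_le_mul_of_nonneg_left (hb s hs q) (h0 _)
      _ = C * (1 + ‖q‖) ^ k * f (s, q) := mul_comm _ _

theorem UniformMomentsOn.hasDerivAt_integral_mul {W : ℝ × X → G} {g : ℝ × X → ℝ} {t : ℝ}
    (hf : UniformMomentsOn I f μ) (hI : IsOpen I) (h0 : ∀ p, 0 ≤ f p)
    (hfd : ContDiffOn ℝ 1 f (I ×ˢ Set.univ)) (hgd : ContDiffOn ℝ 1 g (I ×ˢ Set.univ))
    (hW : PolyGrowthOn I W) (hfW : ∀ t ∈ I, ∀ q, ‖fderiv ℝ f (t, q)‖ ≤ f (t, q) * ‖W (t, q)‖)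
    (hg : PolyGrowthOn I g) (hg' : PolyGrowthOn I (fderiv ℝ g)) (ht : t ∈ I) :
    HasDerivAt (fun s => ∫ q, f (s, q) * g (s, q) ∂μ)
      (∫ q, fderiv ℝ (fun p => f p * g p) (t, q) (1, 0) ∂μ) t := by
  have hIu : IsOpen (I ×ˢ (Set.univ : Set X)) := hI.prod isOpen_univ
  obtain ⟨a, b, htab, hnhds, hsub⟩ := exists_Icc_mem_subset_of_mem_nhds (hI.mem_nhds ht)
  have hdiff {h : ℝ × X → ℝ} (hh : ContDiffOn ℝ 1 h (I ×ˢ Set.univ)) s (hs : s ∈ Set.Icc a b) q :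
      DifferentiableAt ℝ h (s, q) :=
    (hh.differentiableOn one_ne_zero).differentiableAt (hIu.mem_nhds ⟨hsub hs, trivial⟩)
  have hfg : ContDiffOn ℝ 1 (fun p => f p * g p) (I ×ˢ Set.univ) := hfd.mul hgd
  obtain ⟨Φ, hΦi, hΦ⟩ := (hf.mono hsub).exists_dominating h0 (hdiff hfd)
    (hW.mono hsub) (fun s hs => hfW s (hsub hs)) (htab.1.trans htab.2)
  obtain ⟨c, k, hb⟩ := hg'.norm.add (hg.norm.mul hW.norm)
  refine (hasDerivAt_integral_of_dominated_loc_of_deriv_le (𝕜 := ℝ) (E := ℝ)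
    (F' := fun s q => fderiv ℝ (fun p => f p * g p) (s, q) (1, 0))
    (bound := fun q => c * ((1 + ‖q‖) ^ k * Φ q)) hnhds ?_ ?_ ?_ ?_ ((hΦi k).const_mul c) ?_).2
  · filter_upwards [hI.mem_nhds ht] with s hs
    exact (continuous_slice hfg.continuousOn hs).aestronglyMeasurable
  · exact hf.integrable_smul hg ht (continuous_slice hgd.continuousOn ht).aestronglyMeasurable
  · exact ((continuous_slice (hfg.continuousOn_fderiv_of_isOpen hIu le_rfl) ht).clm_apply
      continuous_const).aestronglyMeasurable
  · refine .of_forall fun q s hs => ?_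
    calc ‖fderiv ℝ (fun p => f p * g p) (s, q) (1, 0)‖
        ≤ ‖f (s, q) • fderiv ℝ g (s, q) + g (s, q) • fderiv ℝ f (s, q)‖ := by
          rw [fderiv_fun_mul (hdiff hfd s hs q) (hdiff hgd s hs q)]
          exact norm_apply_one_zero_le _
      _ ≤ f (s, q) * ‖fderiv ℝ g (s, q)‖ + ‖g (s, q)‖ * (f (s, q) * ‖W (s, q)‖) := by
          refine (norm_add_le _ _).trans ?_
          rw [norm_smul, norm_smul, Real.norm_of_nonneg (h0 _)]
          gcongr
          exact hfW s (hsub hs) q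
      _ = f (s, q) * (‖fderiv ℝ g (s, q)‖ + ‖g (s, q)‖ * ‖W (s, q)‖) := by ring
      _ ≤ Φ q * (c * (1 + ‖q‖) ^ k) := mul_le_mul (hΦ s hs q)
          ((Real.le_norm_self _).trans (hb s (hsub hs) q)) (by positivity)
          ((h0 _).trans (hΦ s hs q))
      _ = c * ((1 + ‖q‖) ^ k * Φ q) := by ring
  · exact .of_forall fun q s hs => hasDerivAt_slice (hdiff hfg s hs q)

end Moments

section WeightedMean

variable {X Y E : Type*} [MeasurableSpace X] [MeasurableSpace Y] [NormedAddCommGroup E]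
  [InnerProductSpace ℝ E] {μ : Measure X} {ν : Measure Y}

/-- The mean of `a` with respect to the weight `m`. For the weight `f (t, x, ·)` and the field
`a ξ = ξ` it is the macroscopic velocity, with the junk value `0` where the weight has mass `0`. -/
noncomputable def weightedMean (ν : Measure Y) (m : Y → ℝ) (a : Y → E) : E :=
  (∫ y, m y ∂ν)⁻¹ • ∫ y, m y • a y ∂ν

theorem integral_smul_weightedMean {m : Y → ℝ} (hm : Integrable m ν) (hm0 : ∀ y, 0 ≤ m y)
    (a : Y → E) : (∫ y, m y ∂ν) • weightedMean ν m a = ∫ y, m y • a y ∂ν := by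
  by_cases h : ∫ y, m y ∂ν = 0
  · have hzero : m =ᵐ[ν] 0 := (integral_eq_zero_iff_of_nonneg hm0 hm).1 h
    rw [h, zero_smul, integral_eq_zero_of_ae (hzero.mono fun y hy => by simp [hy])]
  · exact smul_inv_smul₀ h _

theorem mul_norm_sub_sq_eq (m : ℝ) (a U v : E) :
    m * ‖a - U‖ ^ 2 = m * ⟪a, a - v⟫ + ⟪v - (2 : ℝ) • U, m • a⟫ + ‖U‖ ^ 2 * m := by
  rw [norm_sub_sq_real, inner_sub_right, inner_sub_left, inner_smul_right, inner_smul_left,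
    inner_smul_right, real_inner_self_eq_norm_sq, real_inner_comm a U, real_inner_comm a v]
  simp only [conj_trivial]
  ring

section Fibre

variable {m : Y → ℝ} {a : Y → E} {v : E}

theorem integrable_mul_norm_sub_sq (hm : Integrable m ν) (hma : Integrable (fun y => m y • a y) ν)
    (hmaa : Integrable (fun y => m y * ⟪a y, a y - v⟫) ν) (U : E) :
    Integrable (fun y => m y * ‖a y - U‖ ^ 2) ν := by
  simp_rw [mul_norm_sub_sq_eq _ _ _ v]
  exact (hmaa.add (hma.const_inner _)).add (hm.const_mul _)

theorem integral_mul_norm_sub_weightedMean_sq [CompleteSpace E] (hm : Integrable m ν)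
    (hm0 : ∀ y, 0 ≤ m y) (hma : Integrable (fun y => m y • a y) ν)
    (hmaa : Integrable (fun y => m y * ⟪a y, a y - v⟫) ν) :
    ∫ y, m y * ‖a y - weightedMean ν m a‖ ^ 2 ∂ν =
      ∫ y, m y * ⟪a y, a y - v⟫ ∂ν -
        (∫ y, m y ∂ν) * ⟪weightedMean ν m a, weightedMean ν m a - v⟫ := by
  set U := weightedMean ν m a with hU
  have hcross : Integrable (fun y => ⟪v - (2 : ℝ) • U, m y • a y⟫) ν := hma.const_inner _
  simp_rw [mul_norm_sub_sq_eq _ _ U v]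
  rw [integral_add (f := fun y => m y * ⟪a y, a y - v⟫ + ⟪v - (2 : ℝ) • U, m y • a y⟫)
      (hmaa.add hcross) (hm.const_mul _), integral_add hmaa hcross, integral_const_mul,
    integral_inner hma, ← integral_smul_weightedMean hm hm0 a, ← hU, inner_smul_right,
    inner_sub_left, inner_sub_right, inner_smul_left, real_inner_self_eq_norm_sq,
    real_inner_comm v U]
  simp only [conj_trivial]
  ring

end Fibre

variable [CompleteSpace E] [SFinite μ] [SFinite ν] {f : X × Y → ℝ} {a : X × Y → E}

theorem integrable_mul_norm_sub_weightedMean_sq (hf : Integrable f (μ.prod ν)) (hf0 : ∀ p, 0 ≤ f p)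
    (ham : AEStronglyMeasurable a (μ.prod ν))
    (hfa : Integrable (fun p => f p • a p) (μ.prod ν))
    (hfaa : Integrable (fun p => f p * ‖a p‖ ^ 2) (μ.prod ν)) :
    Integrable (fun p => f p *
      ‖a p - weightedMean ν (fun y => f (p.1, y)) (fun y => a (p.1, y))‖ ^ 2) (μ.prod ν) := by
  have hmean : AEStronglyMeasurable
      (fun x => weightedMean ν (fun y => f (x, y)) (fun y => a (x, y))) μ :=
    hf.1.integral_prod_right'.aemeasurable.inv.aestronglyMeasurable.smul hfa.1.integral_prod_right'
  have hm : AEStronglyMeasurable (fun p => f p *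
      ‖a p - weightedMean ν (fun y => f (p.1, y)) (fun y => a (p.1, y))‖ ^ 2) (μ.prod ν) :=
    hf.1.mul ((ham.sub hmean.comp_fst).norm.pow 2)
  have hfaa0 : Integrable (fun p => f p * ⟪a p, a p - 0⟫) (μ.prod ν) := by
    simpa only [sub_zero, real_inner_self_eq_norm_sq] using hfaa
  refine (integrable_prod_iff hm).2
    ⟨?_, hfaa0.integral_prod_left.mono' hm.norm.integral_prod_right' ?_⟩
  · filter_upwards [hf.prod_right_ae, hfa.prod_right_ae, hfaa0.prod_right_ae] with x hx hxa hxaa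
    exact integrable_mul_norm_sub_sq hx hxa hxaa _
  · filter_upwards [hf.prod_right_ae, hfa.prod_right_ae, hfaa0.prod_right_ae] with x hx hxa hxaa
    have hnonneg y : 0 ≤ f (x, y) *
        ‖a (x, y) - weightedMean ν (fun y => f (x, y)) (fun y => a (x, y))‖ ^ 2 :=
      mul_nonneg (hf0 _) (sq_nonneg _)
    simp_rw [Real.norm_of_nonneg (hnonneg _)]
    rw [Real.norm_of_nonneg (integral_nonneg hnonneg),
      integral_mul_norm_sub_weightedMean_sq hx (fun y => hf0 _) hxa hxaa, sub_zero]
    exact sub_le_self _ (mul_nonneg (integral_nonneg fun y => hf0 _) real_inner_self_nonneg)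

theorem integral_mul_norm_sub_weightedMean_sq_prod {v : X → E} (hf : Integrable f (μ.prod ν))
    (hf0 : ∀ p, 0 ≤ f p) (ham : AEStronglyMeasurable a (μ.prod ν))
    (hfa : Integrable (fun p => f p • a p) (μ.prod ν))
    (hfaa : Integrable (fun p => f p * ‖a p‖ ^ 2) (μ.prod ν))
    (hfav : Integrable (fun p => f p * ⟪a p, a p - v p.1⟫) (μ.prod ν)) :
    ∫ p, f p * ‖a p - weightedMean ν (fun y => f (p.1, y)) (fun y => a (p.1, y))‖ ^ 2
        ∂(μ.prod ν) =
      ∫ p, f p * ⟪a p, a p - v p.1⟫ ∂(μ.prod ν) -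
        ∫ x, (∫ y, f (x, y) ∂ν) * ⟪weightedMean ν (fun y => f (x, y)) (fun y => a (x, y)),
          weightedMean ν (fun y => f (x, y)) (fun y => a (x, y)) - v x⟫ ∂μ := by
  have hdiss := integrable_mul_norm_sub_weightedMean_sq hf hf0 ham hfa hfaa
  have hfibre : ∀ᵐ x ∂μ, (∫ y, f (x, y) ∂ν) *
      ⟪weightedMean ν (fun y => f (x, y)) (fun y => a (x, y)),
        weightedMean ν (fun y => f (x, y)) (fun y => a (x, y)) - v x⟫ =
      ∫ y, f (x, y) * ⟪a (x, y), a (x, y) - v x⟫ ∂ν - ∫ y, f (x, y) *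
        ‖a (x, y) - weightedMean ν (fun y => f (x, y)) (fun y => a (x, y))‖ ^ 2 ∂ν := by
    filter_upwards [hf.prod_right_ae, hfa.prod_right_ae, hfav.prod_right_ae] with x hx hxa hxav
    rw [integral_mul_norm_sub_weightedMean_sq hx (fun y => hf0 _) hxa hxav, sub_sub_cancel]
  rw [integral_prod _ hdiss, integral_prod _ hfav, integral_congr_ae hfibre,
    integral_sub hfav.integral_prod_left hdiss.integral_prod_left, sub_sub_cancel]

end WeightedMean

section LogMaxwellian

variable {d : ℕ}

/-- The logarithm of the local Maxwellian `M_{ρ,u}` with `σ = log ρ`, as a function of time,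
position and velocity. -/
noncomputable def logMaxwellian (σ : ℝ × 𝔼 d → ℝ) (v : ℝ × 𝔼 d → 𝔼 d) (p : ℝ × 𝔼 d × 𝔼 d) : ℝ :=
  σ (p.1, p.2.1) - d / 2 * Real.log (2 * π) - ‖p.2.2 - v (p.1, p.2.1)‖ ^ 2 / 2

theorem log_maxwellian {ρ : ℝ} (hρ : 0 < ρ) (u ξ : 𝔼 d) :
    Real.log (maxwellian d ρ u ξ) =
      Real.log ρ - d / 2 * Real.log (2 * π) - ‖ξ - u‖ ^ 2 / 2 := by
  have h2π : 0 < (2 * π) ^ (-(d : ℝ) / 2) := Real.rpow_pos_of_pos two_pi_pos _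
  rw [maxwellian, Real.log_mul (mul_pos hρ h2π).ne' (Real.exp_ne_zero _),
    Real.log_mul hρ.ne' h2π.ne', Real.log_exp, Real.log_rpow two_pi_pos]
  ring

theorem maxwellian_pos {ρ : ℝ} (hρ : 0 < ρ) (u ξ : 𝔼 d) : 0 < maxwellian d ρ u ξ :=
  mul_pos (mul_pos hρ (Real.rpow_pos_of_pos two_pi_pos _)) (Real.exp_pos _)

variable {I : Set ℝ} {σ : ℝ × 𝔼 d → ℝ} {v : ℝ × 𝔼 d → 𝔼 d}

theorem contDiffOn_logMaxwellian (hσ : ContDiffOn ℝ 1 σ (I ×ˢ Set.univ))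
    (hv : ContDiffOn ℝ 1 v (I ×ˢ Set.univ)) :
    ContDiffOn ℝ 1 (logMaxwellian σ v) (I ×ˢ Set.univ) := by
  have hbase : ContDiff ℝ 1 fun p : ℝ × 𝔼 d × 𝔼 d => (p.1, p.2.1) := by fun_prop
  have hmaps : Set.MapsTo (fun p : ℝ × 𝔼 d × 𝔼 d => (p.1, p.2.1)) (I ×ˢ Set.univ) (I ×ˢ Set.univ) :=
    fun p hp => ⟨hp.1, trivial⟩
  have hξ : ContDiff ℝ 1 fun p : ℝ × 𝔼 d × 𝔼 d => p.2.2 := by fun_prop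
  exact ((hσ.comp hbase.contDiffOn hmaps).sub contDiffOn_const).sub
    (((hξ.contDiffOn.sub (hv.comp hbase.contDiffOn hmaps)).norm_sq ℝ).div_const 2)

theorem fderiv_logMaxwellian_apply {p : ℝ × 𝔼 d × 𝔼 d} (hσ : DifferentiableAt ℝ σ (p.1, p.2.1))
    (hv : DifferentiableAt ℝ v (p.1, p.2.1)) (s : ℝ) (y η : 𝔼 d) :
    fderiv ℝ (logMaxwellian σ v) p (s, y, η) =
      fderiv ℝ σ (p.1, p.2.1) (s, y) +
        ⟪p.2.2 - v (p.1, p.2.1), fderiv ℝ v (p.1, p.2.1) (s, y) - η⟫ := by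
  have hbase : HasFDerivAt (fun p : ℝ × 𝔼 d × 𝔼 d => (p.1, p.2.1))
      ((ContinuousLinearMap.fst ℝ ℝ (𝔼 d × 𝔼 d)).prod
        (ContinuousLinearMap.fst ℝ (𝔼 d) (𝔼 d) ∘L ContinuousLinearMap.snd ℝ ℝ (𝔼 d × 𝔼 d))) p :=
    hasFDerivAt_fst.prodMk (hasFDerivAt_fst.comp p hasFDerivAt_snd)
  have hξ : HasFDerivAt (fun p : ℝ × 𝔼 d × 𝔼 d => p.2.2)
      (ContinuousLinearMap.snd ℝ (𝔼 d) (𝔼 d) ∘L ContinuousLinearMap.snd ℝ ℝ (𝔼 d × 𝔼 d)) p :=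
    hasFDerivAt_snd.comp p hasFDerivAt_snd
  have hσ' := hσ.hasFDerivAt.comp p hbase
  have hv' := hv.hasFDerivAt.comp p hbase
  have hL : HasFDerivAt (logMaxwellian σ v) _ p :=
    ((hσ'.sub_const (d / 2 * Real.log (2 * π))).sub
      ((hξ.sub hv').norm_sq.mul_const (2⁻¹ : ℝ))).congr_of_eventuallyEq <|
        .of_forall fun q => by simp [logMaxwellian, div_eq_mul_inv]
  rw [hL.fderiv]
  simp only [Pi.sub_apply, Function.comp_apply, map_sub, ContinuousLinearMap.comp_sub,
    ContinuousLinearMap.sub_comp, sub_apply, ContinuousLinearMap.comp_apply,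
    ContinuousLinearMap.prod_apply, ContinuousLinearMap.coe_fst', ContinuousLinearMap.coe_snd',
    smul_apply, coe_innerSL_apply, nsmul_eq_mul, Nat.cast_ofNat, smul_eq_mul, ne_eq,
    OfNat.ofNat_ne_zero, not_false_eq_true, inv_mul_cancel_left₀, inner_sub_right, inner_sub_left]
  ring

theorem polyGrowthOn_logMaxwellian (hσ : PolyGrowthOn I σ) (hv : PolyGrowthOn I v) :
    PolyGrowthOn I (logMaxwellian σ v) := by
  have hw : PolyGrowthOn I fun p : ℝ × 𝔼 d × 𝔼 d => p.2.2 - v (p.1, p.2.1) :=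
    PolyGrowthOn.snd_snd.sub hv.comp_fst
  refine (hσ.comp_fst.sub (.const (d / 2 * Real.log (2 * π)))).sub
    ((PolyGrowthOn.const (1 / 2 : ℝ)).mul (hw.inner hw)) |>.of_norm_le fun t _ q => ?_
  rw [real_inner_self_eq_norm_sq, one_div_mul_eq_div]
  rfl

theorem polyGrowthOn_fderiv_logMaxwellian (hσ : ∀ t ∈ I, ∀ x, DifferentiableAt ℝ σ (t, x))
    (hv : ∀ t ∈ I, ∀ x, DifferentiableAt ℝ v (t, x)) (hvg : PolyGrowthOn I v)
    (hDσ : PolyGrowthOn I (fderiv ℝ σ)) (hDv : PolyGrowthOn I (fderiv ℝ v)) :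
    PolyGrowthOn I (fderiv ℝ (logMaxwellian σ v)) := by
  have hw : PolyGrowthOn I fun p : ℝ × 𝔼 d × 𝔼 d => p.2.2 - v (p.1, p.2.1) :=
    PolyGrowthOn.snd_snd.sub hvg.comp_fst
  refine (hDσ.comp_fst.norm.add
    (hw.norm.mul (hDv.comp_fst.norm.add (.const 1)))).of_norm_le fun t ht q => ?_
  refine (ContinuousLinearMap.opNorm_le_bound _ (by positivity) fun ⟨s, y, η⟩ => ?_).trans
    (le_abs_self _)
  rw [fderiv_logMaxwellian_apply (hσ t ht q.1) (hv t ht q.1)]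
  have hsy : ‖(s, y)‖ ≤ ‖(s, y, η)‖ := max_le_max le_rfl (le_max_left _ _)
  have hη : ‖η‖ ≤ ‖(s, y, η)‖ := (le_max_right _ _).trans (le_max_right _ _)
  calc ‖fderiv ℝ σ (t, q.1) (s, y) + ⟪q.2 - v (t, q.1), fderiv ℝ v (t, q.1) (s, y) - η⟫‖
      ≤ ‖fderiv ℝ σ (t, q.1)‖ * ‖(s, y)‖ +
          ‖q.2 - v (t, q.1)‖ * (‖fderiv ℝ v (t, q.1)‖ * ‖(s, y)‖ + ‖η‖) := by
        refine (norm_add_le _ _).trans (add_le_add (ContinuousLinearMap.le_opNorm _ _) ?_)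
        refine (norm_inner_le_norm _ _).trans ?_
        gcongr
        exact (norm_sub_le _ _).trans (by gcongr; exact ContinuousLinearMap.le_opNorm _ _)
    _ ≤ ‖fderiv ℝ σ (t, q.1)‖ * ‖(s, y, η)‖ + ‖q.2 - v (t, q.1)‖ *
          (‖fderiv ℝ v (t, q.1)‖ * ‖(s, y, η)‖ + ‖(s, y, η)‖) := by gcongr
    _ = _ := by ring

end LogMaxwellian

section MacroscopicSystem

variable {d : ℕ}

theorem gradient_log {V : Type*} [NormedAddCommGroup V] [InnerProductSpace ℝ V] [CompleteSpace V]
    {h : V → ℝ} {x : V} (hh : DifferentiableAt ℝ h x) (hx : h x ≠ 0) :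
    gradient (fun y => Real.log (h y)) x = (h x)⁻¹ • gradient h x := by
  simp only [gradient, (hh.hasFDerivAt.log hx).fderiv, map_smulₛₗ, conj_trivial]

/-- A solution of the macroscopic system `A ∂_t ρ + B ∇·(ρ u) = 0`,
`A ∂_t(ρ u) + B ∇·(ρ u ⊗ u) + B ∇ρ = ρ R` for times in `I`, in the class of positive densities for
which `log ρ`, `∇ log ρ`, `u` and the first derivatives of `u` grow polynomially. -/
structure IsMacroscopicSolution (I : Set ℝ) (A B : ℝ) (ρ : ℝ → 𝔼 d → ℝ) (u R : ℝ → 𝔼 d → 𝔼 d) :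
    Prop where
  contDiffOn_density : ContDiffOn ℝ 1 (fun q : ℝ × 𝔼 d => ρ q.1 q.2) (I ×ˢ Set.univ)
  contDiffOn_velocity : ContDiffOn ℝ 1 (fun q : ℝ × 𝔼 d => u q.1 q.2) (I ×ˢ Set.univ)
  density_pos : ∀ t ∈ I, ∀ x, 0 < ρ t x
  log_density_growth : PolyGrowthOn I fun q : ℝ × 𝔼 d => Real.log (ρ q.1 q.2)
  gradient_log_density_growth :
    PolyGrowthOn I fun q : ℝ × 𝔼 d => gradient (fun y => Real.log (ρ q.1 y)) q.2
  velocity_growth : PolyGrowthOn I fun q : ℝ × 𝔼 d => u q.1 q.2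
  fderiv_velocity_growth : PolyGrowthOn I fun q : ℝ × 𝔼 d => fderiv ℝ (u q.1) q.2
  deriv_velocity_growth : PolyGrowthOn I fun q : ℝ × 𝔼 d => deriv (fun s => u s q.2) q.1
  mass : ∀ t ∈ I, ∀ x,
    A * deriv (fun s => ρ s x) t + B * ediv (fun y => ρ t y • u t y) x = 0
  momentum : ∀ t ∈ I, ∀ x, ∀ i : Fin d,
    A * deriv (fun s => ρ s x * u s x i) t + B * ediv (fun y => (ρ t y * u t y i) • u t y) x +
      B * gradient (ρ t) x i = ρ t x * R t x i

namespace IsMacroscopicSolution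

variable {I : Set ℝ} {A B t : ℝ} {ρ : ℝ → 𝔼 d → ℝ} {u R : ℝ → 𝔼 d → 𝔼 d}

theorem differentiableAt_density (hmac : IsMacroscopicSolution I A B ρ u R) (hI : IsOpen I)
    (ht : t ∈ I) (x : 𝔼 d) : DifferentiableAt ℝ (fun q : ℝ × 𝔼 d => ρ q.1 q.2) (t, x) :=
  (hmac.contDiffOn_density.differentiableOn one_ne_zero).differentiableAt
    ((hI.prod isOpen_univ).mem_nhds ⟨ht, trivial⟩)

theorem differentiableAt_velocity (hmac : IsMacroscopicSolution I A B ρ u R) (hI : IsOpen I)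
    (ht : t ∈ I) (x : 𝔼 d) : DifferentiableAt ℝ (fun q : ℝ × 𝔼 d => u q.1 q.2) (t, x) :=
  (hmac.contDiffOn_velocity.differentiableOn one_ne_zero).differentiableAt
    ((hI.prod isOpen_univ).mem_nhds ⟨ht, trivial⟩)

theorem contDiffOn_log_density (hmac : IsMacroscopicSolution I A B ρ u R) :
    ContDiffOn ℝ 1 (fun q : ℝ × 𝔼 d => Real.log (ρ q.1 q.2)) (I ×ˢ Set.univ) :=
  hmac.contDiffOn_density.log fun q hq => (hmac.density_pos q.1 hq.1 q.2).ne'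

theorem differentiableAt_log_density (hmac : IsMacroscopicSolution I A B ρ u R) (hI : IsOpen I)
    (ht : t ∈ I) (x : 𝔼 d) :
    DifferentiableAt ℝ (fun q : ℝ × 𝔼 d => Real.log (ρ q.1 q.2)) (t, x) :=
  (hmac.differentiableAt_density hI ht x).log (hmac.density_pos t ht x).ne'

theorem fderiv_velocity_slice (hmac : IsMacroscopicSolution I A B ρ u R) (hI : IsOpen I)
    (ht : t ∈ I) (x y : 𝔼 d) :
    fderiv ℝ (fun q : ℝ × 𝔼 d => u q.1 q.2) (t, x) (0, y) = fderiv ℝ (u t) x y :=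
  congrArg (· y) (fderiv_slice_right (hmac.differentiableAt_velocity hI ht x)).symm

theorem fderiv_log_density_slice (hmac : IsMacroscopicSolution I A B ρ u R) (hI : IsOpen I)
    (ht : t ∈ I) (x y : 𝔼 d) :
    fderiv ℝ (fun q : ℝ × 𝔼 d => Real.log (ρ q.1 q.2)) (t, x) (0, y) =
      ⟪gradient (fun y => Real.log (ρ t y)) x, y⟫ := by
  rw [inner_gradient_left]
  exact congrArg (· y) (fderiv_slice_right (hmac.differentiableAt_log_density hI ht x)).symm

theorem log_mass (hmac : IsMacroscopicSolution I A B ρ u R) (hI : IsOpen I) (ht : t ∈ I)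
    (x : 𝔼 d) :
    A * fderiv ℝ (fun q : ℝ × 𝔼 d => Real.log (ρ q.1 q.2)) (t, x) (1, 0) +
      B * (ediv (u t) x + ⟪gradient (fun y => Real.log (ρ t y)) x, u t x⟫) = 0 := by
  have hρ := hmac.differentiableAt_density hI ht x
  have hρ0 := (hmac.density_pos t ht x).ne'
  have hρt : DifferentiableAt ℝ (ρ t) x := differentiableAt_slice_right hρ
  have hut : DifferentiableAt ℝ (u t) x :=
    differentiableAt_slice_right (hmac.differentiableAt_velocity hI ht x)
  have mass := hmac.mass t ht x
  rw [(hasDerivAt_slice hρ).deriv, ediv_smul hρt hut] at mass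
  rw [gradient_log hρt hρ0, inner_smul_left, inner_gradient_left, (hρ.hasFDerivAt.log hρ0).fderiv,
    smul_apply, smul_eq_mul, conj_trivial]
  refine mul_left_cancel₀ hρ0 ?_
  linear_combination mass + (B * fderiv ℝ (ρ t) x (u t x) +
    A * fderiv ℝ (fun q : ℝ × 𝔼 d => ρ q.1 q.2) (t, x) (1, 0)) * mul_inv_cancel₀ hρ0

theorem velocity_momentum (hmac : IsMacroscopicSolution I A B ρ u R) (hI : IsOpen I) (ht : t ∈ I)
    (x : 𝔼 d) :
    A • fderiv ℝ (fun q : ℝ × 𝔼 d => u q.1 q.2) (t, x) (1, 0) + B • fderiv ℝ (u t) x (u t x) +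
      B • gradient (fun y => Real.log (ρ t y)) x = R t x := by
  have hρ0 := (hmac.density_pos t ht x).ne'
  have hρt : DifferentiableAt ℝ (ρ t) x :=
    differentiableAt_slice_right (hmac.differentiableAt_density hI ht x)
  have hut : DifferentiableAt ℝ (u t) x :=
    differentiableAt_slice_right (hmac.differentiableAt_velocity hI ht x)
  have hρ' : HasDerivAt (fun s => ρ s x) _ t :=
    hasDerivAt_slice (hmac.differentiableAt_density hI ht x)
  have hu' : HasDerivAt (fun s => u s x) _ t :=
    hasDerivAt_slice (hmac.differentiableAt_velocity hI ht x)
  ext i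
  have hui' : HasDerivAt (fun s => u s x i) _ t :=
    (EuclideanSpace.proj (𝕜 := ℝ) i).hasFDerivAt.comp_hasDerivAt t hu'
  have mass := hmac.mass t ht x
  have momentum := hmac.momentum t ht x i
  simp_rw [mul_comm (ρ t _) (u t _ i), mul_smul] at momentum
  rw [(hρ'.fun_mul hui').deriv, ediv_coord_smul hut (hρt.fun_smul hut)] at momentum
  rw [hρ'.deriv] at mass
  rw [gradient_log hρt hρ0]
  simp only [PiLp.proj_apply, map_smul, PiLp.smul_apply, smul_eq_mul] at momentum
  simp only [PiLp.smul_apply, smul_eq_mul, PiLp.add_apply]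
  refine mul_left_cancel₀ hρ0 ?_
  linear_combination momentum - u t x i * mass +
    B * gradient (ρ t) x i * mul_inv_cancel₀ hρ0

theorem spacetime_fderiv_velocity_growth (hmac : IsMacroscopicSolution I A B ρ u R)
    (hI : IsOpen I) : PolyGrowthOn I (fderiv ℝ fun q : ℝ × 𝔼 d => u q.1 q.2) := by
  refine .of_partial (hmac.deriv_velocity_growth.of_norm_le fun t ht x => ?_)
    (hmac.fderiv_velocity_growth.of_norm_le fun t ht x => ?_)
  · exact (congrArg norm (hasDerivAt_slice (hmac.differentiableAt_velocity hI ht x)).deriv).ge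
  · exact (congrArg norm (fderiv_slice_right (hmac.differentiableAt_velocity hI ht x))).ge

theorem ediv_velocity_growth (hmac : IsMacroscopicSolution I A B ρ u R) :
    PolyGrowthOn I fun q : ℝ × 𝔼 d => ediv (u q.1) q.2 :=
  (PolyGrowthOn.const (d : ℝ)).of_norm_le_mul hmac.fderiv_velocity_growth fun t _ x => by
    simpa using abs_ediv_le (u t) x

theorem spacetime_fderiv_log_density_growth (hmac : IsMacroscopicSolution I A B ρ u R)
    (hI : IsOpen I) (hA : A ≠ 0) :
    PolyGrowthOn I (fderiv ℝ fun q : ℝ × 𝔼 d => Real.log (ρ q.1 q.2)) := by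
  refine .of_partial (((PolyGrowthOn.const (B / A)).mul (hmac.ediv_velocity_growth.add
    (hmac.gradient_log_density_growth.inner hmac.velocity_growth))).of_norm_le fun t ht x => ?_)
    (hmac.gradient_log_density_growth.of_norm_le fun t ht x => ?_)
  · rw [← norm_neg (B / A * _)]
    refine (congrArg norm ?_).le
    refine mul_left_cancel₀ hA ?_
    field_simp
    linear_combination hmac.log_mass hI ht x
  · rw [← fderiv_slice_right (hmac.differentiableAt_log_density hI ht x), gradient,
      LinearIsometryEquiv.norm_map]

theorem force_growth (hmac : IsMacroscopicSolution I A B ρ u R) (hI : IsOpen I) :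
    PolyGrowthOn I fun q : ℝ × 𝔼 d => R q.1 q.2 :=
  ((((PolyGrowthOn.const A).smul ((hmac.spacetime_fderiv_velocity_growth hI).clm_apply
    (.const (1, 0)))).add ((PolyGrowthOn.const B).smul (hmac.fderiv_velocity_growth.clm_apply
      hmac.velocity_growth))).add ((PolyGrowthOn.const B).smul
        hmac.gradient_log_density_growth)).of_norm_le fun _ ht x =>
    (congrArg norm (hmac.velocity_momentum hI ht x)).ge

theorem continuous_velocity (hmac : IsMacroscopicSolution I A B ρ u R) (ht : t ∈ I) :
    Continuous (u t) :=
  continuous_slice hmac.contDiffOn_velocity.continuousOn ht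

theorem continuous_force (hmac : IsMacroscopicSolution I A B ρ u R) (hI : IsOpen I) (ht : t ∈ I) :
    Continuous (R t) := by
  have hDu := continuous_slice (hmac.contDiffOn_velocity.continuousOn_fderiv_of_isOpen
    (hI.prod isOpen_univ) le_rfl) ht
  have hDut : Continuous (fderiv ℝ (u t)) :=
    (contDiff_slice hmac.contDiffOn_velocity ht).continuous_fderiv one_ne_zero
  have hgrad : Continuous (gradient fun y => Real.log (ρ t y)) :=
    (LinearIsometryEquiv.continuous _).comp
      ((contDiff_slice hmac.contDiffOn_log_density ht).continuous_fderiv one_ne_zero)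
  rw [← funext (hmac.velocity_momentum hI ht)]
  exact (((hDu.clm_apply continuous_const).const_smul A).add
    ((hDut.clm_apply (hmac.continuous_velocity ht)).const_smul B)).add (hgrad.const_smul B)

theorem transport_logMaxwellian (hmac : IsMacroscopicSolution I A B ρ u R) (hI : IsOpen I)
    (ht : t ∈ I) (x ξ : 𝔼 d) :
    fderiv ℝ (logMaxwellian (fun q => Real.log (ρ q.1 q.2)) fun q => u q.1 q.2)
        (t, x, ξ) (A, B • ξ, 0) =
      ⟪ξ - u t x, R t x⟫ +
        B * (⟪ξ - u t x, fderiv ℝ (u t) x (ξ - u t x)⟫ - ediv (u t) x) := by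
  have split : ((A, B • ξ) : ℝ × 𝔼 d) = A • (1, 0) + B • (0, ξ) := by simp
  rw [fderiv_logMaxwellian_apply (hmac.differentiableAt_log_density hI ht x)
      (hmac.differentiableAt_velocity hI ht x), ← hmac.velocity_momentum hI ht x, split]
  simp only [map_add, map_smul, hmac.fderiv_log_density_slice hI ht,
    hmac.fderiv_velocity_slice hI ht, sub_zero, smul_eq_mul, inner_add_right, inner_smul_right,
    map_sub, inner_sub_right, inner_sub_left, real_inner_comm (gradient _ _)]
  linear_combination hmac.log_mass hI ht x

end IsMacroscopicSolution

end MacroscopicSystem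

section VelocitySlices

variable {T X Y Z : Type*} [NormedAddCommGroup T] [NormedSpace ℝ T] [NormedAddCommGroup X]
  [NormedSpace ℝ X] [NormedAddCommGroup Y] [NormedSpace ℝ Y] [NormedAddCommGroup Z]
  [NormedSpace ℝ Z] {h : T × X × Y → Z} {t : T} {x : X} {ξ : Y}

theorem differentiableAt_position_slice (hh : DifferentiableAt ℝ h (t, x, ξ)) :
    DifferentiableAt ℝ (fun y => h (t, y, ξ)) x :=
  DifferentiableAt.comp (f := fun y => (t, y, ξ)) x hh (by fun_prop)

theorem differentiableAt_velocity_slice (hh : DifferentiableAt ℝ h (t, x, ξ)) :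
    DifferentiableAt ℝ (fun ζ => h (t, x, ζ)) ξ :=
  DifferentiableAt.comp (f := fun ζ => (t, x, ζ)) ξ hh (by fun_prop)

theorem fderiv_position_slice (hh : DifferentiableAt ℝ h (t, x, ξ)) (y : X) :
    fderiv ℝ (fun y => h (t, y, ξ)) x y = fderiv ℝ h (t, x, ξ) (0, y, 0) := by
  rw [fderiv_slice_left (p := (x, ξ)) (differentiableAt_slice_right hh), fderiv_slice_right hh]
  rfl

theorem fderiv_velocity_slice (hh : DifferentiableAt ℝ h (t, x, ξ)) (η : Y) :
    fderiv ℝ (fun ζ => h (t, x, ζ)) ξ η = fderiv ℝ h (t, x, ξ) (0, 0, η) := by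
  rw [fderiv_slice_right (p := (x, ξ)) (differentiableAt_slice_right hh), fderiv_slice_right hh]
  rfl

end VelocitySlices

section KineticEquation

variable {d : ℕ}

/-- The drift `ξ - ∇_ξ ψ` of a distribution `f = e^{-ψ}`: its Fokker–Planck flux `∇_ξ f + ξ f` is
`f` times the drift. -/
noncomputable def fokkerPlanckDrift (ψ : ℝ × 𝔼 d × 𝔼 d → ℝ) (p : ℝ × 𝔼 d × 𝔼 d) : 𝔼 d :=
  p.2.2 - gradient (fun ζ => ψ (p.1, p.2.1, ζ)) p.2.2

/-- A solution `f = e^{-ψ}` of the kinetic equation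
`A ∂_t f + B ξ·∇_x f + ∇_ξ·(F f) = κ ∇_ξ·(∇_ξ f + ξ f)` for times in `I`, in the class of
distributions with uniformly bounded moments for which `ψ`, its first derivatives, `F` and `∇_ξ·F`
grow polynomially. -/
structure IsKineticSolution (I : Set ℝ) (A B κ : ℝ) (ψ : ℝ × 𝔼 d × 𝔼 d → ℝ)
    (F : ℝ × 𝔼 d × 𝔼 d → 𝔼 d) : Prop where
  contDiffOn_potential : ContDiffOn ℝ 2 ψ (I ×ˢ Set.univ)
  potential_growth : PolyGrowthOn I ψ
  fderiv_potential_growth : PolyGrowthOn I (fderiv ℝ ψ)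
  moments : UniformMomentsOn I (fun p => Real.exp (-ψ p)) volume
  contDiffOn_force : ContDiffOn ℝ 1 F (I ×ˢ Set.univ)
  force_growth : PolyGrowthOn I F
  ediv_force_growth :
    PolyGrowthOn I fun p : ℝ × 𝔼 d × 𝔼 d => ediv (fun ζ => F (p.1, p.2.1, ζ)) p.2.2
  kinetic : ∀ t ∈ I, ∀ x ξ,
    A * deriv (fun s => Real.exp (-ψ (s, x, ξ))) t +
        B * ⟪ξ, gradient (fun y => Real.exp (-ψ (t, y, ξ))) x⟫ +
        ediv (fun ζ => Real.exp (-ψ (t, x, ζ)) • F (t, x, ζ)) ξ =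
      κ * ediv (fun ζ => gradient (fun ζ' => Real.exp (-ψ (t, x, ζ'))) ζ +
        Real.exp (-ψ (t, x, ζ)) • ζ) ξ

theorem gradient_exp_neg_add_smul {ψ : ℝ × 𝔼 d × 𝔼 d → ℝ} {t : ℝ} {x ξ : 𝔼 d}
    (hψ : DifferentiableAt ℝ ψ (t, x, ξ)) (η : 𝔼 d) :
    gradient (fun ζ => Real.exp (-ψ (t, x, ζ))) ξ + Real.exp (-ψ (t, x, ξ)) • η =
      Real.exp (-ψ (t, x, ξ)) • (fokkerPlanckDrift ψ (t, x, ξ) + (η - ξ)) := by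
  have hexp := (differentiableAt_velocity_slice hψ).hasFDerivAt.fun_neg.exp
  rw [gradient, hexp.fderiv, fokkerPlanckDrift, gradient, map_smul, map_neg]
  module

namespace IsKineticSolution

variable {I : Set ℝ} {A B κ t : ℝ} {ψ : ℝ × 𝔼 d × 𝔼 d → ℝ} {F : ℝ × 𝔼 d × 𝔼 d → 𝔼 d}
  {p : ℝ × 𝔼 d × 𝔼 d}

theorem differentiableAt_potential (hkin : IsKineticSolution I A B κ ψ F) (hI : IsOpen I)
    (hp : p.1 ∈ I) : DifferentiableAt ℝ ψ p :=
  (hkin.contDiffOn_potential.differentiableOn two_ne_zero).differentiableAt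
    ((hI.prod isOpen_univ).mem_nhds ⟨hp, trivial⟩)

theorem differentiableAt_force (hkin : IsKineticSolution I A B κ ψ F) (hI : IsOpen I)
    (hp : p.1 ∈ I) : DifferentiableAt ℝ F p :=
  (hkin.contDiffOn_force.differentiableOn one_ne_zero).differentiableAt
    ((hI.prod isOpen_univ).mem_nhds ⟨hp, trivial⟩)

theorem drift_eq (hkin : IsKineticSolution I A B κ ψ F) (hI : IsOpen I) (hp : p.1 ∈ I) :
    fokkerPlanckDrift ψ p = p.2.2 - (InnerProductSpace.toDual ℝ (𝔼 d)).symm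
      (fderiv ℝ ψ p ∘L ContinuousLinearMap.inr ℝ ℝ (𝔼 d × 𝔼 d) ∘L
        ContinuousLinearMap.inr ℝ (𝔼 d) (𝔼 d)) := by
  rw [fokkerPlanckDrift, gradient]
  congr 2
  ext η
  exact fderiv_velocity_slice (hkin.differentiableAt_potential hI hp) η

theorem contDiffOn_drift (hkin : IsKineticSolution I A B κ ψ F) (hI : IsOpen I) :
    ContDiffOn ℝ 1 (fokkerPlanckDrift ψ) (I ×ˢ Set.univ) := by
  have hDψ : ContDiffOn ℝ 1 (fderiv ℝ ψ) (I ×ˢ Set.univ) :=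
    hkin.contDiffOn_potential.fderiv_of_isOpen (hI.prod isOpen_univ) (by norm_num)
  have hξ : ContDiff ℝ 1 fun p : ℝ × 𝔼 d × 𝔼 d => p.2.2 := by fun_prop
  exact (hξ.contDiffOn.sub ((LinearIsometryEquiv.contDiff _).comp_contDiffOn
    (hDψ.clm_comp contDiffOn_const))).congr fun p hp => hkin.drift_eq hI hp.1

theorem drift_growth (hkin : IsKineticSolution I A B κ ψ F) (hI : IsOpen I) :
    PolyGrowthOn I (fokkerPlanckDrift ψ) := by
  refine PolyGrowthOn.snd_snd.of_norm_le_add hkin.fderiv_potential_growth fun t ht q => ?_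
  rw [hkin.drift_eq hI ht]
  refine (norm_sub_le _ _).trans (add_le_add_right ?_ _)
  rw [LinearIsometryEquiv.norm_map]
  refine ContinuousLinearMap.opNorm_le_bound _ (norm_nonneg _) fun η => ?_
  refine (ContinuousLinearMap.le_opNorm (fderiv ℝ ψ _) (0, 0, η)).trans_eq ?_
  simp only [Prod.norm_mk, norm_zero, norm_nonneg, max_eq_right]

theorem inner_drift (hkin : IsKineticSolution I A B κ ψ F) (hI : IsOpen I) (hp : p.1 ∈ I)
    (η : 𝔼 d) : fderiv ℝ ψ p (0, 0, η) = ⟪p.2.2 - fokkerPlanckDrift ψ p, η⟫ := by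
  rw [fokkerPlanckDrift, sub_sub_cancel, inner_gradient_left]
  exact (fderiv_velocity_slice (hkin.differentiableAt_potential hI hp) η).symm

theorem kinetic_drift (hkin : IsKineticSolution I A B κ ψ F) (hI : IsOpen I) (ht : t ∈ I)
    (x ξ : 𝔼 d) :
    fderiv ℝ (fun p => Real.exp (-ψ p)) (t, x, ξ) (A, B • ξ, 0) +
        ediv (fun ζ => Real.exp (-ψ (t, x, ζ)) • F (t, x, ζ)) ξ =
      κ * ediv (fun ζ => Real.exp (-ψ (t, x, ζ)) • fokkerPlanckDrift ψ (t, x, ζ)) ξ := by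
  have hf : DifferentiableAt ℝ (fun p => Real.exp (-ψ p)) (t, x, ξ) :=
    (hkin.differentiableAt_potential hI ht).neg.exp
  have hflux : (fun ζ => Real.exp (-ψ (t, x, ζ)) • fokkerPlanckDrift ψ (t, x, ζ)) = fun ζ =>
      gradient (fun ζ' => Real.exp (-ψ (t, x, ζ'))) ζ + Real.exp (-ψ (t, x, ζ)) • ζ :=
    funext fun ζ => by
      rw [gradient_exp_neg_add_smul (hkin.differentiableAt_potential hI ht), sub_self, add_zero]
  have split : ((A, B • ξ, 0) : ℝ × 𝔼 d × 𝔼 d) = A • (1, 0) + B • (0, ξ, 0) := by simp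
  have hdt : deriv (fun s => Real.exp (-ψ (s, x, ξ))) t = _ := (hasDerivAt_slice hf).deriv
  have kinetic := hkin.kinetic t ht x ξ
  rw [← hflux, hdt, real_inner_comm, inner_gradient_left, fderiv_position_slice hf] at kinetic
  rw [split, map_add, map_smul, map_smul, smul_eq_mul, smul_eq_mul, kinetic]

end IsKineticSolution

end KineticEquation

section EntropyProduction

variable {d : ℕ}

/-- The velocity component `F - κ (ξ - ∇_ξ ψ)` of the flow that transports `f = e^{-ψ}`: with it,
the kinetic equation is a continuity equation. -/
noncomputable def velocityFlow (κ : ℝ) (ψ : ℝ × 𝔼 d × 𝔼 d → ℝ) (F : ℝ × 𝔼 d × 𝔼 d → 𝔼 d)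
    (p : ℝ × 𝔼 d × 𝔼 d) : 𝔼 d :=
  F p - κ • fokkerPlanckDrift ψ p

namespace IsKineticSolution

variable {I : Set ℝ} {A B κ t : ℝ} {ψ g : ℝ × 𝔼 d × 𝔼 d → ℝ} {F : ℝ × 𝔼 d × 𝔼 d → 𝔼 d}
  {p : ℝ × 𝔼 d × 𝔼 d}

theorem contDiffOn_density (hkin : IsKineticSolution I A B κ ψ F) :
    ContDiffOn ℝ 1 (fun p => Real.exp (-ψ p)) (I ×ˢ Set.univ) :=
  (hkin.contDiffOn_potential.of_le (by norm_num)).neg.exp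

theorem differentiableAt_density (hkin : IsKineticSolution I A B κ ψ F) (hI : IsOpen I)
    (hp : p.1 ∈ I) : DifferentiableAt ℝ (fun p => Real.exp (-ψ p)) p :=
  (hkin.differentiableAt_potential hI hp).fun_neg.exp

theorem fderiv_density (hkin : IsKineticSolution I A B κ ψ F) (hI : IsOpen I) (hp : p.1 ∈ I) :
    fderiv ℝ (fun p => Real.exp (-ψ p)) p = Real.exp (-ψ p) • -fderiv ℝ ψ p :=
  (hkin.differentiableAt_potential hI hp).hasFDerivAt.fun_neg.exp.fderiv

theorem continuous_fderiv_potential (hkin : IsKineticSolution I A B κ ψ F) (hI : IsOpen I)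
    (ht : t ∈ I) : Continuous fun q => fderiv ℝ ψ (t, q) :=
  continuous_slice (hkin.contDiffOn_potential.continuousOn_fderiv_of_isOpen
    (hI.prod isOpen_univ) (by norm_num)) ht

theorem contDiffOn_velocityFlow (hkin : IsKineticSolution I A B κ ψ F) (hI : IsOpen I) :
    ContDiffOn ℝ 1 (velocityFlow κ ψ F) (I ×ˢ Set.univ) :=
  hkin.contDiffOn_force.sub ((hkin.contDiffOn_drift hI).const_smul κ)

theorem velocityFlow_growth (hkin : IsKineticSolution I A B κ ψ F) (hI : IsOpen I) :
    PolyGrowthOn I (velocityFlow κ ψ F) :=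
  hkin.force_growth.sub ((PolyGrowthOn.const κ).smul (hkin.drift_growth hI))

theorem differentiableAt_drift (hkin : IsKineticSolution I A B κ ψ F) (hI : IsOpen I)
    (hp : p.1 ∈ I) : DifferentiableAt ℝ (fokkerPlanckDrift ψ) p :=
  ((hkin.contDiffOn_drift hI).differentiableOn one_ne_zero).differentiableAt
    ((hI.prod isOpen_univ).mem_nhds ⟨hp, trivial⟩)

theorem continuity_equation (hkin : IsKineticSolution I A B κ ψ F) (hI : IsOpen I) (ht : t ∈ I)
    (x ξ : 𝔼 d) :
    fderiv ℝ (fun p => Real.exp (-ψ p)) (t, x, ξ) (A, B • ξ, 0) +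
      ediv (fun ζ => Real.exp (-ψ (t, x, ζ)) • velocityFlow κ ψ F (t, x, ζ)) ξ = 0 := by
  have hf := differentiableAt_velocity_slice
    (hkin.differentiableAt_density hI (p := (t, x, ξ)) ht)
  have hF := differentiableAt_velocity_slice (hkin.differentiableAt_force hI (p := (t, x, ξ)) ht)
  have ha := differentiableAt_velocity_slice (hkin.differentiableAt_drift hI (p := (t, x, ξ)) ht)
  have hκ : DifferentiableAt ℝ (fun _ : 𝔼 d => κ) ξ := differentiableAt_const κ
  simp only [velocityFlow, smul_sub, smul_comm _ κ]
  rw [ediv_sub (hf.fun_smul hF) (hκ.fun_smul (hf.fun_smul ha)), ediv_smul hκ (hf.fun_smul ha),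
    ← hkin.kinetic_drift hI ht, fderiv_fun_const, Pi.zero_apply, zero_apply]
  ring

theorem ediv_density_mul_flow (hkin : IsKineticSolution I A B κ ψ F) (hI : IsOpen I) (ht : t ∈ I)
    (x ξ : 𝔼 d) (hg : DifferentiableAt ℝ g (t, x, ξ)) :
    ediv (fun y => (Real.exp (-ψ (t, y, ξ)) * g (t, y, ξ)) • B • ξ) x +
        ediv (fun ζ => g (t, x, ζ) • Real.exp (-ψ (t, x, ζ)) • velocityFlow κ ψ F (t, x, ζ)) ξ =
      Real.exp (-ψ (t, x, ξ)) * fderiv ℝ g (t, x, ξ) (A, B • ξ, velocityFlow κ ψ F (t, x, ξ)) -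
        A * fderiv ℝ (fun p => Real.exp (-ψ p) * g p) (t, x, ξ) (1, 0) := by
  have hf := hkin.differentiableAt_density hI (p := (t, x, ξ)) ht
  have hV : DifferentiableAt ℝ (velocityFlow κ ψ F) (t, x, ξ) :=
    (hkin.differentiableAt_force hI ht).sub ((hkin.differentiableAt_drift hI ht).const_smul κ)
  have hfg : DifferentiableAt ℝ (fun p => Real.exp (-ψ p) * g p) (t, x, ξ) := hf.fun_mul hg
  have hconst : ediv (fun _ : 𝔼 d => B • ξ) x = 0 := by simp [ediv]
  have split : ((A, B • ξ, velocityFlow κ ψ F (t, x, ξ)) : ℝ × 𝔼 d × 𝔼 d) =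
      A • (1, 0) + (0, B • ξ, 0) + (0, 0, velocityFlow κ ψ F (t, x, ξ)) := by simp
  have split₀ : ((A, B • ξ, 0) : ℝ × 𝔼 d × 𝔼 d) = A • (1, 0) + (0, B • ξ, 0) := by simp
  have continuity := hkin.continuity_equation hI ht x ξ
  rw [ediv_smul (differentiableAt_position_slice hfg) (differentiableAt_const _), hconst,
    fderiv_position_slice hfg,
    ediv_smul (differentiableAt_velocity_slice hg) ((differentiableAt_velocity_slice hf).fun_smul
      (differentiableAt_velocity_slice hV)), fderiv_velocity_slice hg,
    fderiv_fun_mul hf hg, split]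
  simp only [split₀, map_add, map_smul, smul_eq_mul, add_apply, smul_apply] at continuity ⊢
  have smul_right : ((0, 0, Real.exp (-ψ (t, x, ξ)) • velocityFlow κ ψ F (t, x, ξ)) :
      ℝ × 𝔼 d × 𝔼 d) = Real.exp (-ψ (t, x, ξ)) • (0, 0, velocityFlow κ ψ F (t, x, ξ)) := by simp
  rw [smul_right, map_smul, smul_eq_mul]
  linear_combination g (t, x, ξ) * continuity

theorem integrable_density_smul {G : Type*} [NormedAddCommGroup G] [NormedSpace ℝ G]
    {h : ℝ × 𝔼 d × 𝔼 d → G}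
    (hkin : IsKineticSolution I A B κ ψ F) (ht : t ∈ I) (hh : PolyGrowthOn I h)
    (hhc : Continuous fun q => h (t, q)) :
    Integrable fun q => Real.exp (-ψ (t, q)) • h (t, q) :=
  hkin.moments.integrable_smul hh ht hhc.aestronglyMeasurable

theorem integrable_density_mul_transport {V : ℝ × 𝔼 d × 𝔼 d → 𝔼 d}
    (hkin : IsKineticSolution I A B κ ψ F) (hI : IsOpen I) (ht : t ∈ I)
    (hg : ContDiffOn ℝ 1 g (I ×ˢ Set.univ)) (hDg : PolyGrowthOn I (fderiv ℝ g))
    (hV : ContDiffOn ℝ 1 V (I ×ˢ Set.univ)) (hVg : PolyGrowthOn I V) :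
    Integrable fun q : 𝔼 d × 𝔼 d =>
      Real.exp (-ψ (t, q)) * fderiv ℝ g (t, q) (A, B • q.2, V (t, q)) := by
  have hDgt := continuous_slice (hg.continuousOn_fderiv_of_isOpen (hI.prod isOpen_univ) le_rfl) ht
  have hVt := continuous_slice hV.continuousOn ht
  have hξ : Continuous fun q : 𝔼 d × 𝔼 d => B • q.2 := by fun_prop
  exact hkin.integrable_density_smul (h := fun p => fderiv ℝ g p (A, B • p.2.2, V p)) ht
    (hDg.clm_apply ((PolyGrowthOn.const A).prodMk
      (((PolyGrowthOn.const B).smul .snd_snd).prodMk hVg)))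
    (hDgt.clm_apply (continuous_const.prodMk (hξ.prodMk hVt)))

theorem integrable_fderiv_density_mul (hkin : IsKineticSolution I A B κ ψ F) (hI : IsOpen I)
    (ht : t ∈ I) (hg : ContDiffOn ℝ 1 g (I ×ˢ Set.univ)) (hgg : PolyGrowthOn I g)
    (hDg : PolyGrowthOn I (fderiv ℝ g)) (v : ℝ × 𝔼 d × 𝔼 d) :
    Integrable fun q => fderiv ℝ (fun p => Real.exp (-ψ p) * g p) (t, q) v := by
  have hslab : IsOpen (I ×ˢ (Set.univ : Set (𝔼 d × 𝔼 d))) := hI.prod isOpen_univ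
  have hDgt := continuous_slice (hg.continuousOn_fderiv_of_isOpen hslab le_rfl) ht
  have hlog := hkin.integrable_density_smul ht
    ((hDg.sub (hgg.smul hkin.fderiv_potential_growth)).clm_apply (.const v))
    ((hDgt.sub ((continuous_slice hg.continuousOn ht).smul
      (hkin.continuous_fderiv_potential hI ht))).clm_apply continuous_const)
  refine hlog.congr (.of_forall fun q => ?_)
  beta_reduce
  rw [fderiv_fun_mul (hkin.differentiableAt_density hI ht)
      ((hg.differentiableOn one_ne_zero).differentiableAt (hslab.mem_nhds ⟨ht, trivial⟩)),
    hkin.fderiv_density hI ht]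
  simp only [add_apply, sub_apply, neg_apply, smul_apply, smul_eq_mul]
  ring

theorem mul_integral_fderiv_density_mul (hkin : IsKineticSolution I A B κ ψ F) (hI : IsOpen I)
    (ht : t ∈ I) (hg : ContDiffOn ℝ 1 g (I ×ˢ Set.univ)) (hgg : PolyGrowthOn I g)
    (hDg : PolyGrowthOn I (fderiv ℝ g)) :
    A * ∫ q, fderiv ℝ (fun p => Real.exp (-ψ p) * g p) (t, q) (1, 0) =
      ∫ q : 𝔼 d × 𝔼 d, Real.exp (-ψ (t, q)) *
        fderiv ℝ g (t, q) (A, B • q.2, velocityFlow κ ψ F (t, q)) := by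
  have hf := contDiff_slice hkin.contDiffOn_density ht
  have hgt := contDiff_slice hg ht
  have hV := contDiff_slice (hkin.contDiffOn_velocityFlow hI) ht
  have hXi := hkin.integrable_density_smul ht
    (hgg.smul ((PolyGrowthOn.const B).smul .snd_snd))
    (hgt.continuous.smul (continuous_snd.const_smul B))
  have hYi := hkin.integrable_density_smul ht (hgg.smul (hkin.velocityFlow_growth hI))
    (hgt.continuous.smul hV.continuous)
  have htransport := hkin.integrable_density_mul_transport hI ht hg hDg
    (hkin.contDiffOn_velocityFlow hI) (hkin.velocityFlow_growth hI)
  have htime := (hkin.integrable_fderiv_density_mul hI ht hg hgg hDg (1, 0)).const_mul A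
  have balance (q : 𝔼 d × 𝔼 d) := hkin.ediv_density_mul_flow hI ht q.1 q.2
    ((hg.differentiableOn one_ne_zero).differentiableAt
      ((hI.prod isOpen_univ).mem_nhds ⟨ht, trivial⟩))
  have total := integral_ediv_add_ediv_eq_zero
    (X := fun q => (Real.exp (-ψ (t, q)) * g (t, q)) • B • q.2)
    (Y := fun q => g (t, q) • Real.exp (-ψ (t, q)) • velocityFlow κ ψ F (t, q))
    ((hf.mul hgt).smul (contDiff_snd.const_smul B)) (hgt.smul (hf.smul hV))
    (by simpa only [mul_smul] using hXi)
    (by simpa only [smul_comm (g _)] using hYi)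
    ((htransport.sub htime).congr (.of_forall fun q => (balance q).symm))
  simp_rw [balance] at total
  rw [integral_sub htransport htime, integral_const_mul, sub_eq_zero] at total
  exact total.symm

theorem ediv_density_smul_drift (hkin : IsKineticSolution I A B κ ψ F) (hI : IsOpen I)
    (ht : t ∈ I) (x ξ : 𝔼 d) :
    ediv (fun ζ => κ • Real.exp (-ψ (t, x, ζ)) • fokkerPlanckDrift ψ (t, x, ζ)) ξ =
      Real.exp (-ψ (t, x, ξ)) *
        (ediv (fun ζ => F (t, x, ζ)) ξ - fderiv ℝ ψ (t, x, ξ) (A, B • ξ, F (t, x, ξ))) := by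
  have hf := differentiableAt_velocity_slice
    (hkin.differentiableAt_density hI (p := (t, x, ξ)) ht)
  have hF := differentiableAt_velocity_slice (hkin.differentiableAt_force hI (p := (t, x, ξ)) ht)
  have ha := differentiableAt_velocity_slice (hkin.differentiableAt_drift hI (p := (t, x, ξ)) ht)
  have split : ((A, B • ξ, F (t, x, ξ)) : ℝ × 𝔼 d × 𝔼 d) =
      (A, B • ξ, 0) + (0, 0, F (t, x, ξ)) := by simp
  rw [ediv_smul (differentiableAt_const κ) (hf.fun_smul ha), fderiv_fun_const, Pi.zero_apply,
    zero_apply, add_zero, ← hkin.kinetic_drift hI ht, ediv_smul hf hF,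
    fderiv_velocity_slice (hkin.differentiableAt_density hI ht), hkin.fderiv_density hI ht, split,
    map_add]
  simp only [smul_apply, neg_apply, smul_eq_mul]
  ring

theorem integrable_density_mul_ediv_force (hkin : IsKineticSolution I A B κ ψ F) (ht : t ∈ I) :
    Integrable fun q : 𝔼 d × 𝔼 d =>
      Real.exp (-ψ (t, q)) * ediv (fun ζ => F (t, q.1, ζ)) q.2 :=
  hkin.integrable_density_smul ht hkin.ediv_force_growth
    (continuous_ediv_slice (contDiff_slice hkin.contDiffOn_force ht))

theorem integral_density_mul_fderiv_potential (hkin : IsKineticSolution I A B κ ψ F)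
    (hI : IsOpen I) (ht : t ∈ I) :
    ∫ q : 𝔼 d × 𝔼 d, Real.exp (-ψ (t, q)) * fderiv ℝ ψ (t, q) (A, B • q.2, F (t, q)) =
      ∫ q : 𝔼 d × 𝔼 d, Real.exp (-ψ (t, q)) * ediv (fun ζ => F (t, q.1, ζ)) q.2 := by
  have hf := contDiff_slice hkin.contDiffOn_density ht
  have ha := contDiff_slice (hkin.contDiffOn_drift hI) ht
  have htransport := hkin.integrable_density_mul_transport hI ht
    (hkin.contDiffOn_potential.of_le (by norm_num)) hkin.fderiv_potential_growth
    hkin.contDiffOn_force hkin.force_growth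
  have hediv := hkin.integrable_density_mul_ediv_force ht
  have balance (q : 𝔼 d × 𝔼 d) : ediv (fun _ : 𝔼 d => (0 : 𝔼 d)) q.1 +
      ediv (fun ζ => κ • Real.exp (-ψ (t, q.1, ζ)) • fokkerPlanckDrift ψ (t, q.1, ζ)) q.2 =
      Real.exp (-ψ (t, q)) * ediv (fun ζ => F (t, q.1, ζ)) q.2 -
        Real.exp (-ψ (t, q)) * fderiv ℝ ψ (t, q) (A, B • q.2, F (t, q)) := by
    rw [hkin.ediv_density_smul_drift hI ht, mul_sub, add_eq_right]
    simp [ediv]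
  have total := integral_ediv_add_ediv_eq_zero (X := fun _ => 0)
    (Y := fun q => κ • Real.exp (-ψ (t, q)) • fokkerPlanckDrift ψ (t, q))
    contDiff_const ((hf.smul ha).const_smul κ) (integrable_zero _ _ _)
    ((hkin.integrable_density_smul ht (hkin.drift_growth hI) ha.continuous).smul κ)
    ((hediv.sub htransport).congr (.of_forall fun q => (balance q).symm))
  simp_rw [balance] at total
  rw [integral_sub hediv htransport, sub_eq_zero] at total
  exact total.symm

end IsKineticSolution

end EntropyProduction

section RelativeEntropy

variable {d : ℕ}

namespace IsKineticSolution

variable {I : Set ℝ} {A B κ t : ℝ} {ψ L : ℝ × 𝔼 d × 𝔼 d → ℝ} {F : ℝ × 𝔼 d × 𝔼 d → 𝔼 d}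

theorem fderiv_neg_potential_sub (hkin : IsKineticSolution I A B κ ψ F) (hI : IsOpen I)
    {p : ℝ × 𝔼 d × 𝔼 d} (hp : p.1 ∈ I) (hL : ContDiffOn ℝ 1 L (I ×ˢ Set.univ)) :
    fderiv ℝ (fun p => -ψ p - L p) p = -fderiv ℝ ψ p - fderiv ℝ L p := by
  have hψ := (hkin.differentiableAt_potential hI hp).hasFDerivAt
  have hLp := (hL.differentiableOn one_ne_zero).differentiableAt
    ((hI.prod isOpen_univ).mem_nhds ⟨hp, trivial⟩)
  exact (hψ.fun_neg.fun_sub hLp.hasFDerivAt).fderiv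

theorem fderiv_neg_potential_sub_growth (hkin : IsKineticSolution I A B κ ψ F) (hI : IsOpen I)
    (hL : ContDiffOn ℝ 1 L (I ×ˢ Set.univ)) (hDL : PolyGrowthOn I (fderiv ℝ L)) :
    PolyGrowthOn I (fderiv ℝ fun p => -ψ p - L p) :=
  (hkin.fderiv_potential_growth.neg.sub hDL).of_norm_le fun t ht q =>
    (congrArg norm (hkin.fderiv_neg_potential_sub hI (p := (t, q)) ht hL)).le

theorem hasDerivAt_integral_density_mul (hkin : IsKineticSolution I A B κ ψ F) (hI : IsOpen I)
    (ht : t ∈ I) (hL : ContDiffOn ℝ 1 L (I ×ˢ Set.univ)) (hLg : PolyGrowthOn I L)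
    (hDL : PolyGrowthOn I (fderiv ℝ L)) :
    HasDerivAt (fun s => ∫ q, Real.exp (-ψ (s, q)) * (-ψ (s, q) - L (s, q)))
      (∫ q, fderiv ℝ (fun p => Real.exp (-ψ p) * (-ψ p - L p)) (t, q) (1, 0)) t := by
  refine hkin.moments.hasDerivAt_integral_mul hI (fun p => (Real.exp_pos _).le)
    hkin.contDiffOn_density ((hkin.contDiffOn_potential.of_le (by norm_num)).neg.sub hL)
    hkin.fderiv_potential_growth (fun t ht q => ?_) (hkin.potential_growth.neg.sub hLg)
    (hkin.fderiv_neg_potential_sub_growth hI hL hDL) ht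
  rw [hkin.fderiv_density hI ht, norm_smul, norm_neg, Real.norm_of_nonneg (Real.exp_pos _).le]

theorem mul_integral_fderiv_density_mul_sub (hkin : IsKineticSolution I A B κ ψ F)
    (hI : IsOpen I) (ht : t ∈ I) (hL : ContDiffOn ℝ 1 L (I ×ˢ Set.univ))
    (hLg : PolyGrowthOn I L) (hDL : PolyGrowthOn I (fderiv ℝ L)) :
    A * ∫ q, fderiv ℝ (fun p => Real.exp (-ψ p) * (-ψ p - L p)) (t, q) (1, 0) =
      (∫ q : 𝔼 d × 𝔼 d, Real.exp (-ψ (t, q)) *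
        (κ * ⟪q.2 - fokkerPlanckDrift ψ (t, q), fokkerPlanckDrift ψ (t, q)⟫ -
          fderiv ℝ L (t, q) (A, B • q.2, velocityFlow κ ψ F (t, q)))) -
        ∫ q : 𝔼 d × 𝔼 d, ediv (fun ζ => F (t, q.1, ζ)) q.2 * Real.exp (-ψ (t, q)) := by
  have hψ : ContDiffOn ℝ 1 ψ (I ×ˢ Set.univ) := hkin.contDiffOn_potential.of_le (by norm_num)
  have hg : ContDiffOn ℝ 1 (fun p => -ψ p - L p) (I ×ˢ Set.univ) := hψ.neg.sub hL
  have hDg := hkin.fderiv_neg_potential_sub_growth hI hL hDL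
  have htotal := hkin.integrable_density_mul_transport hI ht hg hDg
    (hkin.contDiffOn_velocityFlow hI) (hkin.velocityFlow_growth hI)
  have hforce := hkin.integrable_density_mul_transport hI ht hψ hkin.fderiv_potential_growth
    hkin.contDiffOn_force hkin.force_growth
  have split (q : 𝔼 d × 𝔼 d) : ((A, B • q.2, F (t, q)) : ℝ × 𝔼 d × 𝔼 d) =
      (A, B • q.2, velocityFlow κ ψ F (t, q)) + κ • (0, 0, fokkerPlanckDrift ψ (t, q)) := by
    simp [velocityFlow]
  rw [hkin.mul_integral_fderiv_density_mul hI ht hg (hkin.potential_growth.neg.sub hLg) hDg]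
  simp_rw [mul_comm (ediv _ _)]
  rw [← hkin.integral_density_mul_fderiv_potential hI ht, eq_sub_iff_add_eq,
    ← integral_add htotal hforce]
  congr with q
  rw [split, map_add, map_smul, hkin.inner_drift hI ht,
    hkin.fderiv_neg_potential_sub hI ht hL, sub_apply, neg_apply, smul_eq_mul]
  ring

end IsKineticSolution

end RelativeEntropy

section MacroscopicVelocity

theorem integral_gradient_eq_zero {V : Type*} [NormedAddCommGroup V] [InnerProductSpace ℝ V]
    [FiniteDimensional ℝ V] [MeasurableSpace V] [BorelSpace V] {μ : Measure V}
    [μ.IsAddHaarMeasure] {h : V → ℝ} (hh : Differentiable ℝ h) (hi : Integrable h μ)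
    (hgrad : Integrable (gradient h) μ) : ∫ ξ, gradient h ξ ∂μ = 0 := by
  refine ext_inner_left ℝ fun v => ?_
  have apply_eq ξ : ⟪v, gradient h ξ⟫ = 1 * fderiv ℝ h ξ v := by
    rw [real_inner_comm, inner_gradient_left, one_mul]
  have hDh : Integrable (fun ξ => 1 * fderiv ℝ h ξ v) μ := by
    simp_rw [← apply_eq]
    exact hgrad.const_inner v
  rw [← integral_inner hgrad, inner_zero_right]
  simp_rw [apply_eq]
  rw [integral_mul_fderiv_eq_neg_fderiv_mul_of_integrable (by simp) hDh (by simpa using hi)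
    (fun _ _ => differentiableAt_const _) fun ξ _ => hh ξ]
  simp

variable {d : ℕ}

namespace IsKineticSolution

variable {I : Set ℝ} {A B κ t : ℝ} {ψ : ℝ × 𝔼 d × 𝔼 d → ℝ} {F : ℝ × 𝔼 d × 𝔼 d → 𝔼 d}

theorem integrable_density_smul_drift (hkin : IsKineticSolution I A B κ ψ F) (hI : IsOpen I)
    (ht : t ∈ I) : Integrable fun q => Real.exp (-ψ (t, q)) • fokkerPlanckDrift ψ (t, q) :=
  hkin.integrable_density_smul ht (hkin.drift_growth hI)
    (continuous_slice (hkin.contDiffOn_drift hI).continuousOn ht)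

theorem weightedMean_drift_ae_eq (hkin : IsKineticSolution I A B κ ψ F) (hI : IsOpen I)
    (ht : t ∈ I) : ∀ᵐ x : 𝔼 d,
      weightedMean volume (fun ξ => Real.exp (-ψ (t, x, ξ)))
          (fun ξ => fokkerPlanckDrift ψ (t, x, ξ)) =
        weightedMean volume (fun ξ => Real.exp (-ψ (t, x, ξ))) fun ξ => ξ := by
  have hf := hkin.moments.integrable ht
  have hfξ := hkin.integrable_density_smul ht .snd_snd continuous_snd
  have hfa := hkin.integrable_density_smul_drift hI ht
  filter_upwards [hf.prod_right_ae, hfξ.prod_right_ae, hfa.prod_right_ae] with x hx hxξ hxa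
  have hgrad : gradient (fun ξ => Real.exp (-ψ (t, x, ξ))) = fun ξ =>
      Real.exp (-ψ (t, x, ξ)) • fokkerPlanckDrift ψ (t, x, ξ) - Real.exp (-ψ (t, x, ξ)) • ξ := by
    funext ξ
    rw [eq_sub_iff_add_eq, gradient_exp_neg_add_smul (hkin.differentiableAt_potential hI ht),
      sub_self, add_zero]
  have hzero : ∫ ξ, gradient (fun ξ => Real.exp (-ψ (t, x, ξ))) ξ = 0 :=
    integral_gradient_eq_zero
      (fun ξ => differentiableAt_velocity_slice (hkin.differentiableAt_density hI ht)) hx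
      (by rw [hgrad]; exact hxa.sub hxξ)
  rw [hgrad, integral_sub hxa hxξ, sub_eq_zero] at hzero
  rw [weightedMean, weightedMean, hzero]

theorem integral_density_mul_inner_drift (hkin : IsKineticSolution I A B κ ψ F) (hI : IsOpen I)
    (ht : t ∈ I) {v : 𝔼 d → 𝔼 d}
    (hv : Integrable fun q : 𝔼 d × 𝔼 d => Real.exp (-ψ (t, q)) *
      ⟪fokkerPlanckDrift ψ (t, q), fokkerPlanckDrift ψ (t, q) - v q.1⟫) :
    ∫ q : 𝔼 d × 𝔼 d, Real.exp (-ψ (t, q)) *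
        ⟪fokkerPlanckDrift ψ (t, q), fokkerPlanckDrift ψ (t, q) - v q.1⟫ =
      (∫ q : 𝔼 d × 𝔼 d, Real.exp (-ψ (t, q)) * ‖fokkerPlanckDrift ψ (t, q) -
        weightedMean volume (fun ξ => Real.exp (-ψ (t, q.1, ξ))) fun ξ => ξ‖ ^ 2) +
      ∫ x, (∫ ξ, Real.exp (-ψ (t, x, ξ))) *
        ⟪weightedMean volume (fun ξ => Real.exp (-ψ (t, x, ξ))) fun ξ => ξ,
          (weightedMean volume (fun ξ => Real.exp (-ψ (t, x, ξ))) fun ξ => ξ) - v x⟫ := by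
  have ha := continuous_slice (hkin.contDiffOn_drift hI).continuousOn ht
  have hmean := hkin.weightedMean_drift_ae_eq hI ht
  have hfaa : Integrable fun q => Real.exp (-ψ (t, q)) * ‖fokkerPlanckDrift ψ (t, q)‖ ^ 2 := by
    simpa only [sq, smul_eq_mul] using hkin.integrable_density_smul ht
      ((hkin.drift_growth hI).norm.mul (hkin.drift_growth hI).norm) (ha.norm.mul ha.norm)
  have variance := integral_mul_norm_sub_weightedMean_sq_prod (μ := volume) (ν := volume)
    (hkin.moments.integrable ht) (fun q => (Real.exp_pos _).le) ha.aestronglyMeasurable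
    (hkin.integrable_density_smul_drift hI ht) hfaa hv
  have hdrag : ∫ x, (∫ ξ, Real.exp (-ψ (t, x, ξ))) *
      ⟪weightedMean volume (fun ξ => Real.exp (-ψ (t, x, ξ)))
          (fun ξ => fokkerPlanckDrift ψ (t, x, ξ)),
        weightedMean volume (fun ξ => Real.exp (-ψ (t, x, ξ)))
          (fun ξ => fokkerPlanckDrift ψ (t, x, ξ)) - v x⟫ = _ :=
    integral_congr_ae (hmean.mono fun x hx => by beta_reduce; rw [hx])
  have hdiss : ∫ q : 𝔼 d × 𝔼 d, Real.exp (-ψ (t, q)) * ‖fokkerPlanckDrift ψ (t, q) -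
      weightedMean volume (fun ξ => Real.exp (-ψ (t, q.1, ξ)))
        (fun ξ => fokkerPlanckDrift ψ (t, q.1, ξ))‖ ^ 2 = _ :=
    integral_congr_ae ((Measure.quasiMeasurePreserving_fst.ae hmean).mono fun q hq => by
      beta_reduce; rw [hq])
  rw [← hdiss, ← hdrag]
  exact sub_eq_iff_eq_add.1 variance.symm

end IsKineticSolution

end MacroscopicVelocity

section MaxwellianEntropy

variable {d : ℕ}

namespace IsMacroscopicSolution

variable {I : Set ℝ} {A B κ t : ℝ} {ρ : ℝ → 𝔼 d → ℝ} {u R : ℝ → 𝔼 d → 𝔼 d}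
  {ψ : ℝ × 𝔼 d × 𝔼 d → ℝ} {F : ℝ × 𝔼 d × 𝔼 d → 𝔼 d}

theorem contDiffOn_logMaxwellian (hmac : IsMacroscopicSolution I A B ρ u R) :
    ContDiffOn ℝ 1 (logMaxwellian (fun q => Real.log (ρ q.1 q.2)) fun q => u q.1 q.2)
      (I ×ˢ Set.univ) :=
  _root_.contDiffOn_logMaxwellian hmac.contDiffOn_log_density hmac.contDiffOn_velocity

theorem logMaxwellian_growth (hmac : IsMacroscopicSolution I A B ρ u R) :
    PolyGrowthOn I (logMaxwellian (fun q => Real.log (ρ q.1 q.2)) fun q => u q.1 q.2) :=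
  polyGrowthOn_logMaxwellian hmac.log_density_growth hmac.velocity_growth

theorem fderiv_logMaxwellian_growth (hmac : IsMacroscopicSolution I A B ρ u R) (hI : IsOpen I)
    (hA : A ≠ 0) :
    PolyGrowthOn I
      (fderiv ℝ (logMaxwellian (fun q => Real.log (ρ q.1 q.2)) fun q => u q.1 q.2)) :=
  polyGrowthOn_fderiv_logMaxwellian (fun _ ht x => hmac.differentiableAt_log_density hI ht x)
    (fun _ ht x => hmac.differentiableAt_velocity hI ht x) hmac.velocity_growth
    (hmac.spacetime_fderiv_log_density_growth hI hA) (hmac.spacetime_fderiv_velocity_growth hI)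

theorem inner_drift_sub_transport_logMaxwellian (hmac : IsMacroscopicSolution I A B ρ u R)
    (hI : IsOpen I) (ht : t ∈ I) (x ξ : 𝔼 d) :
    κ * ⟪ξ - fokkerPlanckDrift ψ (t, x, ξ), fokkerPlanckDrift ψ (t, x, ξ)⟫ -
        fderiv ℝ (logMaxwellian (fun q => Real.log (ρ q.1 q.2)) fun q => u q.1 q.2) (t, x, ξ)
          (A, B • ξ, velocityFlow κ ψ F (t, x, ξ)) =
      -κ * ⟪fokkerPlanckDrift ψ (t, x, ξ), fokkerPlanckDrift ψ (t, x, ξ) - u t x⟫ -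
        B * (⟪u t x - ξ, fderiv ℝ (u t) x (u t x - ξ)⟫ - ediv (u t) x) -
        ⟪u t x - ξ, F (t, x, ξ) - R t x⟫ := by
  have split : ((A, B • ξ, velocityFlow κ ψ F (t, x, ξ)) : ℝ × 𝔼 d × 𝔼 d) =
      (A, B • ξ, 0) + (0, 0, velocityFlow κ ψ F (t, x, ξ)) := by simp
  rw [split, map_add, hmac.transport_logMaxwellian hI ht,
    fderiv_logMaxwellian_apply (hmac.differentiableAt_log_density hI ht x)
      (hmac.differentiableAt_velocity hI ht x), ← neg_sub ξ (u t x), velocityFlow,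
    real_inner_comm (fokkerPlanckDrift ψ _ - _)]
  simp only [Prod.mk_zero_zero, map_zero, map_neg, zero_add, zero_sub, inner_neg_left,
    inner_neg_right, inner_sub_left, inner_sub_right, inner_smul_right]
  ring

end IsMacroscopicSolution

namespace IsKineticSolution

variable {I : Set ℝ} {A B κ t : ℝ} {ρ : ℝ → 𝔼 d → ℝ} {u R : ℝ → 𝔼 d → 𝔼 d}
  {ψ : ℝ × 𝔼 d × 𝔼 d → ℝ} {F : ℝ × 𝔼 d × 𝔼 d → 𝔼 d}

theorem integrable_density_mul_inner_drift (hkin : IsKineticSolution I A B κ ψ F)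
    (hmac : IsMacroscopicSolution I A B ρ u R) (hI : IsOpen I) (ht : t ∈ I) :
    Integrable fun q : 𝔼 d × 𝔼 d => Real.exp (-ψ (t, q)) *
      ⟪fokkerPlanckDrift ψ (t, q), fokkerPlanckDrift ψ (t, q) - u t q.1⟫ := by
  have ha := continuous_slice (hkin.contDiffOn_drift hI).continuousOn ht
  have hag := hkin.drift_growth hI
  exact hkin.integrable_density_smul ht (hag.inner (hag.sub hmac.velocity_growth.comp_fst))
    (ha.inner (ha.sub ((hmac.continuous_velocity ht).comp continuous_fst)))

theorem integrable_density_mul_strain (hkin : IsKineticSolution I A B κ ψ F)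
    (hmac : IsMacroscopicSolution I A B ρ u R) (ht : t ∈ I) :
    Integrable fun q : 𝔼 d × 𝔼 d => Real.exp (-ψ (t, q)) *
      (⟪u t q.1 - q.2, fderiv ℝ (u t) q.1 (u t q.1 - q.2)⟫ - ediv (u t) q.1) := by
  have hwg := hmac.velocity_growth.comp_fst.sub (PolyGrowthOn.snd_snd (X := 𝔼 d))
  have hw : Continuous fun q : 𝔼 d × 𝔼 d => u t q.1 - q.2 :=
    ((hmac.continuous_velocity ht).comp continuous_fst).sub continuous_snd
  have hu := contDiff_slice hmac.contDiffOn_velocity ht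
  have hDu : Continuous (fderiv ℝ (u t)) := hu.continuous_fderiv one_ne_zero
  have hediv : Continuous (ediv (u t)) := by
    unfold ediv
    fun_prop
  exact hkin.integrable_density_smul ht
    ((hwg.inner (hmac.fderiv_velocity_growth.comp_fst.clm_apply hwg)).sub
      hmac.ediv_velocity_growth.comp_fst)
    ((hw.inner ((hDu.comp continuous_fst).clm_apply hw)).sub (hediv.comp continuous_fst))

theorem integrable_density_mul_inner_force_sub (hkin : IsKineticSolution I A B κ ψ F)
    (hmac : IsMacroscopicSolution I A B ρ u R) (hI : IsOpen I) (ht : t ∈ I) :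
    Integrable fun q : 𝔼 d × 𝔼 d => Real.exp (-ψ (t, q)) *
      ⟪u t q.1 - q.2, F (t, q) - R t q.1⟫ :=
  hkin.integrable_density_smul ht
    ((hmac.velocity_growth.comp_fst.sub .snd_snd).inner
      (hkin.force_growth.sub (hmac.force_growth hI).comp_fst))
    ((((hmac.continuous_velocity ht).comp continuous_fst).sub continuous_snd).inner
      ((continuous_slice hkin.contDiffOn_force.continuousOn ht).sub
        ((hmac.continuous_force hI ht).comp continuous_fst)))

theorem mul_integral_fderiv_relativeEntropy (hkin : IsKineticSolution I A B κ ψ F)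
    (hmac : IsMacroscopicSolution I A B ρ u R) (hI : IsOpen I) (hA : A ≠ 0) (ht : t ∈ I) :
    A * ∫ q, fderiv ℝ (fun p => Real.exp (-ψ p) * (-ψ p -
        logMaxwellian (fun q => Real.log (ρ q.1 q.2)) (fun q => u q.1 q.2) p)) (t, q) (1, 0) =
      -κ * ((∫ q : 𝔼 d × 𝔼 d, Real.exp (-ψ (t, q)) * ‖fokkerPlanckDrift ψ (t, q) -
          weightedMean volume (fun ξ => Real.exp (-ψ (t, q.1, ξ))) fun ξ => ξ‖ ^ 2) +
        ∫ x, (∫ ξ, Real.exp (-ψ (t, x, ξ))) *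
          ⟪weightedMean volume (fun ξ => Real.exp (-ψ (t, x, ξ))) fun ξ => ξ,
            (weightedMean volume (fun ξ => Real.exp (-ψ (t, x, ξ))) fun ξ => ξ) - u t x⟫) -
      B * (∫ q : 𝔼 d × 𝔼 d, Real.exp (-ψ (t, q)) *
        (⟪u t q.1 - q.2, fderiv ℝ (u t) q.1 (u t q.1 - q.2)⟫ - ediv (u t) q.1)) -
      (∫ q : 𝔼 d × 𝔼 d, Real.exp (-ψ (t, q)) * ⟪u t q.1 - q.2, F (t, q) - R t q.1⟫) -
      ∫ q : 𝔼 d × 𝔼 d, ediv (fun ζ => F (t, q.1, ζ)) q.2 * Real.exp (-ψ (t, q)) := by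
  have hdrift := hkin.integrable_density_mul_inner_drift hmac hI ht
  have hstrain := hkin.integrable_density_mul_strain hmac ht
  have hforce := hkin.integrable_density_mul_inner_force_sub hmac hI ht
  rw [hkin.mul_integral_fderiv_density_mul_sub hI ht hmac.contDiffOn_logMaxwellian
      hmac.logMaxwellian_growth (hmac.fderiv_logMaxwellian_growth hI hA),
    ← hkin.integral_density_mul_inner_drift hI ht hdrift, ← integral_const_mul,
    ← integral_const_mul, ← integral_sub (hdrift.const_mul _) (hstrain.const_mul _),
    ← integral_sub ((hdrift.const_mul _).sub' (hstrain.const_mul _)) hforce]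
  congr with q
  rw [hmac.inner_drift_sub_transport_logMaxwellian hI ht]
  ring

theorem hasDerivAt_relativeEntropy (hkin : IsKineticSolution I A B κ ψ F)
    (hmac : IsMacroscopicSolution I A B ρ u R) (hI : IsOpen I) (hA : A ≠ 0) (ht : t ∈ I) :
    HasDerivAt
      (fun s => ∫ q : 𝔼 d × 𝔼 d, Real.exp (-ψ (s, q)) *
        Real.log (Real.exp (-ψ (s, q)) / maxwellian d (ρ s q.1) (u s q.1) q.2))
      (∫ q, fderiv ℝ (fun p => Real.exp (-ψ p) * (-ψ p -
        logMaxwellian (fun q => Real.log (ρ q.1 q.2)) (fun q => u q.1 q.2) p)) (t, q) (1, 0))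
      t := by
  refine (hkin.hasDerivAt_integral_density_mul hI ht hmac.contDiffOn_logMaxwellian
    hmac.logMaxwellian_growth (hmac.fderiv_logMaxwellian_growth hI hA)).congr_of_eventuallyEq ?_
  filter_upwards [hI.mem_nhds ht] with s hs
  congr with q
  have hρ := hmac.density_pos s hs q.1
  rw [Real.log_div (Real.exp_ne_zero _) (maxwellian_pos hρ _ _).ne', Real.log_exp,
    log_maxwellian hρ]
  rfl

theorem inv_density_mul_norm_sq (hkin : IsKineticSolution I A B κ ψ F) (hI : IsOpen I)
    (ht : t ∈ I) (x ξ U : 𝔼 d) :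
    (Real.exp (-ψ (t, x, ξ)))⁻¹ * ‖gradient (fun ζ => Real.exp (-ψ (t, x, ζ))) ξ +
        Real.exp (-ψ (t, x, ξ)) • (ξ - U)‖ ^ 2 =
      Real.exp (-ψ (t, x, ξ)) * ‖fokkerPlanckDrift ψ (t, x, ξ) - U‖ ^ 2 := by
  rw [gradient_exp_neg_add_smul (hkin.differentiableAt_potential hI ht), sub_right_comm, sub_self,
    zero_sub, ← sub_eq_add_neg, norm_smul, Real.norm_of_nonneg (Real.exp_pos _).le]
  field_simp

end IsKineticSolution

end MaxwellianEntropy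

section ProductWeights

variable {X Y G : Type*} [NormedAddCommGroup X] [NormedAddCommGroup Y] [NormedAddCommGroup G]
  {I : Set ℝ}

theorem PolyGrowthOn.of_norm_le_pow_add {h : ℝ × X × Y → G} {c : ℝ} {k : ℕ}
    (hh : ∀ t ∈ I, ∀ x y, ‖h (t, x, y)‖ ≤ c * (1 + ‖x‖ + ‖y‖) ^ k) : PolyGrowthOn I h := by
  have weight : PolyGrowthOn I fun p : ℝ × X × Y => c * (1 + ‖p.2.1‖ + ‖p.2.2‖) ^ k := by
    refine ⟨|c| * 2 ^ k, k, fun t _ q => ?_⟩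
    rw [norm_mul, Real.norm_eq_abs, norm_pow, Real.norm_of_nonneg (by positivity), mul_assoc,
      ← mul_pow]
    gcongr
    linarith [norm_fst_le q, norm_snd_le q]
  exact weight.of_norm_le fun t ht q => (hh t ht q.1 q.2).trans (le_abs_self _)

theorem UniformMomentsOn.of_pow_add [MeasurableSpace X] [MeasurableSpace Y]
    [OpensMeasurableSpace (X × Y)] {f : ℝ × X × Y → ℝ} {μ : Measure (X × Y)} (hf0 : ∀ p, 0 ≤ f p)
    (hf : ∀ N : ℕ, ∃ c : ℝ, ∀ t ∈ I,
      Integrable (fun q : X × Y => (1 + ‖q.1‖ + ‖q.2‖) ^ N * f (t, q)) μ ∧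
        ∫ q : X × Y, (1 + ‖q.1‖ + ‖q.2‖) ^ N * f (t, q) ∂μ ≤ c) : UniformMomentsOn I f μ := by
  intro N
  obtain ⟨c, hc⟩ := hf N
  obtain ⟨c₀, hc₀⟩ := hf 0
  refine ⟨c, fun t ht => ?_⟩
  obtain ⟨hint, hle⟩ := hc t ht
  have hft : Integrable (fun q => f (t, q)) μ := by simpa using (hc₀ t ht).1
  have hm : AEStronglyMeasurable (fun q : X × Y => (1 + ‖q‖) ^ N * f (t, q)) μ := by
    have hw : Measurable fun q : X × Y => (1 + ‖q‖) ^ N := (measurable_norm.const_add 1).pow_const N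
    exact hw.aestronglyMeasurable.mul hft.1
  have hnorm (q : X × Y) : ‖q‖ ≤ ‖q.1‖ + ‖q.2‖ :=
    max_le_add_of_nonneg (norm_nonneg _) (norm_nonneg _)
  have hmono (q : X × Y) : (1 + ‖q‖) ^ N * f (t, q) ≤ (1 + ‖q.1‖ + ‖q.2‖) ^ N * f (t, q) :=
    mul_le_mul_of_nonneg_right
      (pow_le_pow_left₀ (by positivity) (by linarith [hnorm q]) N) (hf0 _)
  have hN : Integrable (fun q : X × Y => (1 + ‖q‖) ^ N * f (t, q)) μ :=
    hint.mono' hm (.of_forall fun q => by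
      rw [Real.norm_of_nonneg (mul_nonneg (by positivity) (hf0 _))]
      exact hmono q)
  exact ⟨hN, (integral_mono hN hint hmono).trans hle⟩

theorem PolyGrowthOn.fderiv_of_iteratedFDerivWithin [NormedSpace ℝ X] [NormedSpace ℝ Y]
    [NormedSpace ℝ G] {J : Set ℝ} {h : ℝ × X × Y → G} {c : ℝ} {k : ℕ} (hI : IsOpen I)
    (hIJ : I ⊆ J) (hh : ∀ t ∈ J, ∀ x y,
      ‖iteratedFDerivWithin ℝ 1 h (J ×ˢ Set.univ) (t, x, y)‖ ≤ c * (1 + ‖x‖ + ‖y‖) ^ k) :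
    PolyGrowthOn I (fderiv ℝ h) := by
  refine .of_norm_le_pow_add (c := c) (k := k) fun t ht x y => ?_
  have hslab : J ×ˢ Set.univ ∈ nhds (t, x, y) :=
    prod_mem_nhds (Filter.mem_of_superset (hI.mem_nhds ht) hIJ) Filter.univ_mem
  rw [← norm_iteratedFDeriv_one, ← iteratedFDerivWithin_univ,
    ← iteratedFDerivWithin_congr_set (Filter.eventuallyEq_univ.2 hslab)]
  exact hh t (hIJ ht) x y

end ProductWeights

section Identity

variable {d : ℕ}

theorem IsKineticSolution.of_bounds {I J : Set ℝ} {A B κ : ℝ} {ψ : ℝ × 𝔼 d × 𝔼 d → ℝ}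
    {F : ℝ × 𝔼 d × 𝔼 d → 𝔼 d} (hI : IsOpen I) (hIc : Convex ℝ I) (hIb : Bornology.IsBounded I)
    (hIJ : I ⊆ J) (hψ : ContDiffOn ℝ 2 ψ (J ×ˢ Set.univ))
    (hDψ : ∃ c : ℝ, ∃ k : ℕ, ∀ t ∈ J, ∀ x ξ,
      ‖iteratedFDerivWithin ℝ 1 ψ (J ×ˢ Set.univ) (t, x, ξ)‖ ≤ c * (1 + ‖x‖ + ‖ξ‖) ^ k)
    (hmoments : ∀ N : ℕ, ∃ c : ℝ, ∀ t ∈ J,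
      Integrable (fun q : 𝔼 d × 𝔼 d => (1 + ‖q.1‖ + ‖q.2‖) ^ N * Real.exp (-ψ (t, q))) ∧
        ∫ q : 𝔼 d × 𝔼 d, (1 + ‖q.1‖ + ‖q.2‖) ^ N * Real.exp (-ψ (t, q)) ≤ c)
    (hF : ContDiffOn ℝ 1 F (J ×ˢ Set.univ))
    (hFbound : ∃ c : ℝ, ∃ k : ℕ, ∀ t ∈ J, ∀ x ξ, ‖F (t, x, ξ)‖ ≤ c * (1 + ‖x‖ + ‖ξ‖) ^ k ∧
      |ediv (fun ζ => F (t, x, ζ)) ξ| ≤ c * (1 + ‖x‖ + ‖ξ‖) ^ k)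
    (hkin : ∀ t ∈ I, ∀ x ξ, A * deriv (fun s => Real.exp (-ψ (s, x, ξ))) t +
        B * ⟪ξ, gradient (fun y => Real.exp (-ψ (t, y, ξ))) x⟫ +
        ediv (fun ζ => Real.exp (-ψ (t, x, ζ)) • F (t, x, ζ)) ξ =
      κ * ediv (fun ζ => gradient (fun ζ' => Real.exp (-ψ (t, x, ζ'))) ζ +
        Real.exp (-ψ (t, x, ζ)) • ζ) ξ) :
    IsKineticSolution I A B κ ψ F := by
  have hslab : I ×ˢ Set.univ ⊆ J ×ˢ (Set.univ : Set (𝔼 d × 𝔼 d)) := Set.prod_mono_left hIJ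
  obtain ⟨c, k, hDψ⟩ := hDψ
  obtain ⟨c', k', hFbound⟩ := hFbound
  have hDψI := PolyGrowthOn.fderiv_of_iteratedFDerivWithin hI hIJ hDψ
  exact
    { contDiffOn_potential := hψ.mono hslab
      potential_growth :=
        .of_fderiv hIc hI hIb ((hψ.differentiableOn two_ne_zero).mono hslab) hDψI
      fderiv_potential_growth := hDψI
      moments := (UniformMomentsOn.of_pow_add (fun _ => (Real.exp_pos _).le) hmoments).mono hIJ
      contDiffOn_force := hF.mono hslab
      force_growth := .of_norm_le_pow_add fun t ht x ξ => (hFbound t (hIJ ht) x ξ).1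
      ediv_force_growth := .of_norm_le_pow_add fun t ht x ξ => (hFbound t (hIJ ht) x ξ).2
      kinetic := hkin }

theorem relative_entropy_identity_general {I : Set ℝ} {A B κ : ℝ} {ψ : ℝ × 𝔼 d × 𝔼 d → ℝ}
    {F : ℝ × 𝔼 d × 𝔼 d → 𝔼 d} {ρ : ℝ → 𝔼 d → ℝ} {u R : ℝ → 𝔼 d → 𝔼 d} (hI : IsOpen I)
    (hA : A ≠ 0) (hkin : IsKineticSolution I A B κ ψ F)
    (hmac : IsMacroscopicSolution I A B ρ u R) {t : ℝ} (ht : t ∈ I) :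
    HasDerivAt
      (fun s => ∫ q : 𝔼 d × 𝔼 d, Real.exp (-ψ (s, q)) *
        Real.log (Real.exp (-ψ (s, q)) / maxwellian d (ρ s q.1) (u s q.1) q.2))
      (-(κ / A) * (∫ q : 𝔼 d × 𝔼 d, (Real.exp (-ψ (t, q)))⁻¹ *
          ‖gradient (fun ζ => Real.exp (-ψ (t, q.1, ζ))) q.2 + Real.exp (-ψ (t, q)) •
            (q.2 - weightedMean volume (fun ξ => Real.exp (-ψ (t, q.1, ξ))) fun ξ => ξ)‖ ^ 2) -
        (B / A) * (∫ q : 𝔼 d × 𝔼 d, Real.exp (-ψ (t, q)) * ∑ i, ∑ j,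
          ((u t q.1 - q.2) i * (u t q.1 - q.2) j - if i = j then (1 : ℝ) else 0) *
            fderiv ℝ (u t) q.1 (EuclideanSpace.single j 1) i) -
        (κ / A) * (∫ x, (∫ ξ, Real.exp (-ψ (t, x, ξ))) *
          ⟪weightedMean volume (fun ξ => Real.exp (-ψ (t, x, ξ))) fun ξ => ξ,
            (weightedMean volume (fun ξ => Real.exp (-ψ (t, x, ξ))) fun ξ => ξ) - u t x⟫) -
        (1 / A) * (∫ q : 𝔼 d × 𝔼 d,
          ediv (fun ζ => F (t, q.1, ζ)) q.2 * Real.exp (-ψ (t, q))) -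
        (1 / A) * ∫ q : 𝔼 d × 𝔼 d,
          Real.exp (-ψ (t, q)) * ⟪u t q.1 - q.2, F (t, q) - R t q.1⟫) t := by
  refine (hkin.hasDerivAt_relativeEntropy hmac hI hA ht).congr_deriv ?_
  refine mul_left_cancel₀ hA ?_
  simp_rw [sum_tensor_sub_one_mul_fderiv]
  have hfisher : ∫ q : 𝔼 d × 𝔼 d, (Real.exp (-ψ (t, q)))⁻¹ *
      ‖gradient (fun ζ => Real.exp (-ψ (t, q.1, ζ))) q.2 + Real.exp (-ψ (t, q)) •
        (q.2 - weightedMean volume (fun ξ => Real.exp (-ψ (t, q.1, ξ))) fun ξ => ξ)‖ ^ 2 = _ :=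
    integral_congr_ae (.of_forall fun q => hkin.inv_density_mul_norm_sq hI ht q.1 q.2 _)
  rw [hkin.mul_integral_fderiv_relativeEntropy hmac hI hA ht, hfisher]
  field_simp
  ring

end Identity

/-- Relative entropy identity for the kinetic equation
`A ∂_t f + B ξ·∇_x f + ∇_ξ·(F f) = (1/τ) ∇_ξ·(∇_ξ f + ξ f)`
against the macroscopic system `A ∂_t ρ + B ∇·(ρ u) = 0`,
`A ∂_t(ρ u) + B ∇·(ρ u⊗u) + B ∇ρ = ρ R`. -/
theorem relative_entropy_identity
    (d : ℕ) (hd : 1 ≤ d) (T A B τ : ℝ) (hT : 0 < T) (hA : 0 < A) (hB : 0 < B) (hτ : 0 < τ)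
    (ψ f : ℝ × EuclideanSpace ℝ (Fin d) × EuclideanSpace ℝ (Fin d) → ℝ)
    (hf : f = fun p => Real.exp (-ψ p))
    (hψ : ContDiffOn ℝ (⊤ : ℕ∞) ψ (Set.Icc 0 T ×ˢ
      (Set.univ : Set (EuclideanSpace ℝ (Fin d) × EuclideanSpace ℝ (Fin d)))))
    (hψbound : ∀ n : ℕ, 1 ≤ n → ∃ c : ℝ, ∃ k : ℕ,
      ∀ t ∈ Set.Icc (0 : ℝ) T, ∀ x ξ : EuclideanSpace ℝ (Fin d),
        ‖iteratedFDerivWithin ℝ n ψ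
            (Set.Icc 0 T ×ˢ
              (Set.univ : Set (EuclideanSpace ℝ (Fin d) × EuclideanSpace ℝ (Fin d))))
            (t, x, ξ)‖ ≤ c * (1 + ‖x‖ + ‖ξ‖) ^ k)
    (hfmom : ∀ N : ℕ, ∃ c : ℝ, ∀ t ∈ Set.Icc (0 : ℝ) T,
      Integrable (fun p : EuclideanSpace ℝ (Fin d) × EuclideanSpace ℝ (Fin d) =>
        (1 + ‖p.1‖ + ‖p.2‖) ^ N * f (t, p.1, p.2)) ∧
      (∫ p : EuclideanSpace ℝ (Fin d) × EuclideanSpace ℝ (Fin d),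
        (1 + ‖p.1‖ + ‖p.2‖) ^ N * f (t, p.1, p.2)) ≤ c)
    (F : ℝ × EuclideanSpace ℝ (Fin d) × EuclideanSpace ℝ (Fin d) → EuclideanSpace ℝ (Fin d))
    (hF : ContDiffOn ℝ 1 F (Set.Icc 0 T ×ˢ
      (Set.univ : Set (EuclideanSpace ℝ (Fin d) × EuclideanSpace ℝ (Fin d)))))
    (hFbound : ∃ c : ℝ, ∃ k : ℕ, ∀ t ∈ Set.Icc (0 : ℝ) T, ∀ x ξ : EuclideanSpace ℝ (Fin d),
      ‖F (t, x, ξ)‖ ≤ c * (1 + ‖x‖ + ‖ξ‖) ^ k ∧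
      |ediv (fun ζ => F (t, x, ζ)) ξ| ≤ c * (1 + ‖x‖ + ‖ξ‖) ^ k)
    (hkin : ∀ t ∈ Set.Ioo (0 : ℝ) T, ∀ x ξ : EuclideanSpace ℝ (Fin d),
      A * deriv (fun s => f (s, x, ξ)) t
        + B * ⟪ξ, gradient (fun y => f (t, y, ξ)) x⟫
        + ediv (fun ζ => f (t, x, ζ) • F (t, x, ζ)) ξ
      = (1 / τ) * ediv (fun ζ => gradient (fun ζ' => f (t, x, ζ')) ζ + f (t, x, ζ) • ζ) ξ)
    (ρ : ℝ → EuclideanSpace ℝ (Fin d) → ℝ)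
    (u R : ℝ → EuclideanSpace ℝ (Fin d) → EuclideanSpace ℝ (Fin d))
    (hρC1 : ContDiffOn ℝ 1 (fun p : ℝ × EuclideanSpace ℝ (Fin d) => ρ p.1 p.2)
      (Set.Ioo 0 T ×ˢ (Set.univ : Set (EuclideanSpace ℝ (Fin d)))))
    (huC1 : ContDiffOn ℝ 1 (fun p : ℝ × EuclideanSpace ℝ (Fin d) => u p.1 p.2)
      (Set.Ioo 0 T ×ˢ (Set.univ : Set (EuclideanSpace ℝ (Fin d)))))
    (hRC1 : ContDiffOn ℝ 1 (fun p : ℝ × EuclideanSpace ℝ (Fin d) => R p.1 p.2)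
      (Set.Ioo 0 T ×ˢ (Set.univ : Set (EuclideanSpace ℝ (Fin d)))))
    (hρpos : ∀ t ∈ Set.Ioo (0 : ℝ) T, ∀ x, 0 < ρ t x)
    (hmacrobound : ∃ c : ℝ, ∃ k : ℕ, ∀ t ∈ Set.Ioo (0 : ℝ) T, ∀ x : EuclideanSpace ℝ (Fin d),
      |Real.log (ρ t x)| ≤ c * (1 + ‖x‖) ^ k ∧
      ‖gradient (fun y => Real.log (ρ t y)) x‖ ≤ c * (1 + ‖x‖) ^ k ∧
      ‖u t x‖ ≤ c * (1 + ‖x‖) ^ k ∧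
      ‖fderiv ℝ (u t) x‖ ≤ c * (1 + ‖x‖) ^ k ∧
      ‖deriv (fun s => u s x) t‖ ≤ c * (1 + ‖x‖) ^ k ∧
      ‖R t x‖ ≤ c * (1 + ‖x‖) ^ k)
    (hmass : ∀ t ∈ Set.Ioo (0 : ℝ) T, ∀ x : EuclideanSpace ℝ (Fin d),
      A * deriv (fun s => ρ s x) t + B * ediv (fun y => ρ t y • u t y) x = 0)
    (hmom : ∀ t ∈ Set.Ioo (0 : ℝ) T, ∀ x : EuclideanSpace ℝ (Fin d), ∀ i : Fin d,
      A * deriv (fun s => ρ s x * u s x i) t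
        + B * ediv (fun y => (ρ t y * u t y i) • u t y) x
        + B * gradient (ρ t) x i
      = ρ t x * R t x i) :
    ∀ t ∈ Set.Ioo (0 : ℝ) T,
      HasDerivAt
        (fun s => ∫ p : EuclideanSpace ℝ (Fin d) × EuclideanSpace ℝ (Fin d),
          f (s, p.1, p.2) *
            Real.log (f (s, p.1, p.2) / maxwellian d (ρ s p.1) (u s p.1) p.2))
        (-(1 / (A * τ)) * (∫ p : EuclideanSpace ℝ (Fin d) × EuclideanSpace ℝ (Fin d),
              (f (t, p.1, p.2))⁻¹ *
                ‖gradient (fun ζ => f (t, p.1, ζ)) p.2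
                  + f (t, p.1, p.2) •
                    (p.2 - (∫ ξ, f (t, p.1, ξ))⁻¹ • ∫ ξ, f (t, p.1, ξ) • ξ)‖ ^ 2)
          - (B / A) * (∫ p : EuclideanSpace ℝ (Fin d) × EuclideanSpace ℝ (Fin d),
              f (t, p.1, p.2) *
                ∑ i, ∑ j,
                  ((u t p.1 - p.2) i * (u t p.1 - p.2) j
                      - if i = j then (1 : ℝ) else 0) *
                    fderiv ℝ (u t) p.1 (EuclideanSpace.single j 1) i)
          - (1 / (A * τ)) * (∫ x : EuclideanSpace ℝ (Fin d),
              (∫ ξ, f (t, x, ξ)) *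
                ⟪(∫ ξ, f (t, x, ξ))⁻¹ • ∫ ξ, f (t, x, ξ) • ξ,
                  ((∫ ξ, f (t, x, ξ))⁻¹ • ∫ ξ, f (t, x, ξ) • ξ) - u t x⟫)
          - (1 / A) * (∫ p : EuclideanSpace ℝ (Fin d) × EuclideanSpace ℝ (Fin d),
              ediv (fun ζ => F (t, p.1, ζ)) p.2 * f (t, p.1, p.2))
          - (1 / A) * (∫ p : EuclideanSpace ℝ (Fin d) × EuclideanSpace ℝ (Fin d),
              f (t, p.1, p.2) * ⟪u t p.1 - p.2, F (t, p.1, p.2) - R t p.1⟫)) t := by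
  intro t ht
  subst hf
  have kinetic : IsKineticSolution (Set.Ioo 0 T) A B (1 / τ) ψ F :=
    .of_bounds isOpen_Ioo (convex_Ioo 0 T) (Metric.isBounded_Ioo 0 T) Set.Ioo_subset_Icc_self
      (hψ.of_le (WithTop.coe_le_coe.2 le_top)) (hψbound 1 le_rfl) hfmom hF hFbound hkin
  obtain ⟨c, k, hbound⟩ := hmacrobound
  have macroscopic : IsMacroscopicSolution (Set.Ioo 0 T) A B ρ u R :=
    { contDiffOn_density := hρC1
      contDiffOn_velocity := huC1
      density_pos := hρpos
      log_density_growth := ⟨c, k, fun s hs x => (hbound s hs x).1⟩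
      gradient_log_density_growth := ⟨c, k, fun s hs x => (hbound s hs x).2.1⟩
      velocity_growth := ⟨c, k, fun s hs x => (hbound s hs x).2.2.1⟩
      fderiv_velocity_growth := ⟨c, k, fun s hs x => (hbound s hs x).2.2.2.1⟩
      deriv_velocity_growth := ⟨c, k, fun s hs x => (hbound s hs x).2.2.2.2.1⟩
      mass := hmass
      momentum := hmom }
  rw [mul_comm A τ, ← div_div]
  exact relative_entropy_identity_general isOpen_Ioo hA.ne' kinetic macroscopic ht
end
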